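/- arXiv:2205.04574 — 7 statements merged into one kernel-verified Lean document; each statement's English description precedes it below -/
import Mathlib

section
/- Let n ≥ 1, 1 ≤ p < ∞, let f ∈ L^p(ℝⁿ), and let ρ : ℝⁿ → ℝ be a nonnegative integrable function with ∫_{ℝⁿ} ρ = 1. Denote by f_ρ = ρ ∗ f the convolution of ρ with f. Then for every t > 0 one has ∫_{ℝⁿ} ∫_{ℝⁿ} p_t(x,y) |f_ρ(y) − f_ρ(x)|^p dy dx ≤ ∫_{ℝⁿ} ∫_{ℝⁿ} p_t(x,y) |f(y) − f(x)|^p dy dx, where both sides are values in [0,∞]. -/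
open Real MeasureTheory

lemma jensen_aux {E : Type*} [MeasurableSpace E] (μ : Measure E) [IsProbabilityMeasure μ]
    (p : ℝ) (hp : 1 ≤ p) (g : E → ℝ) (hg : Measurable g) :
    ‖∫ z, g z ∂μ‖ₑ ^ p ≤ ∫⁻ z, ‖g z‖ₑ ^ p ∂μ := by
  have h1 : ‖∫ z, g z ∂μ‖ₑ ≤ ∫⁻ z, ‖g z‖ₑ ∂μ := enorm_integral_le_lintegral_enorm _
  have h2 : eLpNorm' g 1 μ ≤ eLpNorm' g p μ :=
    eLpNorm'_le_eLpNorm'_of_exponent_le one_pos hp μ hg.aestronglyMeasurable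
  have hp0 : 0 < p := by linarith
  simp only [eLpNorm', ENNReal.rpow_one, div_one] at h2
  calc ‖∫ z, g z ∂μ‖ₑ ^ p ≤ ((∫⁻ z, ‖g z‖ₑ ^ p ∂μ) ^ (1 / p)) ^ p :=
        ENNReal.rpow_le_rpow (h1.trans h2) hp0.le
    _ = _ := by
        rw [← ENNReal.rpow_mul, one_div, inv_mul_cancel₀ hp0.ne', ENNReal.rpow_one]

lemma core_aux {n : ℕ} (μ : Measure (EuclideanSpace ℝ (Fin n))) [IsProbabilityMeasure μ]
    (p : ℝ) (hp : 1 ≤ p) (f : EuclideanSpace ℝ (Fin n) → ℝ) (hf : Measurable f)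
    (hfp : ∫⁻ x, ‖f x‖ₑ ^ p ≠ ⊤)
    (K : EuclideanSpace ℝ (Fin n) → ENNReal) (hK : Measurable K) :
    ∫⁻ x, ∫⁻ y, K (x - y) * ‖(∫ z, f (y - z) ∂μ) - ∫ z, f (x - z) ∂μ‖ₑ ^ p
      ≤ ∫⁻ x, ∫⁻ y, K (x - y) * ‖f y - f x‖ₑ ^ p := by
  have hp0 : 0 < p := by linarith
  have hfin : ∀ᵐ x, ∫⁻ z, ‖f (x - z)‖ₑ ^ p ∂μ < ⊤ := by
    apply ae_lt_top
    · fun_prop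
    · rw [lintegral_lintegral_swap (by fun_prop)]
      have : ∀ z, ∫⁻ x, ‖f (x - z)‖ₑ ^ p = ∫⁻ x, ‖f x‖ₑ ^ p := fun z =>
        lintegral_sub_right_eq_self (fun x => ‖f x‖ₑ ^ p) z
      simpa [this] using hfp
  have hint : ∀ᵐ x, Integrable (fun z => f (x - z)) μ := by
    filter_upwards [hfin] with x hx
    have hm : MemLp (fun z => f (x - z)) (ENNReal.ofReal p) μ := by
      refine ⟨(hf.comp (measurable_const.sub measurable_id)).aestronglyMeasurable, ?_⟩
      rw [eLpNorm_lt_top_iff_lintegral_rpow_enorm_lt_top (by simpa using hp0) (by simp)]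
      simpa [ENNReal.toReal_ofReal hp0.le] using hx
    exact hm.integrable (by simpa using hp)
  calc _ ≤ ∫⁻ x, ∫⁻ y, ∫⁻ z, K (x - y) * ‖f (y - z) - f (x - z)‖ₑ ^ p ∂μ := by
        apply lintegral_mono_ae
        filter_upwards [hint] with x hx
        apply lintegral_mono_ae
        filter_upwards [hint] with y hy
        rw [← integral_sub hy hx, lintegral_const_mul _ (by fun_prop)]
        gcongr
        exact jensen_aux μ p hp _ (by fun_prop)
    _ = ∫⁻ x, ∫⁻ z, ∫⁻ y, K (x - y) * ‖f (y - z) - f (x - z)‖ₑ ^ p ∂volume ∂μ := by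
        congr 1; ext x
        rw [lintegral_lintegral_swap (by fun_prop)]
    _ = ∫⁻ z, ∫⁻ x, ∫⁻ y, K (x - y) * ‖f (y - z) - f (x - z)‖ₑ ^ p ∂volume ∂volume ∂μ := by
        rw [lintegral_lintegral_swap]
        apply Measurable.aemeasurable
        apply Measurable.lintegral_prod_right'
          (f := fun q : (EuclideanSpace ℝ (Fin n) × EuclideanSpace ℝ (Fin n)) ×
            EuclideanSpace ℝ (Fin n) =>
              K (q.1.1 - q.2) * ‖f (q.2 - q.1.2) - f (q.1.1 - q.1.2)‖ₑ ^ p)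
        fun_prop
    _ = ∫⁻ z, ∫⁻ x, ∫⁻ y, K (x - y) * ‖f y - f x‖ₑ ^ p ∂volume ∂volume ∂μ := by
        congr 1; ext z
        rw [← lintegral_sub_right_eq_self (fun x => ∫⁻ y, K (x - y) * ‖f y - f x‖ₑ ^ p) z]
        congr 1; ext x
        rw [← lintegral_sub_right_eq_self (fun y => K (x - z - y) * ‖f y - f (x - z)‖ₑ ^ p) z]
        simp
    _ = _ := by simp

theorem mollification_decreases_heat_energy (n : ℕ) (hn : 1 ≤ n) (p : ℝ) (hp : 1 ≤ p)
    (f : EuclideanSpace ℝ (Fin n) → ℝ) (hf : MemLp f (ENNReal.ofReal p) volume)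
    (ρ : EuclideanSpace ℝ (Fin n) → ℝ) (hρ0 : ∀ x, 0 ≤ ρ x) (hρint : Integrable ρ)
    (hρ1 : ∫ x, ρ x = 1) (t : ℝ) (ht : 0 < t) :
    (∫⁻ x, ∫⁻ y, ENNReal.ofReal
        ((4 * π * t) ^ (-(n : ℝ) / 2) * Real.exp (-‖x - y‖ ^ 2 / (4 * t)) *
          |(∫ w, ρ (y - w) * f w) - (∫ w, ρ (x - w) * f w)| ^ p))
      ≤ ∫⁻ x, ∫⁻ y, ENNReal.ofReal
          ((4 * π * t) ^ (-(n : ℝ) / 2) * Real.exp (-‖x - y‖ ^ 2 / (4 * t)) *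
            |f y - f x| ^ p) := by
  have hp0 : 0 < p := by linarith
  let E := EuclideanSpace ℝ (Fin n)
  let K : E → ENNReal := fun u =>
    ENNReal.ofReal ((4 * π * t) ^ (-(n : ℝ) / 2) * Real.exp (-‖u‖ ^ 2 / (4 * t)))
  have hK : Measurable K := by fun_prop
  have hconv : ∀ (u : E) (a : ℝ), ENNReal.ofReal
      ((4 * π * t) ^ (-(n : ℝ) / 2) * Real.exp (-‖u‖ ^ 2 / (4 * t)) * |a| ^ p)
        = K u * ‖a‖ₑ ^ p := by
    intro u a
    rw [ENNReal.ofReal_mul (by positivity), ← ENNReal.ofReal_rpow_of_nonneg (abs_nonneg _) hp0.le,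
      ← Real.norm_eq_abs, ofReal_norm_eq_enorm]
  simp only [hconv]
  -- measurable representative of `f`
  obtain ⟨g, hgs, hfg⟩ := hf.aestronglyMeasurable
  have hg : Measurable g := hgs.measurable
  have hgp : ∫⁻ x, ‖g x‖ₑ ^ p ≠ ⊤ := by
    have h := (hf.ae_eq hfg).2
    rw [eLpNorm_lt_top_iff_lintegral_rpow_enorm_lt_top (by simpa using hp0) (by simp)] at h
    simpa [ENNReal.toReal_ofReal hp0.le] using h.ne
  let μ : Measure E := volume.withDensity (fun z => ENNReal.ofReal (ρ z))
  have hμ : IsProbabilityMeasure μ := by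
    constructor
    rw [withDensity_apply _ MeasurableSet.univ, Measure.restrict_univ,
      ← ofReal_integral_eq_lintegral_ofReal hρint (Filter.Eventually.of_forall hρ0), hρ1,
      ENNReal.ofReal_one]
  have hcv : ∀ y : E, ∫ w, ρ (y - w) * f w = ∫ z, g (y - z) ∂μ := by
    intro y
    have h1 : ∫ w, ρ (y - w) * f w = ∫ w, ρ (y - w) * g w := by
      apply integral_congr_ae
      filter_upwards [hfg] with w hw
      rw [hw]
    rw [h1, integral_withDensity_eq_integral_toReal_smul₀
      hρint.aestronglyMeasurable.aemeasurable.ennreal_ofReal (by simp),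
      ← integral_sub_left_eq_self (fun w => ρ (y - w) * g w) volume y]
    congr 1; ext z
    simp [ENNReal.toReal_ofReal (hρ0 z)]
  simp only [hcv]
  refine (core_aux μ p hp g hg hgp K hK).trans (le_of_eq ?_)
  apply lintegral_congr_ae
  filter_upwards [hfg] with x hx
  apply lintegral_congr_ae
  filter_upwards [hfg] with y hy
  rw [hx, hy]
end

section
/- Let n ≥ 1, 1 < p < ∞, and let f ∈ L^p(ℝⁿ). Suppose that liminf_{t → 0⁺} t^{-p/2} ∫_{ℝⁿ} ∫_{ℝⁿ} p_t(x,y) |f(y) − f(x)|^p dy dx < ∞ (liminf taken in [0,∞]). Then f admits a weak gradient in L^p: there exists g : ℝⁿ → ℝⁿ with ∫_{ℝⁿ} ‖g(x)‖^p dx < ∞ such that for every smooth compactly supported φ : ℝⁿ → ℝ and every i ∈ {1,…,n}, ∫_{ℝⁿ} f(x) ∂_i φ(x) dx = − ∫_{ℝⁿ} g_i(x) φ(x) dx; moreover (2Γ(p)/Γ(p/2)) ∫_{ℝⁿ} ‖g(x)‖^p dx ≤ liminf_{t → 0⁺} t^{-p/2} ∫_{ℝⁿ} ∫_{ℝⁿ}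 p_t(x,y) |f(y) − f(x)|^p dy dx. -/
open Real MeasureTheory Filter Topology


section convexity
variable {E : Type*} [NormedAddCommGroup E] [InnerProductSpace ℝ E]

lemma defect_pos {p : ℝ} (hp : 1 < p) {a b : E} (hab : a ≠ b) :
    0 < (‖a‖ ^ p + ‖b‖ ^ p) / 2 - ‖(1 / 2 : ℝ) • (a + b)‖ ^ p := by
  have h2 : ‖(1 / 2 : ℝ) • (a + b)‖ = ‖a + b‖ / 2 := by
    rw [norm_smul]; norm_num; ring
  have hadd := norm_add_le a b
  by_cases h : ‖a‖ = ‖b‖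
  · have hlt : ‖a + b‖ < ‖a‖ + ‖b‖ := by
      refine lt_of_le_of_ne hadd fun heq => hab ?_
      have := (sameRay_iff_norm_add (x := a) (y := b)).2 heq
      exact (sameRay_iff_of_norm_eq h).1 this
    have : ‖(1 / 2 : ℝ) • (a + b)‖ ^ p < ‖a‖ ^ p := by
      apply Real.rpow_lt_rpow (norm_nonneg _) _ (by linarith)
      rw [h2]; linarith
    rw [← h]; linarith
  · have := (strictConvexOn_rpow hp).2 (norm_nonneg a) (norm_nonneg b) h
      (show (0 : ℝ) < 1 / 2 by norm_num) (show (0 : ℝ) < 1 / 2 by norm_num) (by norm_num)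
    simp only [smul_eq_mul] at this
    have h3 : ‖(1 / 2 : ℝ) • (a + b)‖ ^ p ≤ (1 / 2 * ‖a‖ + 1 / 2 * ‖b‖) ^ p := by
      apply Real.rpow_le_rpow (norm_nonneg _) _ (by linarith)
      rw [h2]; linarith
    linarith

lemma defect_bound [FiniteDimensional ℝ E] {p : ℝ} (hp : 1 < p) {ε : ℝ} (hε : 0 < ε) :
    ∃ C : ℝ, 0 ≤ C ∧ ∀ a b : E, ‖a - b‖ ^ p ≤ ε * (‖a‖ ^ p + ‖b‖ ^ p) +
      C * ((‖a‖ ^ p + ‖b‖ ^ p) / 2 - ‖(1 / 2 : ℝ) • (a + b)‖ ^ p) := by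
  have hp0 : 0 < p := by linarith
  have := FiniteDimensional.proper_real (E × E)
  set S : Set (E × E) := {z | ‖z.1‖ ^ p + ‖z.2‖ ^ p = 1 ∧ ε ≤ ‖z.1 - z.2‖ ^ p} with hS
  have c1 : Continuous fun z : E × E => ‖z.1‖ ^ p :=
    continuous_fst.norm.rpow_const fun _ => Or.inr hp0.le
  have c2 : Continuous fun z : E × E => ‖z.2‖ ^ p :=
    continuous_snd.norm.rpow_const fun _ => Or.inr hp0.le
  have c3 : Continuous fun z : E × E => ‖z.1 - z.2‖ ^ p :=
    (continuous_fst.sub continuous_snd).norm.rpow_const fun _ => Or.inr hp0.le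
  have c4 : Continuous fun z : E × E => ‖(1 / 2 : ℝ) • (z.1 + z.2)‖ ^ p :=
    ((continuous_fst.add continuous_snd).const_smul _).norm.rpow_const fun _ => Or.inr hp0.le
  have hle : ∀ x y : ℝ, 0 ≤ x → 0 ≤ y → x ^ p + y ^ p = 1 → x ≤ 1 := by
    intro x y hx hy h
    by_contra hlt
    push Not at hlt
    have := Real.one_lt_rpow hlt hp0
    have := Real.rpow_nonneg hy p
    linarith
  have hcomp : IsCompact S := by
    apply Metric.isCompact_of_isClosed_isBounded
    · exact (isClosed_eq (c1.add c2) continuous_const).inter (isClosed_le continuous_const c3)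
    · refine (Metric.isBounded_closedBall (x := (0 : E × E)) (r := 1)).subset ?_
      rintro ⟨a, b⟩ ⟨h, -⟩
      simp only [mem_closedBall_zero_iff, Prod.norm_def, sup_le_iff]
      exact ⟨hle _ _ (norm_nonneg _) (norm_nonneg _) h,
        hle _ _ (norm_nonneg _) (norm_nonneg _) ((add_comm _ _).trans h)⟩
  have hpos : ∀ z ∈ S, 0 < (‖z.1‖ ^ p + ‖z.2‖ ^ p) / 2 - ‖(1 / 2 : ℝ) • (z.1 + z.2)‖ ^ p := by
    rintro ⟨a, b⟩ ⟨-, h⟩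
    apply defect_pos hp
    intro hab
    simp only at hab h
    subst hab
    simp only [sub_self, norm_zero, Real.zero_rpow hp0.ne'] at h
    linarith
  obtain ⟨C, hC⟩ := hcomp.exists_bound_of_continuousOn
    (f := fun z : E × E => ‖z.1 - z.2‖ ^ p /
      ((‖z.1‖ ^ p + ‖z.2‖ ^ p) / 2 - ‖(1 / 2 : ℝ) • (z.1 + z.2)‖ ^ p))
    (c3.continuousOn.div (((c1.add c2).div_const 2).sub c4).continuousOn
      fun z hz => (hpos z hz).ne')
  have hD : ∀ a b : E, 0 ≤ (‖a‖ ^ p + ‖b‖ ^ p) / 2 - ‖(1 / 2 : ℝ) • (a + b)‖ ^ p := by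
    intro a b
    by_cases hab : a = b
    · subst hab
      have : (1 / 2 : ℝ) • (a + a) = a := by rw [← two_smul ℝ a, smul_smul]; norm_num
      rw [this]; linarith
    · exact (defect_pos hp hab).le
  refine ⟨max C 0, le_max_right _ _, fun a b => ?_⟩
  set s := ‖a‖ ^ p + ‖b‖ ^ p with hs
  have ha0 := Real.rpow_nonneg (norm_nonneg a) p
  have hb0 := Real.rpow_nonneg (norm_nonneg b) p
  have hCD := mul_nonneg (le_max_right C 0) (hD a b)
  by_cases hlow : ‖a - b‖ ^ p < ε * s
  · linarith
  push Not at hlow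
  rcases (add_nonneg ha0 hb0).eq_or_lt with h0 | h0
  · have ha : ‖a‖ ^ p = 0 := by linarith
    have hb : ‖b‖ ^ p = 0 := by linarith
    rw [Real.rpow_eq_zero (norm_nonneg _) hp0.ne', norm_eq_zero] at ha hb
    subst ha hb
    simp only [sub_self, norm_zero, Real.zero_rpow hp0.ne']
    have := mul_nonneg hε.le h0.le
    simp [norm_zero, Real.zero_rpow hp0.ne', hs]
  · set r := s ^ (-(1 / p)) with hr
    have hs0 : 0 < s := h0
    have hr0 : 0 < r := Real.rpow_pos_of_pos hs0 _
    have hrp : r ^ p = s⁻¹ := by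
      rw [hr, ← Real.rpow_mul hs0.le, ← Real.rpow_neg_one]
      congr 1; field_simp
    have hsc : ∀ v : E, ‖r • v‖ ^ p = s⁻¹ * ‖v‖ ^ p := by
      intro v
      rw [norm_smul, Real.mul_rpow (norm_nonneg _) (norm_nonneg _), Real.norm_of_nonneg hr0.le, hrp]
    have hmem : (r • a, r • b) ∈ S := by
      constructor
      · simp only [hsc]; rw [← mul_add, ← hs]; exact inv_mul_cancel₀ hs0.ne'
      · simp only [← smul_sub, hsc]
        rw [← div_eq_inv_mul, le_div_iff₀ hs0]; exact hlow
    have h1 := hC _ hmem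
    have h2 := hpos _ hmem
    simp only at h1 h2
    have e1 : (1 / 2 : ℝ) • (r • a + r • b) = r • ((1 / 2 : ℝ) • (a + b)) := by
      rw [← smul_add, smul_comm]
    rw [e1] at h1 h2
    simp only [← smul_sub, hsc] at h1 h2
    have e2 : (s⁻¹ * ‖a‖ ^ p + s⁻¹ * ‖b‖ ^ p) / 2 - s⁻¹ * ‖(1 / 2 : ℝ) • (a + b)‖ ^ p
      = s⁻¹ * (s / 2 - ‖(1 / 2 : ℝ) • (a + b)‖ ^ p) := by rw [hs]; ring
    rw [e2] at h1 h2
    have h3 := le_trans (le_abs_self _) h1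
    rw [div_le_iff₀ h2] at h3
    have h4 : ‖a - b‖ ^ p ≤ C * (s / 2 - ‖(1 / 2 : ℝ) • (a + b)‖ ^ p) := by
      have := mul_le_mul_of_nonneg_left h3 hs0.le
      have e3 : s * (s⁻¹ * ‖a - b‖ ^ p) = ‖a - b‖ ^ p := by field_simp
      have e4 : s * (C * (s⁻¹ * (s / 2 - ‖(1 / 2 : ℝ) • (a + b)‖ ^ p)))
        = C * (s / 2 - ‖(1 / 2 : ℝ) • (a + b)‖ ^ p) := by field_simp
      rwa [e3, e4] at this
    have h5 := mul_le_mul_of_nonneg_right (le_max_left C 0) (hD a b)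
    have := mul_nonneg hε.le hs0.le
    linarith
end convexity


/-- one-dimensional Gaussian moment -/
lemma gauss_moment_one {q : ℝ} (hq : 0 ≤ q) :
    ∫⁻ s : ℝ, ENNReal.ofReal ((4 * π) ^ (-(1 : ℝ) / 2) * Real.exp (-s ^ 2 / 4) * |s| ^ q) =
      ENNReal.ofReal (2 ^ q * Real.Gamma ((q + 1) / 2) / √π) := by
  set F : ℝ → ℝ := fun s => (4 * π) ^ (-(1 : ℝ) / 2) * (s ^ q * Real.exp (-(1 / 4) * s ^ (2 : ℝ)))
    with hF
  have e : ∀ s : ℝ, (4 * π) ^ (-(1 : ℝ) / 2) * Real.exp (-s ^ 2 / 4) * |s| ^ q = F |s| := by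
    intro s
    simp only [hF, Real.rpow_two, sq_abs]
    rw [show -s ^ 2 / 4 = -(1 / 4) * s ^ 2 by ring]; ring
  have hint : IntegrableOn F (Set.Ioi 0) :=
    (integrableOn_rpow_mul_exp_neg_mul_rpow (by linarith) (by norm_num) (by norm_num)).const_mul _
  have hint2 : Integrable fun s : ℝ => F |s| := by
    have := hint.integrable_indicator measurableSet_Ioi
    have h2 := this.comp_neg
    refine (this.add h2).congr ?_
    have h0 : ∀ᵐ s : ℝ, s ≠ 0 := by simp [ae_iff]
    filter_upwards [h0] with s hs
    rcases lt_or_gt_of_ne hs with h | h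
    · simp [Set.indicator, h, h.le, abs_of_neg, not_lt]
    · simp [Set.indicator, h, h.le, abs_of_pos, not_lt]
  simp_rw [e]
  rw [← ofReal_integral_eq_lintegral_ofReal hint2
    (Eventually.of_forall fun s => by simp only [hF]; positivity)]
  rw [integral_comp_abs, hF, integral_const_mul,
    integral_rpow_mul_exp_neg_mul_rpow (by norm_num) (by linarith) (by norm_num)]
  congr 1
  have h4 : (4 * π) ^ (-(1 : ℝ) / 2) = 1 / (2 * √π) := by
    rw [show -(1 : ℝ) / 2 = -(1 / 2) by ring, Real.rpow_neg (by positivity), ← Real.sqrt_eq_rpow,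
      Real.sqrt_mul (by norm_num), show √(4 : ℝ) = 2 by
        rw [show (4 : ℝ) = 2 ^ 2 by norm_num]; exact Real.sqrt_sq (by norm_num)]
    ring
  have h5 : (1 / 4 : ℝ) ^ (-(q + 1) / 2) = 2 * 2 ^ q := by
    rw [show (1 / 4 : ℝ) = 2 ^ (-2 : ℝ) by
      rw [Real.rpow_neg (by norm_num)]; norm_num, ← Real.rpow_mul (by norm_num),
      show -2 * (-(q + 1) / 2) = 1 + q by ring, Real.rpow_add (by norm_num), Real.rpow_one]
  rw [h4, h5]
  field_simp

lemma gauss_const {p : ℝ} (hp : 0 < p) :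
    2 ^ p * Real.Gamma ((p + 1) / 2) / √π = 2 * Real.Gamma p / Real.Gamma (p / 2) := by
  have h := Real.Gamma_mul_Gamma_add_half (p / 2)
  have hG : 0 < Real.Gamma (p / 2) := Real.Gamma_pos_of_pos (by linarith)
  have hpi : 0 < √π := Real.sqrt_pos.2 Real.pi_pos
  rw [show 2 * (p / 2) = p by ring, show p / 2 + 1 / 2 = (p + 1) / 2 by ring,
    Real.rpow_sub (by norm_num), Real.rpow_one] at h
  have h2p : (0:ℝ) < 2 ^ p := by positivity
  rw [div_eq_div_iff hpi.ne' hG.ne', mul_assoc, mul_comm (Gamma ((p + 1) / 2)), h]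
  field_simp

lemma lintegral_prod_aux {ι : Type*} [Fintype ι] (f : ι → ℝ → ℝ) (h0 : ∀ i s, 0 ≤ f i s)
    (hm : ∀ i, Measurable (f i)) (hfin : ∀ i, ∫⁻ s, ENNReal.ofReal (f i s) ≠ ⊤) :
    ∫⁻ w : ι → ℝ, ∏ i, ENNReal.ofReal (f i (w i)) = ∏ i, ∫⁻ s, ENNReal.ofReal (f i s) := by
  have hint : ∀ i, Integrable (f i) := fun i =>
    (lintegral_ofReal_ne_top_iff_integrable (hm i).aestronglyMeasurable
      (Eventually.of_forall (h0 i))).1 (hfin i)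
  have e : ∀ i, ∫⁻ s, ENNReal.ofReal (f i s) = ENNReal.ofReal (∫ s, f i s) := fun i =>
    (ofReal_integral_eq_lintegral_ofReal (hint i) (Eventually.of_forall (h0 i))).symm
  simp_rw [e]
  rw [← ENNReal.ofReal_prod_of_nonneg (fun i _ => integral_nonneg (h0 i)),
    ← integral_fintype_prod_volume_eq_prod, ofReal_integral_eq_lintegral_ofReal]
  · refine lintegral_congr fun w => ?_
    rw [← ENNReal.ofReal_prod_of_nonneg (fun i _ => h0 i _)]
  · exact Integrable.fintype_prod hint
  · exact Eventually.of_forall fun w => Finset.prod_nonneg fun i _ => h0 i _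

lemma gauss_moment (n : ℕ) (hn : 1 ≤ n) {p : ℝ} (hp : 1 < p) (v : EuclideanSpace ℝ (Fin n)) :
    ∫⁻ z : EuclideanSpace ℝ (Fin n),
      ENNReal.ofReal ((4 * π) ^ (-(n : ℝ) / 2) * Real.exp (-‖z‖ ^ 2 / 4)) * ‖inner ℝ v z‖ₑ ^ p =
      ENNReal.ofReal (2 * Real.Gamma p / Real.Gamma (p / 2)) * ‖v‖ₑ ^ p := by
  have hp0 : 0 < p := by linarith
  by_cases hv : v = 0
  · subst hv
    simp [ENNReal.zero_rpow_of_pos hp0]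
  have hv0 : 0 < ‖v‖ := norm_pos_iff.2 hv
  set i0 : Fin n := ⟨0, hn⟩
  obtain ⟨b, hb⟩ := Orthonormal.exists_orthonormalBasis_extension_of_card_eq (𝕜 := ℝ)
    (E := EuclideanSpace ℝ (Fin n)) (ι := Fin n) (by simp) (v := fun _ => (‖v‖⁻¹ : ℝ) • v)
    (s := {i0}) (by
      constructor
      · rintro ⟨i, hi⟩
        simp [norm_smul, hv0.ne']
      · rintro ⟨i, hi⟩ ⟨j, hj⟩ hij
        simp only [Set.mem_singleton_iff] at hi hj
        subst hi; subst hj; simp at hij)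
  have hb0 := hb i0 rfl
  have hin : ∀ z, inner ℝ v z = ‖v‖ * (b.repr z) i0 := by
    intro z
    rw [b.repr_apply_apply, hb0, inner_smul_left]
    simp [hv0.ne']
  set G : (Fin n → ℝ) → ENNReal := fun w =>
      ‖v‖ₑ ^ p * ∏ i, ENNReal.ofReal ((4 * π) ^ (-(1 : ℝ) / 2) * Real.exp (-(w i) ^ 2 / 4) *
        |w i| ^ (if i = i0 then p else 0)) with hG
  have key : ∀ z : EuclideanSpace ℝ (Fin n),
      ENNReal.ofReal ((4 * π) ^ (-(n : ℝ) / 2) * Real.exp (-‖z‖ ^ 2 / 4)) * ‖inner ℝ v z‖ₑ ^ p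
       = G (WithLp.ofLp (b.repr z)) := by
    intro z
    rw [hin, enorm_mul, ENNReal.mul_rpow_of_nonneg _ _ hp0.le, enorm_norm]
    simp only [hG]
    rw [← ENNReal.ofReal_prod_of_nonneg (fun i _ => by positivity), Finset.prod_mul_distrib,
      Finset.prod_mul_distrib, ← b.repr.norm_map z, EuclideanSpace.norm_sq_eq, ← Real.exp_sum]
    have e1 : ∏ i : Fin n, |(b.repr z) i| ^ (if i = i0 then p else (0:ℝ)) = |(b.repr z) i0| ^ p := by
      rw [Finset.prod_eq_single i0] <;> simp +contextual
    have e2 : (∏ _i : Fin n, (4 * π) ^ (-(1 : ℝ) / 2)) = (4 * π) ^ (-(n : ℝ) / 2) := by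
      rw [Finset.prod_const, ← Real.rpow_natCast, ← Real.rpow_mul (by positivity)]
      congr 1; simp; ring
    rw [e1, e2, ENNReal.ofReal_mul (p := _ * _) (q := _ ^ p) (by positivity), ← ENNReal.ofReal_rpow_of_nonneg (abs_nonneg _) hp0.le,
      ← Real.norm_eq_abs ((b.repr z) i0), ofReal_norm]
    have e3 : -(∑ i, ‖(b.repr z) i‖ ^ 2) / 4 = ∑ i, -((b.repr z) i) ^ 2 / 4 := by
      rw [← Finset.sum_neg_distrib, Finset.sum_div]; simp
    rw [e3]; ring
  simp_rw [key]
  have mG : Measurable G := by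
    simp only [hG]
    refine Measurable.const_mul (Finset.measurable_prod _ fun i _ => ?_) _
    fun_prop
  rw [b.measurePreserving_repr.lintegral_comp (f := fun z => G (WithLp.ofLp z))
    (mG.comp (PiLp.volume_preserving_ofLp (Fin n)).measurable),
    (PiLp.volume_preserving_ofLp (Fin n)).lintegral_comp mG]
  simp only [hG]
  rw [lintegral_const_mul _ (Finset.measurable_prod _ fun i _ => by fun_prop),
    lintegral_prod_aux (fun i s => (4 * π) ^ (-(1 : ℝ) / 2) * Real.exp (-s ^ 2 / 4) *
        |s| ^ (if i = i0 then p else 0)) (fun i s => by positivity) (fun i => by fun_prop)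
      (fun i => by
        rw [gauss_moment_one (by split_ifs <;> linarith)]; exact ENNReal.ofReal_ne_top), mul_comm]
  congr 1
  rw [Finset.prod_eq_single i0]
  · simp only [if_true]
    rw [gauss_moment_one hp0.le, gauss_const hp0]
  · intro i _ hi
    simp only [if_neg hi]
    rw [gauss_moment_one le_rfl]
    have hpi : 0 < √π := Real.sqrt_pos.2 Real.pi_pos
    simp [Real.Gamma_one_half_eq]
    norm_num [Real.Gamma_one_half_eq, hpi.ne']
  · simp


open scoped Convolution

section moll
variable {E : Type*} [NormedAddCommGroup E] [InnerProductSpace ℝ E] [FiniteDimensional ℝ E]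
  [MeasurableSpace E] [BorelSpace E]

structure IsMoll (ε : ℝ) (ρ : E → ℝ) : Prop where
  smooth : ContDiff ℝ (⊤ : ℕ∞) ρ
  nonneg : ∀ x, 0 ≤ ρ x
  supp : Function.support ρ ⊆ Metric.closedBall 0 ε
  int_one : ∫ x, ρ x = 1

noncomputable def mollify (ρ f : E → ℝ) : E → ℝ := ρ ⋆[ContinuousLinearMap.lsmul ℝ ℝ, volume] f

noncomputable def energy (K : E → ENNReal) (p : ℝ) (u : E → ℝ) : ENNReal :=
  ∫⁻ x, ∫⁻ y, K (x - y) * ‖u y - u x‖ₑ ^ p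

lemma IsMoll.compact {ε : ℝ} {ρ : E → ℝ} (h : IsMoll ε ρ) : HasCompactSupport ρ :=
  HasCompactSupport.of_support_subset_isCompact (isCompact_closedBall 0 ε) h.supp

lemma IsMoll.integrable {ε : ℝ} {ρ : E → ℝ} (h : IsMoll ε ρ) : Integrable ρ :=
  h.smooth.continuous.integrable_of_hasCompactSupport h.compact

lemma IsMoll.lint {ε : ℝ} {ρ : E → ℝ} (h : IsMoll ε ρ) : ∫⁻ x, ENNReal.ofReal (ρ x) = 1 := by
  rw [← ofReal_integral_eq_lintegral_ofReal h.integrable (Eventually.of_forall h.nonneg), h.int_one]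
  simp

lemma mollify_apply (ρ f : E → ℝ) (x : E) : mollify ρ f x = ∫ w, ρ w * f (x - w) := rfl

lemma IsMoll.integrable_mul {ε : ℝ} {ρ f : E → ℝ} (h : IsMoll ε ρ) (hf : LocallyIntegrable f volume)
    (x : E) : Integrable fun w => ρ w * f (x - w) :=
  (h.compact.convolutionExists_left (ContinuousLinearMap.lsmul ℝ ℝ) h.smooth.continuous hf x)

lemma jensen_aux_s9 {ρ h : E → ℝ} {ε : ℝ} (hρ : IsMoll ε ρ) (hh : Measurable h) {p : ℝ} (hp : 1 < p) :
    ‖∫ w, ρ w * h w‖ₑ ^ p ≤ ∫⁻ w, ENNReal.ofReal (ρ w) * ‖h w‖ₑ ^ p := by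
  have mρ : Measurable ρ := hρ.smooth.continuous.measurable
  have hp0 : 0 < p := by linarith
  set ν : Measure E := volume.withDensity fun w => ENNReal.ofReal (ρ w)
  have : IsProbabilityMeasure ν := ⟨by rw [withDensity_apply _ MeasurableSet.univ]; simpa using hρ.lint⟩
  have h1 : ‖∫ w, ρ w * h w‖ₑ ≤ ∫⁻ w, ‖h w‖ₑ ∂ν := by
    refine (enorm_integral_le_lintegral_enorm _).trans ?_
    rw [lintegral_withDensity_eq_lintegral_mul _ mρ.ennreal_ofReal hh.enorm]
    refine lintegral_mono fun w => ?_
    simp only [Pi.mul_apply, enorm_mul]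
    rw [Real.enorm_of_nonneg (hρ.nonneg w)]
  have h2 := eLpNorm'_le_eLpNorm'_of_exponent_le (p := 1) (q := p) one_pos hp.le ν
    (f := h) hh.aestronglyMeasurable
  simp only [eLpNorm'_eq_lintegral_enorm, ENNReal.rpow_one, div_one] at h2
  calc ‖∫ w, ρ w * h w‖ₑ ^ p ≤ ((∫⁻ w, ‖h w‖ₑ ^ p ∂ν) ^ (1 / p)) ^ p := by
        gcongr; exact h1.trans h2
    _ = ∫⁻ w, ‖h w‖ₑ ^ p ∂ν := by
        rw [← ENNReal.rpow_mul, one_div_mul_cancel hp0.ne', ENNReal.rpow_one]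
    _ = _ := by
        rw [lintegral_withDensity_eq_lintegral_mul _ mρ.ennreal_ofReal (hh.enorm.pow_const p)]
        rfl

lemma energy_mollify_le {ρ f : E → ℝ} {ε : ℝ} (hρ : IsMoll ε ρ) (hf : Measurable f)
    (hfl : LocallyIntegrable f volume) {p : ℝ} (hp : 1 < p) {K : E → ENNReal} (hK : Measurable K) :
    energy K p (mollify ρ f) ≤ energy K p f := by
  have mρ : Measurable ρ := hρ.smooth.continuous.measurable
  have h1 : ∀ x y, ‖mollify ρ f y - mollify ρ f x‖ₑ ^ p ≤
      ∫⁻ w, ENNReal.ofReal (ρ w) * ‖f (y - w) - f (x - w)‖ₑ ^ p := by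
    intro x y
    rw [mollify_apply, mollify_apply, ← integral_sub (hρ.integrable_mul hfl y)
      (hρ.integrable_mul hfl x)]
    simp_rw [← mul_sub]
    exact jensen_aux_s9 hρ (h := fun w => f (y - w) - f (x - w)) (by fun_prop) hp
  calc energy K p (mollify ρ f)
      ≤ ∫⁻ x, ∫⁻ y, ∫⁻ w, ENNReal.ofReal (ρ w) * (K (x - y) * ‖f (y - w) - f (x - w)‖ₑ ^ p) := by
        refine lintegral_mono fun x => lintegral_mono fun y => ?_
        refine (mul_le_mul_right (h1 x y) _).trans_eq ?_
        rw [← lintegral_const_mul _ (by fun_prop)]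
        refine lintegral_congr fun w => ?_
        ring
    _ = ∫⁻ x, ∫⁻ w, ∫⁻ y, ENNReal.ofReal (ρ w) * (K (x - y) * ‖f (y - w) - f (x - w)‖ₑ ^ p) := by
        refine lintegral_congr fun x => ?_
        rw [lintegral_lintegral_swap]
        apply Measurable.aemeasurable
        fun_prop
    _ = ∫⁻ w, ∫⁻ x, ∫⁻ y, ENNReal.ofReal (ρ w) * (K (x - y) * ‖f (y - w) - f (x - w)‖ₑ ^ p) := by
        rw [lintegral_lintegral_swap]
        apply Measurable.aemeasurable
        refine Measurable.lintegral_prod_right' (f := fun q : (E × E) × E =>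
          ENNReal.ofReal (ρ q.1.2) * (K (q.1.1 - q.2) * ‖f (q.2 - q.1.2) - f (q.1.1 - q.1.2)‖ₑ ^ p)) ?_
        fun_prop
    _ = ∫⁻ w, ENNReal.ofReal (ρ w) * energy K p f := by
        refine lintegral_congr fun w => ?_
        have e : ∀ x, ∫⁻ y, ENNReal.ofReal (ρ w) * (K (x - y) * ‖f (y - w) - f (x - w)‖ₑ ^ p)
            = ENNReal.ofReal (ρ w) * ∫⁻ y, K (x - w - y) * ‖f y - f (x - w)‖ₑ ^ p := by
          intro x
          rw [lintegral_const_mul _ (by fun_prop),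
            ← lintegral_sub_right_eq_self (fun y => K (x - w - y) * ‖f y - f (x - w)‖ₑ ^ p) w]
          simp
        simp_rw [e]
        rw [lintegral_const_mul]
        · rw [lintegral_sub_right_eq_self (fun x => ∫⁻ y, K (x - y) * ‖f y - f x‖ₑ ^ p) w]
          rfl
        · refine Measurable.lintegral_prod_right' (f := fun q : E × E =>
            (K (q.1 - w - q.2) * ‖f q.2 - f (q.1 - w)‖ₑ ^ p)) ?_
          fun_prop
    _ = energy K p f := by
        rw [lintegral_mul_const _ mρ.ennreal_ofReal, hρ.lint, one_mul]

lemma exists_moll {ε : ℝ} (hε : 0 < ε) : ∃ ρ : E → ℝ, IsMoll ε ρ := by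
  let b : ContDiffBump (0 : E) := ⟨ε / 2, ε, by linarith, by linarith⟩
  refine ⟨b.normed volume, b.contDiff_normed, b.nonneg_normed, ?_, b.integral_normed⟩
  rw [b.support_normed_eq]
  exact Metric.ball_subset_closedBall

lemma IsMoll.mono {ε δ : ℝ} {ρ : E → ℝ} (h : IsMoll ε ρ) (hd : ε ≤ δ) : IsMoll δ ρ :=
  ⟨h.smooth, h.nonneg, h.supp.trans (Metric.closedBall_subset_closedBall hd), h.int_one⟩

lemma IsMoll.mid {ε : ℝ} {ρ σ : E → ℝ} (h : IsMoll ε ρ) (h' : IsMoll ε σ) :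
    IsMoll ε (fun x => (1 / 2 : ℝ) * (ρ x + σ x)) := by
  refine ⟨contDiff_const.mul (h.smooth.add h'.smooth), fun x => ?_, fun x hx => ?_, ?_⟩
  · have := h.nonneg x
    have := h'.nonneg x
    positivity
  · by_contra hc
    have h1 : ρ x = 0 := by
      by_contra h1; exact hc (h.supp h1)
    have h2 : σ x = 0 := by
      by_contra h2; exact hc (h'.supp h2)
    simp [h1, h2] at hx
  · rw [integral_const_mul, integral_add h.integrable h'.integrable, h.int_one, h'.int_one]
    norm_num

lemma IsMoll.contDiff_mollify {ε : ℝ} {ρ f : E → ℝ} (h : IsMoll ε ρ)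
    (hf : LocallyIntegrable f volume) : ContDiff ℝ (⊤ : ℕ∞) (mollify ρ f) :=
  h.compact.contDiff_convolution_left _ h.smooth hf

lemma gradient_mid {ε : ℝ} {ρ σ f : E → ℝ} (h : IsMoll ε ρ) (h' : IsMoll ε σ)
    (hf : LocallyIntegrable f volume) (x : E) :
    gradient (mollify (fun x => (1 / 2 : ℝ) * (ρ x + σ x)) f) x =
      (1 / 2 : ℝ) • (gradient (mollify ρ f) x + gradient (mollify σ f) x) := by
  have e : mollify (fun x => (1 / 2 : ℝ) * (ρ x + σ x)) f =
      fun x => (1 / 2 : ℝ) * (mollify ρ f x + mollify σ f x) := by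
    ext x
    simp only [mollify_apply]
    rw [← integral_add (h.integrable_mul hf x) (h'.integrable_mul hf x), ← integral_const_mul]
    congr 1; ext w; ring
  have d1 : DifferentiableAt ℝ (mollify ρ f) x :=
    (h.contDiff_mollify hf).differentiable (by simp) x
  have d2 : DifferentiableAt ℝ (mollify σ f) x :=
    (h'.contDiff_mollify hf).differentiable (by simp) x
  rw [e]
  unfold gradient
  rw [fderiv_const_mul (d1.fun_add d2), fderiv_fun_add d1 d2]
  simp

lemma continuous_gradient_mollify {ε : ℝ} {ρ f : E → ℝ} (h : IsMoll ε ρ)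
    (hf : LocallyIntegrable f volume) : Continuous (gradient (mollify ρ f)) := by
  have := (h.contDiff_mollify hf).continuous_fderiv (by simp)
  unfold gradient
  exact (LinearIsometryEquiv.continuous _).comp this

lemma integral_bound_aux {a b m z : E → ℝ} (i1 : Integrable a) (i2 : Integrable b)
    (i3 : Integrable m) (i4 : Integrable z) {e C : ℝ}
    (h : ∀ x, z x ≤ e * (a x + b x) + C * ((a x + b x) / 2 - m x)) :
    ∫ x, z x ≤ e * ((∫ x, a x) + ∫ x, b x) + C * (((∫ x, a x) + ∫ x, b x) / 2 - ∫ x, m x) := by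
  have i12 : Integrable fun x => a x + b x := i1.add i2
  have i5 : Integrable fun x => (a x + b x) / 2 := i12.div_const 2
  have i6 : Integrable fun x => C * ((a x + b x) / 2 - m x) := (i5.sub i3).const_mul C
  rw [← integral_add i1 i2, ← integral_div, ← integral_sub i5 i3,
    ← integral_const_mul, ← integral_const_mul, ← integral_add (i12.const_mul e) i6]
  exact integral_mono i4 ((i12.const_mul e).add i6) h

lemma exists_cauchy {p : ℝ} (hp : 1 < p) [Fact (1 ≤ ENNReal.ofReal p)] {f : E → ℝ} (hf : LocallyIntegrable f volume)
    {B : ℝ} (hB : 0 ≤ B)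
    (hm : ∀ (ε : ℝ) (ρ : E → ℝ), IsMoll ε ρ →
      MemLp (gradient (mollify ρ f)) (ENNReal.ofReal p) volume)
    (hN : ∀ (ε : ℝ) (ρ : E → ℝ), IsMoll ε ρ → ∫ x, ‖gradient (mollify ρ f) x‖ ^ p ≤ B) :
    ∃ (ρ : ℕ → E → ℝ) (hρ : ∀ k : ℕ, IsMoll (1 / ((k : ℝ) + 1)) (ρ k))
      (g : Lp E (ENNReal.ofReal p) (volume : Measure E)),
      Tendsto (fun k => (hm _ _ (hρ k)).toLp) atTop (𝓝 g) ∧ ∫ x, ‖g x‖ ^ p ≤ B := by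
  have hp0 : 0 < p := by linarith
  have hpn : ENNReal.ofReal p ≠ 0 := by simpa using hp0
  have hpt : ENNReal.ofReal p ≠ ⊤ := ENNReal.ofReal_ne_top
  have hpr : (ENNReal.ofReal p).toReal = p := ENNReal.toReal_ofReal hp0.le
  set V : (E → ℝ) → E → E := fun ρ => gradient (mollify ρ f) with hV
  set N : (E → ℝ) → ℝ := fun ρ => ∫ x, ‖V ρ x‖ ^ p with hNdef
  have hint : ∀ {h : E → E}, MemLp h (ENNReal.ofReal p) volume → Integrable fun x => ‖h x‖ ^ p := by
    intro h hh
    have := hh.integrable_norm_rpow hpn hpt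
    rwa [hpr] at this
  have hN0 : ∀ ρ, 0 ≤ N ρ := fun ρ => integral_nonneg fun x => by positivity
  set S : ℕ → Set ℝ := fun k => N '' {ρ | IsMoll (1 / ((k : ℝ) + 1)) ρ} with hS
  have hSne : ∀ k, (S k).Nonempty := fun k =>
    (show {ρ : E → ℝ | IsMoll (1 / ((k : ℝ) + 1)) ρ}.Nonempty from
      exists_moll (by positivity)).image N
  have hSbd : ∀ k, BddBelow (S k) := fun k => ⟨0, by rintro _ ⟨ρ, -, rfl⟩; exact hN0 ρ⟩
  set d : ℕ → ℝ := fun k => sInf (S k) with hd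
  have hdle : ∀ (k : ℕ) ρ, IsMoll (1 / ((k : ℝ) + 1)) ρ → d k ≤ N ρ := fun k ρ h =>
    csInf_le (hSbd k) ⟨ρ, h, rfl⟩
  have hdB : ∀ k, d k ≤ B := fun k => by
    obtain ⟨ρ, hρ⟩ := exists_moll (E := E) (ε := 1 / ((k : ℝ) + 1)) (by positivity)
    exact (hdle k ρ hρ).trans (hN _ ρ hρ)
  have hkl : ∀ {k l : ℕ}, k ≤ l → 1 / ((l : ℝ) + 1) ≤ 1 / ((k : ℝ) + 1) := fun {k l} h => by
    gcongr
  have hdm : Monotone d := fun k l hk => by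
    refine csInf_le_csInf (hSbd k) (hSne l) ?_
    rintro _ ⟨ρ, h, rfl⟩
    exact ⟨ρ, h.mono (hkl hk), rfl⟩
  have hbdd : BddAbove (Set.range d) := ⟨B, by rintro _ ⟨k, rfl⟩; exact hdB k⟩
  have hdt := tendsto_atTop_ciSup hdm hbdd
  set D := ⨆ k, d k
  have hdD : ∀ k, d k ≤ D := fun k => le_ciSup hbdd k
  have hex : ∀ k : ℕ, ∃ ρ : E → ℝ, IsMoll (1 / ((k : ℝ) + 1)) ρ ∧ N ρ < d k + 1 / ((k : ℝ) + 1) := by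
    intro k
    obtain ⟨_, ⟨ρ, h, rfl⟩, hlt⟩ := exists_lt_of_csInf_lt (hSne k)
      (show sInf (S k) < d k + 1 / ((k : ℝ) + 1) from lt_add_of_pos_right _ (by positivity))
    exact ⟨ρ, h, hlt⟩
  choose ρ hρ hρN using hex
  have hnorm : ∀ k l, dist ((hm _ _ (hρ k)).toLp) ((hm _ _ (hρ l)).toLp) =
      (∫ x, ‖V (ρ k) x - V (ρ l) x‖ ^ p) ^ (1 / p) := by
    intro k l
    rw [dist_eq_norm, ← MemLp.toLp_sub, Lp.norm_toLp,
      ((hm _ _ (hρ k)).sub (hm _ _ (hρ l))).eLpNorm_eq_integral_rpow_norm hpn hpt, hpr,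
      ENNReal.toReal_ofReal (by positivity), one_div]
    rfl
  have hcau : CauchySeq fun k => (hm _ _ (hρ k)).toLp := by
    rw [Metric.cauchySeq_iff']
    intro δ hδ
    have hδp : 0 < δ ^ p := by positivity
    obtain ⟨C, hC0, hC⟩ := defect_bound (E := E) hp (ε := δ ^ p / (4 * (B + 1))) (by positivity)
    have hη : Tendsto (fun k : ℕ => C * ((D - d k) / 2 + 1 / ((k : ℝ) + 1))) atTop (𝓝 0) := by
      have h1 := ((hdt.const_sub D).div_const 2).add
        (tendsto_one_div_add_atTop_nhds_zero_nat (𝕜 := ℝ))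
      have h2 := h1.const_mul C
      simpa using h2
    obtain ⟨k, hk⟩ := (hη.eventually (gt_mem_nhds (show 0 < δ ^ p / 2 by positivity))).exists
    refine ⟨k, fun l hl => ?_⟩
    rw [dist_comm, hnorm]
    have i1 := hint (hm _ _ (hρ k))
    have i2 := hint (hm _ _ (hρ l))
    have hmid := (hρ k).mid ((hρ l).mono (hkl hl))
    have i3 := hint (hm _ _ hmid)
    have hNm := hdle k _ hmid
    simp only [hNdef, hV] at hNm
    simp_rw [gradient_mid (hρ k) ((hρ l).mono (hkl hl)) hf] at hNm i3
    have i4 := hint ((hm _ _ (hρ k)).sub (hm _ _ (hρ l)))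
    have hI : ∫ x, ‖V (ρ k) x - V (ρ l) x‖ ^ p ≤
        (δ ^ p / (4 * (B + 1))) * (N (ρ k) + N (ρ l)) + C * ((N (ρ k) + N (ρ l)) / 2 -
          ∫ x, ‖(1 / 2 : ℝ) • (V (ρ k) x + V (ρ l) x)‖ ^ p) := by
      simp only [hNdef]
      exact integral_bound_aux i1 i2 i3 i4 fun x => hC _ _
    have hkB := hN _ _ (hρ k)
    have hlB := hN _ _ (hρ l)
    have b1 : (δ ^ p / (4 * (B + 1))) * (N (ρ k) + N (ρ l)) ≤ δ ^ p / 2 := by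
      have : N (ρ k) + N (ρ l) ≤ 2 * (B + 1) := by
        have h1 : N (ρ k) ≤ B := hkB
        have h2 : N (ρ l) ≤ B := hlB
        linarith
      calc _ ≤ (δ ^ p / (4 * (B + 1))) * (2 * (B + 1)) := by gcongr
        _ = δ ^ p / 2 := by field_simp; norm_num
    have b2 : C * ((N (ρ k) + N (ρ l)) / 2 - ∫ x, ‖(1 / 2 : ℝ) • (V (ρ k) x + V (ρ l) x)‖ ^ p) ≤
        C * ((D - d k) / 2 + 1 / ((k : ℝ) + 1)) := by
      refine mul_le_mul_of_nonneg_left ?_ hC0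
      have h1 := hρN k
      have h2 := hρN l
      have h3 := hkl hl
      have h4 := hdD l
      have h5 : d k ≤ ∫ x, ‖(1 / 2 : ℝ) • (V (ρ k) x + V (ρ l) x)‖ ^ p := hNm
      linarith
    have hlt : ∫ x, ‖V (ρ k) x - V (ρ l) x‖ ^ p < δ ^ p := by linarith
    calc _ < (δ ^ p) ^ (1 / p) :=
          Real.rpow_lt_rpow (integral_nonneg fun x => by positivity) hlt (by positivity)
      _ = δ := by rw [← Real.rpow_mul hδ.le, mul_one_div_cancel hp0.ne', Real.rpow_one]
  obtain ⟨g, hg⟩ := cauchySeq_tendsto_of_complete hcau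
  refine ⟨ρ, hρ, g, hg, ?_⟩
  have hgn : ‖g‖ = (∫ x, ‖g x‖ ^ p) ^ (1 / p) := by
    rw [Lp.norm_def, (Lp.memLp g).eLpNorm_eq_integral_rpow_norm hpn hpt, hpr,
      ENNReal.toReal_ofReal (by positivity), one_div]
  have hle : ‖g‖ ≤ B ^ (1 / p) := by
    refine le_of_tendsto' hg.norm fun k => ?_
    rw [Lp.norm_toLp, (hm _ _ (hρ k)).eLpNorm_eq_integral_rpow_norm hpn hpt, hpr,
      ENNReal.toReal_ofReal (by positivity), ← one_div]
    exact Real.rpow_le_rpow (integral_nonneg fun x => by positivity) (hN _ _ (hρ k)) (by positivity)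
  rw [hgn] at hle
  exact (Real.rpow_le_rpow_iff (integral_nonneg fun x => by positivity) hB (by positivity)).1 hle


lemma mollify_weak {f ψ : E → ℝ} (hf : Measurable f) {q : ENNReal} (hq : 1 ≤ q)
    (hfq : MemLp f q volume)
    (hψ : Continuous ψ) (hψc : HasCompactSupport ψ) {ρ : ℕ → E → ℝ}
    (hρ : ∀ k : ℕ, IsMoll (1 / ((k : ℝ) + 1)) (ρ k)) :
    Tendsto (fun k => ∫ x, mollify (ρ k) f x * ψ x) atTop (𝓝 (∫ x, f x * ψ x)) := by
  set fn : E → ℝ := fun x => f (-x) with hfn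
  have hfnl : LocallyIntegrable fn volume :=
    (hfq.comp_measurePreserving (Measure.measurePreserving_neg volume)).locallyIntegrable hq
  -- correlation functions are continuous
  have hcorr : ∀ {a b : E → ℝ}, LocallyIntegrable (fun x => a (-x)) volume → Continuous b →
      HasCompactSupport b → Continuous fun w => ∫ x, b x * a (x - w) := by
    intro a b ha hb hbc
    have := hbc.continuous_convolution_left (ContinuousLinearMap.lsmul ℝ ℝ) (μ := volume) hb ha
    refine this.congr fun w => ?_
    simp [convolution]
  set A : E → ℝ := fun w => ∫ x, ψ x * f (x - w) with hA
  have cA : Continuous A := hcorr hfnl hψ hψc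
  have hkey : ∀ k, ∫ x, mollify (ρ k) f x * ψ x = ∫ w, ρ k w * A w := by
    intro k
    have mρ : Measurable (ρ k) := (hρ k).smooth.continuous.measurable
    have mψ : Measurable ψ := hψ.measurable
    have hint : Integrable (Function.uncurry fun x w => ρ k w * (ψ x * f (x - w)))
        ((volume : Measure E).prod (volume : Measure E)) := by
      rw [integrable_prod_iff']
      · constructor
        · refine Eventually.of_forall fun w => ?_
          simp only [Function.uncurry]
          refine Integrable.const_mul ?_ _
          have hl : LocallyIntegrable (fun x => f (x - w)) volume :=
            (hfq.comp_measurePreserving (measurePreserving_sub_right volume w)).locallyIntegrable hq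
          exact hl.integrable_smul_left_of_hasCompactSupport hψ hψc
        · have e : ∀ w, ∫ x, ‖Function.uncurry (fun x w => ρ k w * (ψ x * f (x - w))) (x, w)‖ =
              ρ k w * ∫ x, |ψ x| * |f (x - w)| := by
            intro w
            rw [← integral_const_mul]
            refine integral_congr_ae (Eventually.of_forall fun x => ?_)
            simp [Function.uncurry, abs_of_nonneg ((hρ k).nonneg w)]
          simp_rw [e]
          have hc := hcorr (a := fun x => |f x|) (b := fun x => |ψ x|)
            ((hfq.comp_measurePreserving (Measure.measurePreserving_neg volume)).norm.locallyIntegrable hq) hψ.abs hψc.norm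
          exact ((hρ k).smooth.continuous.mul hc).integrable_of_hasCompactSupport
            ((hρ k).compact.mul_right)
      · apply Measurable.aestronglyMeasurable
        fun_prop
    calc ∫ x, mollify (ρ k) f x * ψ x = ∫ x, ∫ w, ρ k w * (ψ x * f (x - w)) := by
          refine integral_congr_ae (Eventually.of_forall fun x => ?_)
          simp only [mollify_apply]
          rw [← integral_mul_const]
          congr 1; ext w; ring
      _ = ∫ w, ∫ x, ρ k w * (ψ x * f (x - w)) := integral_integral_swap hint
      _ = _ := by simp_rw [integral_const_mul]; rfl
  simp_rw [hkey]
  have hlim := convolution_tendsto_right (μ := (volume : Measure E)) (φ := ρ) (l := atTop)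
    (g := fun _ x => A (-x)) (k := fun _ => (0 : E)) (x₀ := 0) (z₀ := A 0)
    (Eventually.of_forall fun k => (hρ k).nonneg) (Eventually.of_forall fun k => (hρ k).int_one)
    (by
      rw [tendsto_smallSets_iff]
      intro s hs
      obtain ⟨r, hr, hrs⟩ := Metric.mem_nhds_iff.1 hs
      have := (tendsto_one_div_add_atTop_nhds_zero_nat (𝕜 := ℝ)).eventually (gt_mem_nhds hr)
      filter_upwards [this] with k hk
      exact (hρ k).supp.trans ((Metric.closedBall_subset_ball hk).trans hrs))
    (Eventually.of_forall fun k => (cA.comp continuous_neg).aestronglyMeasurable)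
    (by
      have : Tendsto (fun x => A (-x)) (𝓝 0) (𝓝 (A 0)) := by
        have := (cA.comp continuous_neg).tendsto (0 : E)
        simpa [Function.comp_def] using this
      exact this.comp tendsto_snd)
    tendsto_const_nhds
  have hA0 : A 0 = ∫ x, f x * ψ x := by simp [hA, mul_comm]
  rw [hA0] at hlim
  refine hlim.congr fun k => ?_
  simp [convolution]

lemma weak_grad {p : ℝ} (hp : 1 < p) [Fact (1 ≤ ENNReal.ofReal p)] {f : E → ℝ} (hf : Measurable f)
    (hfp : MemLp f (ENNReal.ofReal p) volume) (hfl : LocallyIntegrable f volume)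
    (hm : ∀ (ε : ℝ) (ρ : E → ℝ), IsMoll ε ρ →
      MemLp (gradient (mollify ρ f)) (ENNReal.ofReal p) volume)
    {ρ : ℕ → E → ℝ} (hρ : ∀ k : ℕ, IsMoll (1 / ((k : ℝ) + 1)) (ρ k))
    {g : Lp E (ENNReal.ofReal p) (volume : Measure E)}
    (hg : Tendsto (fun k => (hm _ _ (hρ k)).toLp) atTop (𝓝 g))
    {φ : E → ℝ} (hφ : ContDiff ℝ (⊤ : ℕ∞) φ) (hφc : HasCompactSupport φ) (v : E) :
    ∫ x, f x * fderiv ℝ φ x v = -∫ x, inner ℝ v (g x) * φ x := by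
  have cφ' : Continuous fun x => fderiv ℝ φ x v :=
    (hφ.continuous_fderiv (by simp)).clm_apply continuous_const
  have hφ'c : HasCompactSupport fun x => fderiv ℝ φ x v := hφc.fderiv_apply (𝕜 := ℝ) v
  have h1 := mollify_weak hf Fact.out hfp cφ' hφ'c hρ
  have hbp : ∀ k, ∫ x, mollify (ρ k) f x * fderiv ℝ φ x v =
      -∫ x, inner ℝ v (gradient (mollify (ρ k) f) x) * φ x := by
    intro k
    have hs := (hρ k).contDiff_mollify hfl
    have cu' : Continuous fun x => fderiv ℝ (mollify (ρ k) f) x v :=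
      (hs.continuous_fderiv (by simp)).clm_apply continuous_const
    rw [integral_mul_fderiv_eq_neg_fderiv_mul_of_integrable]
    · simp [inner_gradient_right]
    · exact (cu'.mul hφ.continuous).integrable_of_hasCompactSupport hφc.mul_left
    · exact (hs.continuous.mul cφ').integrable_of_hasCompactSupport hφ'c.mul_left
    · exact (hs.continuous.mul hφ.continuous).integrable_of_hasCompactSupport hφc.mul_left
    · exact fun x _ => hs.differentiable (by simp) x
    · exact fun x _ => hφ.differentiable (by simp) x
  simp_rw [hbp] at h1
  refine tendsto_nhds_unique h1 (Tendsto.neg ?_)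
  have hc := ENNReal.HolderConjugate.inv_one_sub_inv' (a := ENNReal.ofReal p) Fact.out
  have : Fact (1 ≤ (1 - (ENNReal.ofReal p)⁻¹)⁻¹) := by simp [fact_iff]
  have hφq : MemLp (fun x => φ x • v) (1 - (ENNReal.ofReal p)⁻¹)⁻¹ (volume : Measure E) := by
    exact (hφ.continuous.smul continuous_const).memLp_of_hasCompactSupport
      (hφc.smul_right)
  have hin : ∀ (a : E) (c : ℝ), inner ℝ a (c • v) = inner ℝ v a * c := by
    intro a c
    rw [inner_smul_right, real_inner_comm, mul_comm]
  set P := (innerSL ℝ (E := E)).lpPairing (volume : Measure E) (ENNReal.ofReal p) (1 - (ENNReal.ofReal p)⁻¹)⁻¹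
  have hP : Tendsto (fun k => P ((hm _ _ (hρ k)).toLp) hφq.toLp) atTop (𝓝 (P g hφq.toLp)) :=
    ((P.flip hφq.toLp).continuous.tendsto g).comp hg
  have e1 : P g hφq.toLp = ∫ x, inner ℝ v (g x) * φ x := by
    rw [ContinuousLinearMap.lpPairing_eq_integral]
    refine integral_congr_ae ?_
    filter_upwards [hφq.coeFn_toLp] with x hx
    rw [hx]
    exact hin _ _
  rw [← e1]
  refine hP.congr fun k => ?_
  rw [ContinuousLinearMap.lpPairing_eq_integral]
  refine integral_congr_ae ?_
  filter_upwards [hφq.coeFn_toLp, (hm _ _ (hρ k)).coeFn_toLp] with x hx hx2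
  rw [hx, hx2]
  exact hin _ _

end moll


section fatou

noncomputable def heatK (n : ℕ) (t : ℝ) (z : EuclideanSpace ℝ (Fin n)) : ENNReal :=
  ENNReal.ofReal ((4 * π * t) ^ (-(n : ℝ) / 2) * Real.exp (-‖z‖ ^ 2 / (4 * t)))

lemma heatK_measurable (n : ℕ) (t : ℝ) : Measurable (heatK n t) := by
  unfold heatK; fun_prop

lemma rescale_aux (n : ℕ) {s : ℝ} (hs : 0 < s) {p : ℝ} (hp : 1 < p)
    (u : EuclideanSpace ℝ (Fin n) → ℝ) (hu : Measurable u) (x : EuclideanSpace ℝ (Fin n)) :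
    ENNReal.ofReal ((s ^ 2) ^ (-(p / 2))) * ∫⁻ y, heatK n (s ^ 2) (x - y) * ‖u y - u x‖ₑ ^ p =
    ∫⁻ z, ENNReal.ofReal ((4 * π) ^ (-(n : ℝ) / 2) * Real.exp (-‖z‖ ^ 2 / 4)) *
      ‖s⁻¹ * (u (x + s • z) - u x)‖ₑ ^ p := by
  have hp0 : 0 < p := by linarith
  set F : EuclideanSpace ℝ (Fin n) → ENNReal := fun y =>
    heatK n (s ^ 2) (x - y) * ‖u y - u x‖ₑ ^ p with hF
  have mF : Measurable F := by
    have := heatK_measurable n (s ^ 2)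
    fun_prop
  have h1 : ∫⁻ z, F (x + s • z) = ENNReal.ofReal ((s ^ n)⁻¹) * ∫⁻ y, F y := by
    have := Measure.map_addHaar_smul (volume : Measure (EuclideanSpace ℝ (Fin n))) hs.ne'
    rw [← lintegral_map (μ := volume) (g := fun z => s • z) (f := fun y => F (x + y))
      (by fun_prop) (by fun_prop), this, lintegral_smul_measure, lintegral_add_left_eq_self]
    rw [abs_of_pos (by positivity), finrank_euclideanSpace_fin, smul_eq_mul]
  have h2 : ∫⁻ y, F y = ENNReal.ofReal (s ^ n) * ∫⁻ z, F (x + s • z) := by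
    rw [h1, ← mul_assoc, ← ENNReal.ofReal_mul (by positivity), mul_inv_cancel₀ (by positivity)]
    simp
  rw [h2, ← mul_assoc, ← lintegral_const_mul _ (by fun_prop)]
  refine lintegral_congr fun z => ?_
  have e1 : (s ^ 2) ^ (-(p / 2)) = (s⁻¹) ^ p := by
    rw [← Real.rpow_natCast s 2, ← Real.rpow_mul hs.le, Real.inv_rpow hs.le, ← Real.rpow_neg hs.le]
    congr 1; push_cast; ring
  have e2 : (4 * π * s ^ 2) ^ (-(n : ℝ) / 2) = (4 * π) ^ (-(n : ℝ) / 2) * (s ^ n)⁻¹ := by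
    rw [Real.mul_rpow (by positivity) (by positivity)]
    congr 1
    rw [← Real.rpow_natCast s 2, ← Real.rpow_mul hs.le, ← Real.rpow_natCast s n,
      ← Real.rpow_neg hs.le]
    congr 1; push_cast; ring
  have e3 : -‖x - (x + s • z)‖ ^ 2 / (4 * s ^ 2) = -‖z‖ ^ 2 / 4 := by
    rw [show x - (x + s • z) = -(s • z) by abel, norm_neg, norm_smul, Real.norm_of_nonneg hs.le]
    field_simp
  simp only [hF, heatK]
  rw [e1, e2, e3, enorm_mul, ENNReal.mul_rpow_of_nonneg _ _ hp0.le,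
    Real.enorm_of_nonneg (inv_nonneg.2 hs.le), ENNReal.ofReal_rpow_of_nonneg (by positivity) hp0.le,
    ← ENNReal.ofReal_mul (by positivity), ← mul_assoc, ← mul_assoc, ← ENNReal.ofReal_mul (by positivity),
    ← ENNReal.ofReal_mul (by positivity)]
  congr 2
  field_simp

lemma fatou_energy (n : ℕ) (hn : 1 ≤ n) {p : ℝ} (hp : 1 < p) (u : EuclideanSpace ℝ (Fin n) → ℝ)
    (hu : Differentiable ℝ u) :
    ENNReal.ofReal (2 * Real.Gamma p / Real.Gamma (p / 2)) * ∫⁻ x, ‖gradient u x‖ₑ ^ p ≤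
      liminf (fun t : ℝ => ENNReal.ofReal (t ^ (-(p / 2))) * energy (heatK n t) p u)
        (𝓝[>] (0 : ℝ)) := by
  have mu : Measurable u := hu.continuous.measurable
  have hp0 : 0 < p := by linarith
  set W : EuclideanSpace ℝ (Fin n) → ENNReal := fun z =>
    ENNReal.ofReal ((4 * π) ^ (-(n : ℝ) / 2) * Real.exp (-‖z‖ ^ 2 / 4)) with hW
  have mW : Measurable W := by simp only [hW]; fun_prop
  set H : ℝ → EuclideanSpace ℝ (Fin n) → EuclideanSpace ℝ (Fin n) → ENNReal := fun t x z =>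
    W z * ‖(√t)⁻¹ * (u (x + √t • z) - u x)‖ₑ ^ p with hH
  have h1 : ∀ᶠ t in 𝓝[>] (0 : ℝ), ENNReal.ofReal (t ^ (-(p / 2))) * energy (heatK n t) p u =
      ∫⁻ x, ∫⁻ z, H t x z := by
    filter_upwards [self_mem_nhdsWithin] with t ht
    have ht : 0 < t := ht
    have hs := Real.sqrt_pos.2 ht
    rw [energy, ← lintegral_const_mul]
    · refine lintegral_congr fun x => ?_
      have := rescale_aux n hs hp u mu x
      rw [Real.sq_sqrt ht.le] at this
      exact this
    · have := heatK_measurable n t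
      refine Measurable.lintegral_prod_right' (f := fun q : _ × _ =>
            (heatK n t (q.1 - q.2) * ‖u q.2 - u q.1‖ₑ ^ p)) ?_
      fun_prop
  rw [liminf_congr h1]
  have hlim : ∀ x z, Tendsto (fun t => H t x z) (𝓝[>] (0 : ℝ))
      (𝓝 (W z * ‖inner ℝ (gradient u x) z‖ₑ ^ p)) := by
    intro x z
    have hd : HasDerivAt (fun s : ℝ => u (x + s • z)) (fderiv ℝ u x z) 0 := by
      have := (hu x).hasFDerivAt.hasLineDerivAt z
      exact this
    have hsl := hd.tendsto_slope_zero
    simp only [zero_add, zero_smul, add_zero, smul_eq_mul] at hsl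
    have hsq : Tendsto (fun t : ℝ => √t) (𝓝[>] 0) (𝓝[≠] 0) := by
      refine tendsto_nhdsWithin_iff.2 ⟨?_, ?_⟩
      · have := (Real.continuous_sqrt.tendsto 0)
        rw [Real.sqrt_zero] at this
        exact this.mono_left nhdsWithin_le_nhds
      · filter_upwards [self_mem_nhdsWithin] with t ht
        exact (Real.sqrt_pos.2 ht).ne'
    have h2 := hsl.comp hsq
    rw [inner_gradient_left]
    refine ENNReal.Tendsto.const_mul ?_ (Or.inr (by simp [hW]))
    exact ((ENNReal.continuous_rpow_const.comp continuous_enorm).tendsto _).comp h2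
  calc _ = ∫⁻ x, ∫⁻ z, W z * ‖inner ℝ (gradient u x) z‖ₑ ^ p := by
        rw [← lintegral_const_mul' _ _ ENNReal.ofReal_ne_top]
        exact lintegral_congr fun x => (gauss_moment n hn hp _).symm
    _ ≤ ∫⁻ x, liminf (fun t => ∫⁻ z, H t x z) (𝓝[>] (0 : ℝ)) := by
        refine lintegral_mono fun x => ?_
        calc _ = ∫⁻ z, liminf (fun t => H t x z) (𝓝[>] (0 : ℝ)) :=
              lintegral_congr fun z => (hlim x z).liminf_eq.symm
          _ ≤ _ := lintegral_liminf_le fun t => by simp only [hH]; fun_prop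
    _ ≤ _ := lintegral_liminf_le fun t => by
        refine Measurable.lintegral_prod_right' (f := fun q : _ × _ => H t q.1 q.2) ?_
        simp only [hH]; fun_prop

end fatou


theorem liminf_finite_implies_weak_gradient (n : ℕ) (hn : 1 ≤ n) (p : ℝ) (hp : 1 < p)
    (f : EuclideanSpace ℝ (Fin n) → ℝ) (hf : MemLp f (ENNReal.ofReal p) volume)
    (hliminf : Filter.liminf (fun t : ℝ =>
        ENNReal.ofReal (t ^ (-(p / 2))) *
          ∫⁻ x, ∫⁻ y, ENNReal.ofReal
            ((4 * π * t) ^ (-(n : ℝ) / 2) * Real.exp (-‖x - y‖ ^ 2 / (4 * t)) *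
              |f y - f x| ^ p)) (𝓝[>] (0 : ℝ)) < ⊤) :
    ∃ g : EuclideanSpace ℝ (Fin n) → EuclideanSpace ℝ (Fin n),
      Integrable (fun x => ‖g x‖ ^ p) ∧
      (∀ φ : EuclideanSpace ℝ (Fin n) → ℝ, ContDiff ℝ (⊤ : ℕ∞) φ → HasCompactSupport φ →
        ∀ i : Fin n,
          ∫ x, f x * fderiv ℝ φ x (EuclideanSpace.single i 1)
            = -∫ x, g x i * φ x) ∧
      ENNReal.ofReal (2 * Real.Gamma p / Real.Gamma (p / 2)) *
          ∫⁻ x, ENNReal.ofReal (‖g x‖ ^ p)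
        ≤ Filter.liminf (fun t : ℝ =>
            ENNReal.ofReal (t ^ (-(p / 2))) *
              ∫⁻ x, ∫⁻ y, ENNReal.ofReal
                ((4 * π * t) ^ (-(n : ℝ) / 2) * Real.exp (-‖x - y‖ ^ 2 / (4 * t)) *
                  |f y - f x| ^ p)) (𝓝[>] (0 : ℝ)) := by
  have hp0 : 0 < p := by linarith
  haveI : Fact (1 ≤ ENNReal.ofReal p) := ⟨by simpa using hp.le⟩
  have hpn : ENNReal.ofReal p ≠ 0 := by simpa using hp0
  have hpt : ENNReal.ofReal p ≠ ⊤ := ENNReal.ofReal_ne_top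
  have hpr : (ENNReal.ofReal p).toReal = p := ENNReal.toReal_ofReal hp0.le
  set f' : EuclideanSpace ℝ (Fin n) → ℝ := hf.1.mk f with hf'
  have hff : f =ᵐ[volume] f' := hf.1.ae_eq_mk
  have hfm : Measurable f' := hf.1.stronglyMeasurable_mk.measurable
  have hfp : MemLp f' (ENNReal.ofReal p) volume := hf.ae_eq hff
  have hfl : LocallyIntegrable f' volume := hfp.locallyIntegrable Fact.out
  have hL : Filter.liminf (fun t : ℝ =>
        ENNReal.ofReal (t ^ (-(p / 2))) *
          ∫⁻ x, ∫⁻ y, ENNReal.ofReal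
            ((4 * π * t) ^ (-(n : ℝ) / 2) * Real.exp (-‖x - y‖ ^ 2 / (4 * t)) *
              |f y - f x| ^ p)) (𝓝[>] (0 : ℝ)) =
      Filter.liminf (fun t : ℝ => ENNReal.ofReal (t ^ (-(p / 2))) * energy (heatK n t) p f')
        (𝓝[>] (0 : ℝ)) := by
    refine liminf_congr ?_
    filter_upwards [self_mem_nhdsWithin] with t ht
    have ht0 : 0 < t := ht
    congr 1
    unfold energy
    refine lintegral_congr_ae ?_
    filter_upwards [hff] with x hx
    refine lintegral_congr_ae ?_
    filter_upwards [hff] with y hy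
    rw [hx, hy, ENNReal.ofReal_mul (by positivity), heatK,
      ← ENNReal.ofReal_rpow_of_nonneg (abs_nonneg _) hp0.le, ← Real.norm_eq_abs, ofReal_norm]
  rw [hL] at hliminf ⊢
  set L := Filter.liminf (fun t : ℝ => ENNReal.ofReal (t ^ (-(p / 2))) * energy (heatK n t) p f')
        (𝓝[>] (0 : ℝ)) with hLdef
  set c := ENNReal.ofReal (2 * Real.Gamma p / Real.Gamma (p / 2)) with hc
  have hc0 : c ≠ 0 := by
    have h1 := Real.Gamma_pos_of_pos hp0
    have h2 := Real.Gamma_pos_of_pos (half_pos hp0)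
    have : 0 < 2 * Real.Gamma p / Real.Gamma (p / 2) := by positivity
    simpa [hc] using this
  have hct : c ≠ ⊤ := ENNReal.ofReal_ne_top
  have hLc : L / c ≠ ⊤ := ENNReal.div_ne_top hliminf.ne hc0
  have hG : ∀ (ε : ℝ) (ρ : EuclideanSpace ℝ (Fin n) → ℝ), IsMoll ε ρ →
      ∫⁻ x, ‖gradient (mollify ρ f') x‖ₑ ^ p ≤ L / c := by
    intro ε ρ hρ
    rw [ENNReal.le_div_iff_mul_le (Or.inl hc0) (Or.inl hct), mul_comm]
    refine (fatou_energy n hn hp _ ((hρ.contDiff_mollify hfl).differentiable (by simp))).trans ?_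
    refine liminf_le_liminf (Eventually.of_forall fun t => ?_)
    exact mul_le_mul_right (energy_mollify_le hρ hfm hfl hp (heatK_measurable n t)) _
  have hm : ∀ (ε : ℝ) (ρ : EuclideanSpace ℝ (Fin n) → ℝ), IsMoll ε ρ →
      MemLp (gradient (mollify ρ f')) (ENNReal.ofReal p) volume := by
    intro ε ρ hρ
    refine ⟨(continuous_gradient_mollify hρ hfl).aestronglyMeasurable, ?_⟩
    rw [eLpNorm_lt_top_iff_lintegral_rpow_enorm_lt_top hpn hpt, hpr]
    exact (hG ε ρ hρ).trans_lt hLc.lt_top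
  have hconv : ∀ u : EuclideanSpace ℝ (Fin n) → EuclideanSpace ℝ (Fin n), ∀ x,
      ENNReal.ofReal (‖u x‖ ^ p) = ‖u x‖ₑ ^ p := by
    intro u x
    rw [← ENNReal.ofReal_rpow_of_nonneg (norm_nonneg _) hp0.le, ofReal_norm]
  have hN : ∀ (ε : ℝ) (ρ : EuclideanSpace ℝ (Fin n) → ℝ), IsMoll ε ρ →
      ∫ x, ‖gradient (mollify ρ f') x‖ ^ p ≤ (L / c).toReal := by
    intro ε ρ hρ
    rw [integral_eq_lintegral_of_nonneg_ae (Eventually.of_forall fun x => by positivity)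
      (((continuous_gradient_mollify hρ hfl).norm.rpow_const
        fun _ => Or.inr hp0.le).aestronglyMeasurable)]
    simp_rw [hconv]
    exact ENNReal.toReal_mono hLc (hG ε ρ hρ)
  obtain ⟨ρ, hρ, g, hg, hgB⟩ := exists_cauchy hp hfl ENNReal.toReal_nonneg hm hN
  have hgi : Integrable (fun x => ‖g x‖ ^ p) := by
    have := (Lp.memLp g).integrable_norm_rpow hpn hpt
    rwa [hpr] at this
  refine ⟨g, hgi, ?_, ?_⟩
  · intro φ hφ hφc i
    have h := weak_grad hp hfm hfp hfl hm hρ hg hφ hφc (EuclideanSpace.single i 1)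
    have e1 : ∫ x, f x * fderiv ℝ φ x (EuclideanSpace.single i 1) =
        ∫ x, f' x * fderiv ℝ φ x (EuclideanSpace.single i 1) := by
      refine integral_congr_ae ?_
      filter_upwards [hff] with x hx
      rw [hx]
    rw [e1, h]
    simp [EuclideanSpace.inner_single_left]
  · rw [← ofReal_integral_eq_lintegral_ofReal hgi (Eventually.of_forall fun x => by positivity)]
    calc c * ENNReal.ofReal (∫ x, ‖g x‖ ^ p) ≤ c * (L / c) := by
          refine mul_le_mul_right ?_ _
          exact ENNReal.ofReal_le_of_le_toReal hgB
      _ = L := ENNReal.mul_div_cancel hc0 hct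
end

section
/- Let n ≥ 1 and let f ∈ L¹(ℝⁿ). Define the total variation Var(f) = sup { ∫_{ℝⁿ} f(x) div ζ(x) dx : ζ : ℝⁿ → ℝⁿ continuously differentiable with compact support and sup_{x} ‖ζ(x)‖ ≤ 1 }. Then Var(f) ≤ (√π / 2) · liminf_{t → 0⁺} t^{-1/2} ∫_{ℝⁿ} ∫_{ℝⁿ} p_t(x,y) |f(y) − f(x)| dy dx, the liminf being taken in [0,∞]. -/
open Real MeasureTheory Filter Topology

namespace TVHeat

lemma int_exp (n : ℕ) (b : ℝ) (hb : 0 < b) :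
    Integrable (fun z : EuclideanSpace ℝ (Fin n) => Real.exp (-b * ‖z‖ ^ 2)) := by
  by_contra h
  have h1 := GaussianFourier.integral_rexp_neg_mul_sq_norm (V := EuclideanSpace ℝ (Fin n)) hb
  rw [integral_undef h] at h1
  have : 0 < (π / b) ^ ((Module.finrank ℝ (EuclideanSpace ℝ (Fin n)) : ℝ) / 2) := by positivity
  linarith

lemma int_exp_mul (n : ℕ) (C : ℝ) (F : EuclideanSpace ℝ (Fin n) → ℝ)
    (hF : AEStronglyMeasurable F volume)
    (hb : ∀ z, |F z| ≤ C * (1 + ‖z‖ ^ 2)) :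
    Integrable (fun z : EuclideanSpace ℝ (Fin n) => Real.exp (-(1 / 4) * ‖z‖ ^ 2) * F z) := by
  have hm : AEStronglyMeasurable
      (fun z : EuclideanSpace ℝ (Fin n) => Real.exp (-(1 / 4) * ‖z‖ ^ 2)) volume := by
    apply Continuous.aestronglyMeasurable; fun_prop
  refine ((int_exp n (1 / 8) (by norm_num)).const_mul (8 * C)).mono' (hm.mul hF) ?_
  refine ae_of_all _ fun z => ?_
  have hC : 0 ≤ C := by
    have := (abs_nonneg _).trans (hb 0); simpa using this
  rw [norm_mul, Real.norm_eq_abs, Real.norm_eq_abs, abs_of_pos (Real.exp_pos _)]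
  have h1 : 1 + ‖z‖ ^ 2 ≤ 8 * Real.exp (1 / 8 * ‖z‖ ^ 2) := by
    have := Real.add_one_le_exp (1 / 8 * ‖z‖ ^ 2); nlinarith
  have h2 : Real.exp (-(1 / 4) * ‖z‖ ^ 2) * Real.exp (1 / 8 * ‖z‖ ^ 2)
      = Real.exp (-(1 / 8) * ‖z‖ ^ 2) := by
    rw [← Real.exp_add]; congr 1; ring
  calc _ ≤ Real.exp (-(1 / 4) * ‖z‖ ^ 2) * (C * (8 * Real.exp (1 / 8 * ‖z‖ ^ 2))) := by
        gcongr; exact (hb z).trans (by gcongr)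
    _ = 8 * C * Real.exp (-(1 / 8) * ‖z‖ ^ 2) := by rw [← h2]; ring

/-- total mass -/
lemma mass (n : ℕ) : ∫ z : EuclideanSpace ℝ (Fin n), Real.exp (-(1 / 4) * ‖z‖ ^ 2)
    = (4 * π) ^ ((n : ℝ) / 2) := by
  rw [GaussianFourier.integral_rexp_neg_mul_sq_norm (by norm_num)]
  simp; congr 1; ring

lemma moment (n : ℕ) (C : EuclideanSpace ℝ (Fin n) →L[ℝ] EuclideanSpace ℝ (Fin n)) :
    ∫ z : EuclideanSpace ℝ (Fin n), Real.exp (-(1 / 4) * ‖z‖ ^ 2) * inner ℝ (C z) z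
      = 2 * (4 * π) ^ ((n : ℝ) / 2) * ∑ i, C (EuclideanSpace.single i 1) i := by
  set g : EuclideanSpace ℝ (Fin n) → ℝ := fun z => Real.exp (-(1 / 4) * ‖z‖ ^ 2) with hg
  have hgd : ∀ z, HasFDerivAt g (g z • ((-(1 / 4) : ℝ) • (2 • (innerSL ℝ z)))) z := by
    intro z
    exact (((hasStrictFDerivAt_norm_sq z).hasFDerivAt).const_mul (-(1 / 4) : ℝ)).exp
  have hgi : Integrable g := int_exp n (1 / 4) (by norm_num)
  have hcoord : ∀ (z : EuclideanSpace ℝ (Fin n)) i, |z i| ≤ ‖z‖ := fun z i => by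
    simpa using PiLp.norm_apply_le z i
  have hCb : ∀ z i, |C z i| ≤ ‖C‖ * ‖z‖ := fun z i => (hcoord _ i).trans (C.le_opNorm z)
  have h1 : ∀ i, Integrable (fun z => g z * (C z i * z i)) := by
    intro i
    apply int_exp_mul n ‖C‖
    · apply Continuous.aestronglyMeasurable; fun_prop
    · intro z
      rw [abs_mul]
      calc _ ≤ (‖C‖ * ‖z‖) * ‖z‖ := by
            gcongr
            · exact hCb z i
            · exact hcoord z i
        _ ≤ _ := by nlinarith [norm_nonneg C]
  have h2 : ∀ i, Integrable (fun z => g z * C z i) := by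
    intro i
    apply int_exp_mul n ‖C‖
    · apply Continuous.aestronglyMeasurable; fun_prop
    · intro z
      refine (hCb z i).trans ?_
      gcongr
      nlinarith [sq_nonneg (‖z‖ - 1)]
  have key : ∀ i, ∫ z, g z * (C z i * z i)
      = 2 * (C (EuclideanSpace.single i 1) i * ∫ z, g z) := by
    intro i
    have hf : ∀ z : EuclideanSpace ℝ (Fin n), HasFDerivAt (fun z => C z i)
        ((EuclideanSpace.proj i : EuclideanSpace ℝ (Fin n) →L[ℝ] ℝ).comp C) z := fun z =>
      ((EuclideanSpace.proj i : EuclideanSpace ℝ (Fin n) →L[ℝ] ℝ).comp C).hasFDerivAt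
    have e1 : ∀ z, fderiv ℝ g z (EuclideanSpace.single i 1) = -(1 / 2) * (g z * z i) := by
      intro z
      rw [(hgd z).fderiv]
      simp [EuclideanSpace.inner_single_right]
      ring
    have e2 : ∀ z, fderiv ℝ (fun z => C z i) z (EuclideanSpace.single i 1)
        = C (EuclideanSpace.single i 1) i := by
      intro z
      rw [(hf z).fderiv]; simp
    have := integral_mul_fderiv_eq_neg_fderiv_mul_of_integrable (μ := volume)
      (f := fun z => C z i) (g := g) (v := EuclideanSpace.single i 1)
      (by simp only [e2]; exact hgi.const_mul _)
      (by
        simp only [e1]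
        refine ((h1 i).const_mul (-(1 / 2))).congr (ae_of_all _ fun z => ?_)
        simp only; ring)
      (by
        refine (h2 i).congr (ae_of_all _ fun z => ?_)
        simp only; ring)
      (fun z _ => (hf z).differentiableAt) (fun z _ => (hgd z).differentiableAt)
    simp only [e1, e2] at this
    rw [integral_const_mul] at this
    have e3 : ∫ z, C z i * (-(1 / 2) * (g z * z i)) = -(1 / 2) * ∫ z, g z * (C z i * z i) := by
      rw [← integral_const_mul]; congr 1; ext z; ring
    rw [e3] at this
    linarith
  have e4 : ∀ z, g z * inner ℝ (C z) z = ∑ i, g z * (C z i * z i) := by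
    intro z
    rw [PiLp.inner_apply, Finset.mul_sum]
    simp [mul_comm]
  rw [integral_congr_ae (ae_of_all _ e4), integral_finsetSum _ (fun i _ => h1 i)]
  simp only [key]
  rw [show ∫ z, g z = _ from mass n, Finset.mul_sum]
  congr 1; ext i; ring

lemma gauss (n : ℕ) (u : EuclideanSpace ℝ (Fin n)) (r : ℝ) (hr : 0 < r) (hru : r ^ 2 = 1 - ‖u‖ ^ 2)
    (A : EuclideanSpace ℝ (Fin n) →L[ℝ] EuclideanSpace ℝ (Fin n)) :
    ∫ z : EuclideanSpace ℝ (Fin n), Real.exp (-(1 / 4) * ‖z‖ ^ 2) *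
        (Real.exp (- (inner ℝ ((1 / (2 * r)) • u) z) ^ 2) * inner ℝ (A z) z)
      = 2 * (4 * π) ^ ((n : ℝ) / 2) * r *
        (∑ i, A (EuclideanSpace.single i 1) i - inner ℝ (A u) u) := by
  set κ : ℝ := 1 / (1 + r) with hκ
  have hκr : κ * (1 + r) = 1 := by rw [hκ]; field_simp
  have hκu : κ * ‖u‖ ^ 2 = 1 - r := by
    have : ‖u‖ ^ 2 = (1 + r) * (1 - r) := by linarith
    rw [this, ← mul_assoc, hκr, one_mul]
  set ℓ : EuclideanSpace ℝ (Fin n) →L[ℝ] ℝ := -κ • innerSL ℝ u with hℓ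
  set B : EuclideanSpace ℝ (Fin n) →L[ℝ] EuclideanSpace ℝ (Fin n) :=
    ContinuousLinearMap.id ℝ _ + ℓ.smulRight u with hB
  have hBv : ∀ v, B v = v - (κ * inner ℝ u v) • u := by
    intro v; simp [hB, hℓ, sub_eq_add_neg]
  have hdet : LinearMap.det (B : EuclideanSpace ℝ (Fin n) →ₗ[ℝ] EuclideanSpace ℝ (Fin n)) = r := by
    have : (B : EuclideanSpace ℝ (Fin n) →ₗ[ℝ] EuclideanSpace ℝ (Fin n))
        = LinearMap.transvection (ℓ : EuclideanSpace ℝ (Fin n) →ₗ[ℝ] ℝ) u := by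
      ext v; simp [hB, LinearMap.transvection]
    rw [this, LinearMap.transvection.det]
    simp [hℓ]
    linarith
  have hmap := Measure.map_linearMap_addHaar_eq_smul_addHaar
    (volume : Measure (EuclideanSpace ℝ (Fin n)))
    (f := (B : EuclideanSpace ℝ (Fin n) →ₗ[ℝ] EuclideanSpace ℝ (Fin n))) (by rw [hdet]; exact hr.ne')
  rw [hdet, abs_of_pos (by positivity)] at hmap
  set F : EuclideanSpace ℝ (Fin n) → ℝ := fun z => Real.exp (-(1 / 4) * ‖z‖ ^ 2) *
        (Real.exp (- (inner ℝ ((1 / (2 * r)) • u) z) ^ 2) * inner ℝ (A z) z) with hF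
  have hFc : Continuous F := by fun_prop
  have hcv : ∫ z, F z = r * ∫ v, F (B v) := by
    have h1 : ∫ v, F (B v) = ∫ z, F z ∂(Measure.map B volume) := by
      rw [integral_map (by fun_prop) hFc.aestronglyMeasurable]
    have h2 : Measure.map B (volume : Measure (EuclideanSpace ℝ (Fin n)))
      = ENNReal.ofReal r⁻¹ • volume := hmap
    rw [h1, h2, integral_smul_measure, ENNReal.toReal_ofReal (by positivity), smul_eq_mul,
      ← mul_assoc, mul_inv_cancel₀ hr.ne', one_mul]
  have hFB : ∀ v, F (B v) = Real.exp (-(1 / 4) * ‖v‖ ^ 2) *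
      inner ℝ (((ContinuousLinearMap.adjoint B).comp (A.comp B)) v) v := by
    intro v
    simp only [hF]
    rw [← mul_assoc, ← Real.exp_add]
    congr 1
    · congr 1
      have a1 : inner ℝ u (B v) = r * inner ℝ u v := by
        rw [hBv, inner_sub_right, inner_smul_right, real_inner_self_eq_norm_sq]
        linear_combination (-inner ℝ u v) * hκu
      have a2 : ‖B v‖ ^ 2 = ‖v‖ ^ 2 - (inner ℝ u v) ^ 2 := by
        rw [hBv, norm_sub_sq_real, inner_smul_right, norm_smul, mul_pow, Real.norm_eq_abs, sq_abs,
          real_inner_comm u v]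
        linear_combination (inner ℝ u v)^2 * κ * hκu - (inner ℝ u v)^2 * hκr
      rw [a2, real_inner_smul_left, a1]
      field_simp
      ring
    · rw [ContinuousLinearMap.comp_apply, ContinuousLinearMap.adjoint_inner_left,
        ContinuousLinearMap.comp_apply]
  rw [show (∫ z, F z) = _ from hcv]
  simp only [hFB]
  rw [moment]
  have e1 : ∀ i, ((ContinuousLinearMap.adjoint B).comp (A.comp B)) (EuclideanSpace.single i 1) i
      = A (EuclideanSpace.single i 1) i - κ * (u i * A u i)
        - κ * (inner ℝ (A (EuclideanSpace.single i (u i))) u)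
        + κ ^ 2 * (inner ℝ (A u) u) * (u i * u i) := by
    intro i
    have : ∀ y : EuclideanSpace ℝ (Fin n), y i = inner ℝ y (EuclideanSpace.single i 1) := by
      intro y; simp [EuclideanSpace.inner_single_right]
    have h3 : (EuclideanSpace.single i (u i) : EuclideanSpace ℝ (Fin n))
        = u i • EuclideanSpace.single i 1 := by
      ext j; simp
    have h4 : inner ℝ u (EuclideanSpace.single i 1 : EuclideanSpace ℝ (Fin n)) = u i := (this u).symm
    rw [this, ContinuousLinearMap.comp_apply, ContinuousLinearMap.adjoint_inner_left,
      ContinuousLinearMap.comp_apply, hBv, h4, h3, map_sub, map_smul, map_smul]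
    simp only [inner_sub_left, inner_sub_right, real_inner_smul_left, real_inner_smul_right, ← this]
    simp only [PiLp.sub_apply, PiLp.smul_apply, smul_eq_mul]
    ring
  have e2 : ∑ i, inner ℝ (A (EuclideanSpace.single i (u i))) u = inner ℝ (A u) u := by
    rw [← sum_inner, ← map_sum]
    congr 2
    ext j
    simp [Finset.sum_apply, Pi.single_apply]
  have e3 : ∑ i, u i * A u i = inner ℝ (A u) u := by
    rw [PiLp.inner_apply]; simp
  have e4 : ∑ i, u i * u i = ‖u‖ ^ 2 := by
    rw [← real_inner_self_eq_norm_sq, PiLp.inner_apply]; simp [sq]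
  simp only [e1]
  rw [Finset.sum_add_distrib, Finset.sum_sub_distrib, Finset.sum_sub_distrib, ← Finset.mul_sum,
    ← Finset.mul_sum, ← Finset.mul_sum, e2, e3, e4]
  linear_combination (2 * (4 * π) ^ ((n : ℝ) / 2) * r * inner ℝ (A u) u) * (κ * hκu - hκr)

/-- error function -/
noncomputable def erfn (s : ℝ) : ℝ := (2 / √π) * ∫ r in (0 : ℝ)..s, Real.exp (-r ^ 2)

lemma erfn_deriv (s : ℝ) : HasDerivAt erfn ((2 / √π) * Real.exp (-s ^ 2)) s := by
  have hc : Continuous fun r : ℝ => Real.exp (-r ^ 2) := by fun_prop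
  exact ((hc.integral_hasStrictDerivAt 0 s).hasDerivAt).const_mul _

lemma erfn_neg (s : ℝ) : erfn (-s) = - erfn s := by
  unfold erfn
  have := intervalIntegral.integral_comp_neg (a := 0) (b := s) (fun r : ℝ => Real.exp (-r ^ 2))
  simp only [neg_sq, neg_zero] at this
  rw [intervalIntegral.integral_symm, ← this]; ring

lemma erfn_abs_le (s : ℝ) : |erfn s| ≤ 1 := by
  have hpi : 0 < √π := by positivity
  have main : ∀ s : ℝ, 0 ≤ s → |erfn s| ≤ 1 := by
    intro s hs
    have hi : Integrable fun r : ℝ => Real.exp (-r ^ 2) := by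
      simpa using integrable_exp_neg_mul_sq (b := 1) one_pos
    have h1 : ∫ r in (0 : ℝ)..s, Real.exp (-r ^ 2) ≤ √π / 2 := by
      have h2 := integral_gaussian_Ioi 1
      simp only [neg_mul, one_mul, div_one] at h2
      rw [← h2, intervalIntegral.integral_of_le hs]
      refine setIntegral_mono_set hi.integrableOn (ae_of_all _ fun r => (Real.exp_pos _).le) ?_
      exact (Set.Ioc_subset_Ioi_self).eventuallyLE
    have h3 : 0 ≤ ∫ r in (0 : ℝ)..s, Real.exp (-r ^ 2) :=
      intervalIntegral.integral_nonneg hs fun r _ => (Real.exp_pos _).le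
    unfold erfn
    rw [abs_of_nonneg (by positivity)]
    calc _ ≤ (2 / √π) * (√π / 2) := by gcongr
      _ = 1 := by field_simp
  rcases le_total 0 s with h | h
  · exact main s h
  · have := main (-s) (by linarith)
    rwa [erfn_neg, abs_neg] at this

lemma erfn_cont : Continuous erfn :=
  continuous_iff_continuousAt.2 fun s => (erfn_deriv s).continuousAt

lemma erfn_lip (a b : ℝ) : |erfn a - erfn b| ≤ (2 / √π) * |a - b| := by
  have := Convex.norm_image_sub_le_of_norm_hasDerivWithin_le (f := erfn) (s := Set.univ)
    (C := 2 / √π) (x := b) (y := a)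
    (fun x _ => (erfn_deriv x).hasDerivWithinAt) (fun x _ => by
      rw [Real.norm_eq_abs, abs_of_nonneg (by positivity)]
      have : Real.exp (-x ^ 2) ≤ 1 := Real.exp_le_one_iff.2 (by nlinarith [sq_nonneg x])
      have h2 : 0 ≤ 2 / √π := by positivity
      nlinarith) convex_univ trivial trivial
  simpa using this

/-- limit -/
lemma limit (n : ℕ) (f : EuclideanSpace ℝ (Fin n) → ℝ) (hf : Integrable f)
    (w : EuclideanSpace ℝ (Fin n) → EuclideanSpace ℝ (Fin n)) (hw : ContDiff ℝ 1 w)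
    (hwc : HasCompactSupport w) :
    Tendsto (fun s : ℝ => ∫ p : EuclideanSpace ℝ (Fin n) × EuclideanSpace ℝ (Fin n),
        Real.exp (-(1 / 4) * ‖p.1‖ ^ 2) * f p.2 *
          ((erfn (inner ℝ (w p.2) p.1) - erfn (inner ℝ (w (p.2 - s • p.1)) p.1)) / s))
      (𝓝[>] 0)
      (𝓝 ((2 / √π) * ∫ x, f x * ∫ z, Real.exp (-(1 / 4) * ‖z‖ ^ 2) *
        (Real.exp (-(inner ℝ (w x) z) ^ 2) * inner ℝ (fderiv ℝ w x z) z))) := by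
  obtain ⟨K, hK⟩ := ContDiff.lipschitzWith_of_hasCompactSupport hwc hw (by simp)
  have hwcont := hw.continuous
  have hDc : Continuous (fderiv ℝ w) := hw.continuous_fderiv (by simp)
  have hbd : Integrable (fun p : EuclideanSpace ℝ (Fin n) × EuclideanSpace ℝ (Fin n) =>
      (Real.exp (-(1 / 4) * ‖p.1‖ ^ 2) * (‖p.1‖ ^ 2 * ((2 / √π) * K))) * f p.2) := by
    refine Integrable.mul_prod (f := fun z : EuclideanSpace ℝ (Fin n) =>
      Real.exp (-(1 / 4) * ‖z‖ ^ 2) * (‖z‖ ^ 2 * ((2 / √π) * K))) ?_ hf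
    apply int_exp_mul n ((2 / √π) * K)
    · apply Continuous.aestronglyMeasurable; fun_prop
    · intro z
      rw [abs_of_nonneg (by positivity)]
      nlinarith [show 0 ≤ (2 / √π) * (K : ℝ) by positivity]
  have hf2 : AEStronglyMeasurable
      (fun p : EuclideanSpace ℝ (Fin n) × EuclideanSpace ℝ (Fin n) => f p.2)
      (volume : Measure (EuclideanSpace ℝ (Fin n) × EuclideanSpace ℝ (Fin n))) :=
    hf.1.comp_snd
  set q : EuclideanSpace ℝ (Fin n) × EuclideanSpace ℝ (Fin n) → ℝ := fun p =>
    (2 / √π) * Real.exp (-(inner ℝ (w p.2) p.1) ^ 2) * inner ℝ (fderiv ℝ w p.2 p.1) p.1 with hq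
  have hqc : Continuous q := by
    have h1 : Continuous fun p : EuclideanSpace ℝ (Fin n) × EuclideanSpace ℝ (Fin n) =>
      fderiv ℝ w p.2 p.1 := (hDc.comp continuous_snd).clm_apply continuous_fst
    simp only [hq]
    fun_prop
  have hqb : ∀ p, |q p| ≤ ‖p.1‖ ^ 2 * ((2 / √π) * K) := by
    intro p
    have h1 : ‖fderiv ℝ w p.2‖ ≤ K := norm_fderiv_le_of_lipschitz ℝ hK
    have h2 : |inner ℝ (fderiv ℝ w p.2 p.1) p.1| ≤ K * ‖p.1‖ * ‖p.1‖ := by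
      refine (abs_real_inner_le_norm _ _).trans ?_
      gcongr
      exact ((fderiv ℝ w p.2).le_opNorm _).trans (by gcongr)
    have h3 : Real.exp (-(inner ℝ (w p.2) p.1) ^ 2) ≤ 1 :=
      Real.exp_le_one_iff.2 (by nlinarith [sq_nonneg (inner ℝ (w p.2) p.1)])
    simp only [hq]
    rw [abs_mul, abs_of_nonneg (by positivity)]
    calc _ ≤ (2 / √π * 1) * (K * ‖p.1‖ * ‖p.1‖) := by gcongr
      _ = _ := by ring
  have hval : (2 / √π) * ∫ x, f x * ∫ z, Real.exp (-(1 / 4) * ‖z‖ ^ 2) *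
        (Real.exp (-(inner ℝ (w x) z) ^ 2) * inner ℝ (fderiv ℝ w x z) z)
      = ∫ p : EuclideanSpace ℝ (Fin n) × EuclideanSpace ℝ (Fin n),
        Real.exp (-(1 / 4) * ‖p.1‖ ^ 2) * f p.2 * q p := by
    rw [Measure.volume_eq_prod, integral_prod_symm, ← integral_const_mul]
    · refine integral_congr_ae (ae_of_all _ fun x => ?_)
      simp only [hq]
      rw [← mul_assoc, ← integral_const_mul]
      refine integral_congr_ae (ae_of_all _ fun z => ?_)
      simp only; ring
    · rw [← Measure.volume_eq_prod]
      refine hbd.norm.mono' ?_ (ae_of_all _ fun p => ?_)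
      · refine AEStronglyMeasurable.mul (AEStronglyMeasurable.mul ?_ hf2) hqc.aestronglyMeasurable
        apply Continuous.aestronglyMeasurable; fun_prop
      · clear_value q
        rw [norm_mul, norm_mul, norm_mul, norm_mul, mul_right_comm, Real.norm_eq_abs (q p),
          Real.norm_of_nonneg (show 0 ≤ ‖p.1‖ ^ 2 * ((2 / √π) * (K : ℝ)) by positivity)]
        gcongr
        exact hqb p
  rw [hval]
  refine tendsto_integral_filter_of_dominated_convergence _ ?_ ?_ hbd.norm ?_
  · refine Eventually.of_forall fun s => ?_
    refine AEStronglyMeasurable.mul (AEStronglyMeasurable.mul ?_ hf2) ?_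
    · apply Continuous.aestronglyMeasurable; fun_prop
    · apply Continuous.aestronglyMeasurable
      have := erfn_cont
      fun_prop
  · filter_upwards [self_mem_nhdsWithin] with s hs
    have hs : 0 < s := hs
    refine ae_of_all _ fun p => ?_
    rw [norm_mul, norm_mul, norm_mul, norm_mul, mul_right_comm,
      Real.norm_of_nonneg (show 0 ≤ ‖p.1‖ ^ 2 * ((2 / √π) * (K : ℝ)) by positivity)]
    gcongr
    rw [norm_div, Real.norm_of_nonneg hs.le, div_le_iff₀ hs, Real.norm_eq_abs]
    refine (erfn_lip _ _).trans ?_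
    rw [← inner_sub_left]
    have h1 : ‖w p.2 - w (p.2 - s • p.1)‖ ≤ K * (s * ‖p.1‖) := by
      have := hK.dist_le_mul p.2 (p.2 - s • p.1)
      rw [dist_eq_norm, dist_eq_norm, sub_sub_cancel, norm_smul, Real.norm_of_nonneg hs.le] at this
      exact this
    calc _ ≤ 2 / √π * ((K * (s * ‖p.1‖)) * ‖p.1‖) := by
          gcongr
          exact (abs_real_inner_le_norm _ _).trans (by gcongr)
      _ = _ := by ring
  · refine ae_of_all _ fun p => ?_
    refine Tendsto.const_mul _ ?_
    have hd : HasDerivAt (fun s : ℝ => erfn (inner ℝ (w (p.2 - s • p.1)) p.1)) (-(q p)) 0 := by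
      have h1 : HasDerivAt (fun s : ℝ => p.2 - s • p.1) (-p.1) 0 := by
        simpa using ((hasDerivAt_id (0 : ℝ)).smul_const p.1).const_sub p.2
      have h2 : HasFDerivAt w (fderiv ℝ w p.2) (p.2 - (0 : ℝ) • p.1) := by
        rw [zero_smul, sub_zero]
        exact ((hw.differentiable (by simp)) p.2).hasFDerivAt
      have h3 := h2.comp_hasDerivAt (0 : ℝ) h1
      have h4 : HasDerivAt (fun s : ℝ => inner ℝ (w (p.2 - s • p.1)) p.1)
          (inner ℝ (fderiv ℝ w p.2 (-p.1)) p.1) 0 := by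
        simpa using h3.inner ℝ (hasDerivAt_const (0 : ℝ) p.1)
      have h5 := (erfn_deriv (inner ℝ (w (p.2 - (0 : ℝ) • p.1)) p.1)).comp (0 : ℝ) h4
      refine h5.congr_deriv ?_
      simp only [hq, zero_smul, sub_zero, map_neg, inner_neg_left]
      ring
    have := (hasDerivAt_iff_tendsto_slope_zero.1 hd).neg
    rw [neg_neg] at this
    refine (this.mono_left (nhdsWithin_mono _ (fun s hs => ne_of_gt hs))).congr fun s => ?_
    simp only [zero_add, zero_smul, sub_zero, smul_eq_mul]
    ring

/-- trace -/
lemma trace_id (n : ℕ) (u : EuclideanSpace ℝ (Fin n) → EuclideanSpace ℝ (Fin n))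
    (hu : ContDiff ℝ 1 u) (x : EuclideanSpace ℝ (Fin n)) (hx : ‖u x‖ < 1) :
    √(1 - ‖u x‖ ^ 2) * (∑ i, fderiv ℝ (fun y => (1 / (2 * √(1 - ‖u y‖ ^ 2))) • u y) x
        (EuclideanSpace.single i 1) i
      - inner ℝ (fderiv ℝ (fun y => (1 / (2 * √(1 - ‖u y‖ ^ 2))) • u y) x (u x)) (u x))
      = 1 / 2 * ∑ i, fderiv ℝ u x (EuclideanSpace.single i 1) i := by
  have hU : HasFDerivAt u (fderiv ℝ u x) x := (hu.differentiable (by simp) x).hasFDerivAt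
  set U := fderiv ℝ u x
  have hpos : 0 < 1 - ‖u x‖ ^ 2 := by nlinarith [norm_nonneg (u x)]
  set r := √(1 - ‖u x‖ ^ 2) with hr
  have hr0 : 0 < r := Real.sqrt_pos.2 hpos
  have hr2 : r ^ 2 = 1 - ‖u x‖ ^ 2 := Real.sq_sqrt hpos.le
  have hφ : HasDerivAt (fun q : ℝ => 1 / (2 * √(1 - q))) (1 / (4 * r ^ 3)) (‖u x‖ ^ 2) := by
    have h1 : HasDerivAt (fun q : ℝ => 1 - q) (-1) (‖u x‖ ^ 2) := by
      simpa using (hasDerivAt_id (‖u x‖ ^ 2)).const_sub 1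
    have h2 := ((h1.sqrt hpos.ne').const_mul 2).inv (by rw [← hr]; positivity)
    simp only [one_div]
    refine h2.congr_deriv ?_
    rw [← hr]
    field_simp
    ring
  have hc := hφ.comp_hasFDerivAt x hU.norm_sq
  have hw := hc.smul hU
  rw [show fderiv ℝ (fun y => (1 / (2 * √(1 - ‖u y‖ ^ 2))) • u y) x = _ from hw.fderiv]
  have e1 : ∑ i, (inner ℝ (u x) (U (EuclideanSpace.single i 1))) * u x i
      = inner ℝ (u x) (U (u x)) := by
    have : u x = ∑ i, u x i • (EuclideanSpace.single i (1 : ℝ)) := by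
      ext j; simp [Finset.sum_apply, Pi.single_apply]
    conv_rhs => rw [this, map_sum, ← this, inner_sum]
    refine Finset.sum_congr rfl fun i _ => ?_
    rw [map_smul, real_inner_smul_right, mul_comm]
  have e2 : ∀ v, (((fun q : ℝ => 1 / (2 * √(1 - q))) ∘ fun y => ‖u y‖ ^ 2) x • U +
      ((1 / (4 * r ^ 3)) • (2 • (innerSL ℝ (u x)).comp U)).smulRight (u x)) v
      = (1 / (2 * r)) • U v + (1 / (2 * r ^ 3) * inner ℝ (u x) (U v)) • u x := by
    intro v
    simp [← hr]
    congr 1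
    field_simp; norm_num
  simp only [e2]
  simp only [PiLp.add_apply, PiLp.smul_apply, smul_eq_mul, inner_add_left, real_inner_smul_left,
    Finset.sum_add_distrib, ← Finset.mul_sum, mul_assoc, e1, real_inner_self_eq_norm_sq]
  rw [real_inner_comm (u x) (U (u x)), show ‖u x‖ ^ 2 = 1 - r ^ 2 by linarith]
  field_simp
  ring

lemma rhs_eq (n : ℕ) (f : EuclideanSpace ℝ (Fin n) → ℝ) (hf : Measurable f) (s : ℝ) (hs : 0 < s) :
    ∫⁻ x : EuclideanSpace ℝ (Fin n), ∫⁻ y, ENNReal.ofReal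
        ((4 * π * s ^ 2) ^ (-(n : ℝ) / 2) * Real.exp (-‖x - y‖ ^ 2 / (4 * s ^ 2)) * |f y - f x|)
      = ∫⁻ p : EuclideanSpace ℝ (Fin n) × EuclideanSpace ℝ (Fin n), ENNReal.ofReal
        ((4 * π) ^ (-(n : ℝ) / 2) *
          (Real.exp (-(1 / 4) * ‖p.1‖ ^ 2) * |f (p.2 + s • p.1) - f p.2|)) := by
  rw [Measure.volume_eq_prod, lintegral_prod_symm]
  swap
  · apply Measurable.aemeasurable; fun_prop
  refine lintegral_congr fun x => ?_
  set G : EuclideanSpace ℝ (Fin n) → ENNReal := fun y => ENNReal.ofReal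
        ((4 * π * s ^ 2) ^ (-(n : ℝ) / 2) * Real.exp (-‖x - y‖ ^ 2 / (4 * s ^ 2)) * |f y - f x|)
    with hG
  have hGm : Measurable G := by fun_prop
  have h1 : ∫⁻ y, G y = ∫⁻ y, G (x + y) := (lintegral_add_left_eq_self G x).symm
  have h2 : ∫⁻ z, G (x + s • z) = ENNReal.ofReal ((s ^ n)⁻¹) * ∫⁻ y, G (x + y) := by
    have hm := Measure.map_addHaar_smul (volume : Measure (EuclideanSpace ℝ (Fin n))) hs.ne'
    rw [← lintegral_map (f := fun y => G (x + y)) (g := fun z => s • z) (by fun_prop)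
      (by fun_prop)]
    rw [show Measure.map (fun z : EuclideanSpace ℝ (Fin n) => s • z) volume = _ from hm,
      lintegral_smul_measure, finrank_euclideanSpace_fin, abs_of_nonneg (by positivity),
      smul_eq_mul]
  have h3 : ∫⁻ y, G (x + y) = ENNReal.ofReal (s ^ n) * ∫⁻ z, G (x + s • z) := by
    rw [h2, ← mul_assoc, ← ENNReal.ofReal_mul (by positivity), mul_inv_cancel₀ (by positivity),
      ENNReal.ofReal_one, one_mul]
  rw [h1, h3, ← lintegral_const_mul _ (by fun_prop)]
  refine lintegral_congr fun z => ?_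
  simp only [hG]
  rw [← ENNReal.ofReal_mul (by positivity)]
  congr 1
  have e1 : s ^ n * (4 * π * s ^ 2) ^ (-(n : ℝ) / 2) = (4 * π) ^ (-(n : ℝ) / 2) := by
    rw [Real.mul_rpow (by positivity) (by positivity), ← Real.rpow_natCast s 2,
      ← Real.rpow_mul hs.le, ← Real.rpow_natCast s n, mul_left_comm, ← Real.rpow_add hs]
    have : (n : ℝ) + ((2 : ℕ) : ℝ) * (-(n : ℝ) / 2) = 0 := by push_cast; ring
    rw [this, Real.rpow_zero, mul_one]
  have e2 : -‖x - (x + s • z)‖ ^ 2 / (4 * s ^ 2) = -(1 / 4) * ‖z‖ ^ 2 := by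
    rw [sub_add_cancel_left, norm_neg, norm_smul, Real.norm_of_nonneg hs.le]
    field_simp
  rw [e2, ← e1]
  ring

lemma lower (n : ℕ) (f : EuclideanSpace ℝ (Fin n) → ℝ) (hf : Measurable f) (hfi : Integrable f)
    (w : EuclideanSpace ℝ (Fin n) → EuclideanSpace ℝ (Fin n)) (hw : Continuous w)
    (s : ℝ) (hs : 0 < s) :
    ENNReal.ofReal ((4 * π) ^ (-(n : ℝ) / 2) *
      ∫ p : EuclideanSpace ℝ (Fin n) × EuclideanSpace ℝ (Fin n),
        Real.exp (-(1 / 4) * ‖p.1‖ ^ 2) * f p.2 *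
          ((erfn (inner ℝ (w p.2) p.1) - erfn (inner ℝ (w (p.2 - s • p.1)) p.1)) / s))
    ≤ ENNReal.ofReal s⁻¹ *
      ∫⁻ p : EuclideanSpace ℝ (Fin n) × EuclideanSpace ℝ (Fin n), ENNReal.ofReal
        ((4 * π) ^ (-(n : ℝ) / 2) *
          (Real.exp (-(1 / 4) * ‖p.1‖ ^ 2) * |f (p.2 + s • p.1) - f p.2|)) := by
  have hec := erfn_cont
  have hem := erfn_cont.measurable
  have hwm := hw.measurable
  set c := (4 * π) ^ (-(n : ℝ) / 2) with hc
  have hc0 : 0 ≤ c := by positivity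
  have hT : MeasurePreserving
      (fun p : EuclideanSpace ℝ (Fin n) × EuclideanSpace ℝ (Fin n) => (p.1, p.2 + s • p.1)) := by
    refine MeasurePreserving.skew_product (f := fun z => z)
      (g := fun (z x : EuclideanSpace ℝ (Fin n)) => x + s • z)
      (MeasurePreserving.id _) ?_ (ae_of_all _ fun z => ?_)
    · exact Measurable.add measurable_snd (measurable_fst.const_smul s)
    · exact (measurePreserving_add_right volume (s • z)).map_eq
  have hbase : Integrable (fun p : EuclideanSpace ℝ (Fin n) × EuclideanSpace ℝ (Fin n) =>
      Real.exp (-(1 / 4) * ‖p.1‖ ^ 2) * f p.2) :=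
    Integrable.mul_prod (int_exp n (1 / 4) (by norm_num)) hfi
  have hbd : ∀ (b : EuclideanSpace ℝ (Fin n) × EuclideanSpace ℝ (Fin n) → ℝ), Measurable b →
      Integrable (fun p : EuclideanSpace ℝ (Fin n) × EuclideanSpace ℝ (Fin n) =>
      Real.exp (-(1 / 4) * ‖p.1‖ ^ 2) * f p.2 * erfn (b p)) := by
    intro b hb
    refine hbase.norm.mono' (Measurable.aestronglyMeasurable (by fun_prop))
      (ae_of_all _ fun p => ?_)
    rw [norm_mul]
    exact mul_le_of_le_one_right (norm_nonneg _) (erfn_abs_le _)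
  have i1 := hbd (fun p => inner ℝ (w p.2) p.1) (by fun_prop)
  have i2 := hbd (fun p => inner ℝ (w (p.2 - s • p.1)) p.1) (by fun_prop)
  have i3 : Integrable (fun p : EuclideanSpace ℝ (Fin n) × EuclideanSpace ℝ (Fin n) =>
      Real.exp (-(1 / 4) * ‖p.1‖ ^ 2) * f (p.2 + s • p.1) * erfn (inner ℝ (w p.2) p.1)) := by
    have := hT.integrable_comp_of_integrable i2
    simpa [Function.comp_def] using this
  have e2 : ∫ p : EuclideanSpace ℝ (Fin n) × EuclideanSpace ℝ (Fin n),
      Real.exp (-(1 / 4) * ‖p.1‖ ^ 2) * f p.2 * erfn (inner ℝ (w (p.2 - s • p.1)) p.1)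
      = ∫ p : EuclideanSpace ℝ (Fin n) × EuclideanSpace ℝ (Fin n),
      Real.exp (-(1 / 4) * ‖p.1‖ ^ 2) * f (p.2 + s • p.1) * erfn (inner ℝ (w p.2) p.1) := by
    conv_lhs => rw [← hT.map_eq]
    rw [integral_map hT.measurable.aemeasurable (by rw [hT.map_eq]; exact i2.1)]
    simp
  have e3 : c * ∫ p : EuclideanSpace ℝ (Fin n) × EuclideanSpace ℝ (Fin n),
        Real.exp (-(1 / 4) * ‖p.1‖ ^ 2) * f p.2 *
          ((erfn (inner ℝ (w p.2) p.1) - erfn (inner ℝ (w (p.2 - s • p.1)) p.1)) / s)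
      = s⁻¹ * ∫ p : EuclideanSpace ℝ (Fin n) × EuclideanSpace ℝ (Fin n),
        c * (Real.exp (-(1 / 4) * ‖p.1‖ ^ 2) * (f p.2 - f (p.2 + s • p.1)) *
          erfn (inner ℝ (w p.2) p.1)) := by
    rw [integral_const_mul, mul_left_comm]
    congr 1
    have a1 : ∫ p : EuclideanSpace ℝ (Fin n) × EuclideanSpace ℝ (Fin n),
        Real.exp (-(1 / 4) * ‖p.1‖ ^ 2) * (f p.2 - f (p.2 + s • p.1)) *
          erfn (inner ℝ (w p.2) p.1)
        = (∫ p : EuclideanSpace ℝ (Fin n) × EuclideanSpace ℝ (Fin n),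
        Real.exp (-(1 / 4) * ‖p.1‖ ^ 2) * f p.2 * erfn (inner ℝ (w p.2) p.1)) -
        ∫ p : EuclideanSpace ℝ (Fin n) × EuclideanSpace ℝ (Fin n),
        Real.exp (-(1 / 4) * ‖p.1‖ ^ 2) * f (p.2 + s • p.1) * erfn (inner ℝ (w p.2) p.1) := by
      rw [← integral_sub i1 i3]
      refine integral_congr_ae (ae_of_all _ fun p => ?_)
      simp only; ring
    rw [a1, ← e2, ← integral_sub i1 i2, ← integral_const_mul]
    refine integral_congr_ae (ae_of_all _ fun p => ?_)
    simp only; ring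
  rw [e3, ENNReal.ofReal_mul (by positivity)]
  gcongr
  refine (ENNReal.ofReal_le_ofReal (le_abs_self _)).trans ?_
  rw [← Real.norm_eq_abs, ofReal_norm]
  refine (enorm_integral_le_lintegral_enorm _).trans (lintegral_mono fun p => ?_)
  rw [← ofReal_norm]
  refine ENNReal.ofReal_le_ofReal ?_
  rw [norm_mul, norm_mul, norm_mul, Real.norm_of_nonneg hc0,
    Real.norm_of_nonneg (Real.exp_pos _).le, Real.norm_eq_abs, Real.norm_eq_abs, abs_sub_comm]
  refine mul_le_mul_of_nonneg_left ?_ hc0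
  exact mul_le_of_le_one_right (by positivity) (erfn_abs_le _)

lemma main_meas (n : ℕ) (f : EuclideanSpace ℝ (Fin n) → ℝ) (hf : Measurable f)
    (hfi : Integrable f) (ζ : EuclideanSpace ℝ (Fin n) → EuclideanSpace ℝ (Fin n))
    (h1 : ContDiff ℝ 1 ζ) (h2 : HasCompactSupport ζ) (h3 : ∀ x, ‖ζ x‖ ≤ 1)
    (ρ : ℝ) (hρ0 : 0 < ρ) (hρ1 : ρ < 1) :
    ENNReal.ofReal (ρ * ∫ x, f x *
        ∑ i : Fin n, fderiv ℝ (fun y => ζ y i) x (EuclideanSpace.single i 1))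
      ≤ ENNReal.ofReal (Real.sqrt π / 2) *
        Filter.liminf (fun t : ℝ =>
          ENNReal.ofReal (t ^ (-(1 / 2 : ℝ))) *
            ∫⁻ x, ∫⁻ y, ENNReal.ofReal
              ((4 * π * t) ^ (-(n : ℝ) / 2) * Real.exp (-‖x - y‖ ^ 2 / (4 * t)) *
                |f y - f x|)) (𝓝[>] (0 : ℝ)) := by
  set u : EuclideanSpace ℝ (Fin n) → EuclideanSpace ℝ (Fin n) := fun x => ρ • ζ x with hu
  have huc : ContDiff ℝ 1 u := h1.const_smul ρ
  have hun : ∀ x, ‖u x‖ < 1 := by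
    intro x
    simp only [hu]
    rw [norm_smul, Real.norm_of_nonneg hρ0.le]
    nlinarith [h3 x, norm_nonneg (ζ x)]
  have hpos : ∀ x, 0 < 1 - ‖u x‖ ^ 2 := fun x => by nlinarith [hun x, norm_nonneg (u x)]
  set w : EuclideanSpace ℝ (Fin n) → EuclideanSpace ℝ (Fin n) :=
    fun y => (1 / (2 * √(1 - ‖u y‖ ^ 2))) • u y with hw
  have hwd : ContDiff ℝ 1 w := by
    refine ContDiff.smul (ContDiff.div contDiff_const (contDiff_const.mul
      (ContDiff.sqrt (contDiff_const.sub (huc.norm_sq ℝ)) fun x => (hpos x).ne'))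
      fun x => ?_) huc
    have := Real.sqrt_pos.2 (hpos x)
    positivity
  have hwc : HasCompactSupport w := by
    refine h2.mono fun x hx => ?_
    simp only [Function.mem_support] at hx ⊢
    intro h0
    apply hx
    simp [hw, hu, h0]
  have hinner : ∀ x, ∫ z, Real.exp (-(1 / 4) * ‖z‖ ^ 2) *
        (Real.exp (-(inner ℝ (w x) z) ^ 2) * inner ℝ (fderiv ℝ w x z) z)
      = (4 * π) ^ ((n : ℝ) / 2) *
        (ρ * ∑ i : Fin n, fderiv ℝ (fun y => ζ y i) x (EuclideanSpace.single i 1)) := by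
    intro x
    rw [show w x = (1 / (2 * √(1 - ‖u x‖ ^ 2))) • u x from rfl,
      gauss n (u x) (√(1 - ‖u x‖ ^ 2)) (Real.sqrt_pos.2 (hpos x)) (Real.sq_sqrt (hpos x).le),
      mul_assoc, trace_id n u huc x (hun x)]
    have e1 : ∀ i : Fin n, fderiv ℝ (fun y => ζ y i) x (EuclideanSpace.single i 1)
        = fderiv ℝ ζ x (EuclideanSpace.single i 1) i := by
      intro i
      have hd := ((h1.differentiable (by simp)) x).hasFDerivAt
      have := ((EuclideanSpace.proj i : EuclideanSpace ℝ (Fin n) →L[ℝ] ℝ).hasFDerivAt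
        (x := ζ x)).comp x hd
      rw [show fderiv ℝ (fun y => ζ y i) x = _ from this.fderiv]
      simp
    have e2 : fderiv ℝ u x = ρ • fderiv ℝ ζ x :=
      (((h1.differentiable (by simp)) x).hasFDerivAt.const_smul ρ).fderiv
    simp only [e1, e2, ContinuousLinearMap.smul_apply, PiLp.smul_apply, smul_eq_mul,
      ← Finset.mul_sum]
    ring
  set I := ∫ x, f x *
        ∑ i : Fin n, fderiv ℝ (fun y => ζ y i) x (EuclideanSpace.single i 1) with hI
  have hlim := limit n f hfi w hwd hwc
  have hlimval : ∫ x, f x * ∫ z, Real.exp (-(1 / 4) * ‖z‖ ^ 2) *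
        (Real.exp (-(inner ℝ (w x) z) ^ 2) * inner ℝ (fderiv ℝ w x z) z)
      = (4 * π) ^ ((n : ℝ) / 2) * ρ * I := by
    rw [hI, ← integral_const_mul]
    refine integral_congr_ae (ae_of_all _ fun x => ?_)
    simp only [hinner]; ring
  rw [hlimval] at hlim
  have hsq : Tendsto (fun t : ℝ => √t) (𝓝[>] 0) (𝓝[>] 0) := by
    refine tendsto_nhdsWithin_iff.2 ⟨?_, ?_⟩
    · have := (Real.continuous_sqrt.tendsto 0).mono_left (nhdsWithin_le_nhds (s := Set.Ioi 0))
      simpa using this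
    · filter_upwards [self_mem_nhdsWithin] with t ht
      exact Real.sqrt_pos.2 ht
  have hlim2 := ENNReal.tendsto_ofReal
    ((hlim.comp hsq).const_mul ((4 * π) ^ (-(n : ℝ) / 2)))
  have hconst : (4 * π) ^ (-(n : ℝ) / 2) * (2 / √π * ((4 * π) ^ ((n : ℝ) / 2) * ρ * I))
      = 2 / √π * (ρ * I) := by
    have : (4 * π) ^ (-(n : ℝ) / 2) * (4 * π) ^ ((n : ℝ) / 2) = 1 := by
      rw [← Real.rpow_add (by positivity), neg_div, neg_add_cancel, Real.rpow_zero]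
    linear_combination (2 / √π * ρ * I) * this
  rw [hconst] at hlim2
  have hle : ENNReal.ofReal (2 / √π * (ρ * I)) ≤ Filter.liminf (fun t : ℝ =>
          ENNReal.ofReal (t ^ (-(1 / 2 : ℝ))) *
            ∫⁻ x, ∫⁻ y, ENNReal.ofReal
              ((4 * π * t) ^ (-(n : ℝ) / 2) * Real.exp (-‖x - y‖ ^ 2 / (4 * t)) *
                |f y - f x|)) (𝓝[>] (0 : ℝ)) := by
    rw [← hlim2.liminf_eq]
    refine liminf_le_liminf ?_
    filter_upwards [self_mem_nhdsWithin] with t ht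
    have ht : 0 < t := ht
    have hs : 0 < √t := Real.sqrt_pos.2 ht
    have hst : √t ^ 2 = t := Real.sq_sqrt ht.le
    have hl := lower n f hf hfi w hwd.continuous (√t) hs
    rw [← rhs_eq n f hf (√t) hs, hst] at hl
    have : t ^ (-(1 / 2 : ℝ)) = (√t)⁻¹ := by
      rw [Real.rpow_neg ht.le, Real.sqrt_eq_rpow]
    rw [this]
    exact hl
  calc ENNReal.ofReal (ρ * I)
      = ENNReal.ofReal (√π / 2) * ENNReal.ofReal (2 / √π * (ρ * I)) := by
        rw [← ENNReal.ofReal_mul (by positivity)]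
        congr 1
        have : √π ≠ 0 := by positivity
        field_simp
    _ ≤ _ := by gcongr

end TVHeat

theorem total_variation_heat_liminf_bound (n : ℕ) (hn : 1 ≤ n)
    (f : EuclideanSpace ℝ (Fin n) → ℝ) (hf : MemLp f 1 volume) :
    (⨆ ζ : {ζ : EuclideanSpace ℝ (Fin n) → EuclideanSpace ℝ (Fin n) //
        ContDiff ℝ 1 ζ ∧ HasCompactSupport ζ ∧ ∀ x, ‖ζ x‖ ≤ 1},
      ENNReal.ofReal (∫ x, f x *
        ∑ i : Fin n, fderiv ℝ (fun y => ζ.1 y i) x (EuclideanSpace.single i 1)))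
      ≤ ENNReal.ofReal (Real.sqrt π / 2) *
        Filter.liminf (fun t : ℝ =>
          ENNReal.ofReal (t ^ (-(1 / 2 : ℝ))) *
            ∫⁻ x, ∫⁻ y, ENNReal.ofReal
              ((4 * π * t) ^ (-(n : ℝ) / 2) * Real.exp (-‖x - y‖ ^ 2 / (4 * t)) *
                |f y - f x|)) (𝓝[>] (0 : ℝ)) := by
  refine iSup_le fun ⟨ζ, h1, h2, h3⟩ => ?_
  have hfi : Integrable f := memLp_one_iff_integrable.1 hf
  set g := hfi.1.mk f with hg
  have hgm : Measurable g := hfi.1.stronglyMeasurable_mk.measurable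
  have hfg : f =ᵐ[volume] g := hfi.1.ae_eq_mk
  have hgi : Integrable g := hfi.congr hfg
  have e1 : ∫ x, f x * ∑ i : Fin n, fderiv ℝ (fun y => ζ y i) x (EuclideanSpace.single i 1)
      = ∫ x, g x * ∑ i : Fin n, fderiv ℝ (fun y => ζ y i) x (EuclideanSpace.single i 1) := by
    refine integral_congr_ae ?_
    filter_upwards [hfg] with x hx
    rw [hx]
  have e2 : ∀ t : ℝ, ∫⁻ x, ∫⁻ y, ENNReal.ofReal
              ((4 * π * t) ^ (-(n : ℝ) / 2) * Real.exp (-‖x - y‖ ^ 2 / (4 * t)) *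
                |f y - f x|) = ∫⁻ x, ∫⁻ y, ENNReal.ofReal
              ((4 * π * t) ^ (-(n : ℝ) / 2) * Real.exp (-‖x - y‖ ^ 2 / (4 * t)) *
                |g y - g x|) := by
    intro t
    refine lintegral_congr_ae ?_
    filter_upwards [hfg] with x hx
    refine lintegral_congr_ae ?_
    filter_upwards [hfg] with y hy
    rw [hx, hy]
  simp only [e2]
  rw [e1]
  set I := ∫ x, g x * ∑ i : Fin n, fderiv ℝ (fun y => ζ y i) x (EuclideanSpace.single i 1) with hI
  have hT : Tendsto (fun ρ : ℝ => ENNReal.ofReal (ρ * I)) (𝓝[<] 1) (𝓝 (ENNReal.ofReal I)) := by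
    refine ENNReal.tendsto_ofReal ?_
    have : Tendsto (fun ρ : ℝ => ρ * I) (𝓝 1) (𝓝 (1 * I)) := tendsto_id.mul_const I
    rw [one_mul] at this
    exact this.mono_left nhdsWithin_le_nhds
  refine le_of_tendsto hT ?_
  filter_upwards [Ioo_mem_nhdsLT (show (0 : ℝ) < 1 by norm_num)] with ρ hρ
  exact TVHeat.main_meas n g hgm hgi ζ h1 h2 h3 ρ hρ.1 hρ.2
end

section
/- Let n ≥ 1, 1 ≤ p < ∞, and let f ∈ L^p(ℝⁿ). If limsup_{t → 0⁺} t^{-p/2} ∫_{ℝⁿ} ∫_{ℝⁿ} p_t(x,y) |f(y) − f(x)|^p dy dx < ∞ (limsup taken in [0,∞]), then for every 0 < s < 1 one has 𝒩_{s,p}(f)^p = ∫_0^∞ t^{-(sp/2+1)} ∫_{ℝⁿ} ∫_{ℝⁿ} p_t(x,y) |f(y) − f(x)|^p dy dx dt < ∞. -/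
open Real MeasureTheory Filter Topology

lemma besov_kernel_mass (n : ℕ) (t : ℝ) (ht : 0 < t) (x : EuclideanSpace ℝ (Fin n)) :
    ∫⁻ y : EuclideanSpace ℝ (Fin n), ENNReal.ofReal
      ((4 * π * t) ^ (-(n : ℝ) / 2) * Real.exp (-‖x - y‖ ^ 2 / (4 * t))) = 1 := by
  have hb : 0 < 1 / (4 * t) := by positivity
  have h1 := lintegral_sub_left_eq_self (μ := (volume : Measure (EuclideanSpace ℝ (Fin n))))
    (fun z => ENNReal.ofReal
      ((4 * π * t) ^ (-(n : ℝ) / 2) * Real.exp (-‖z‖ ^ 2 / (4 * t)))) x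
  rw [h1]
  have h2 := GaussianFourier.integral_rexp_neg_mul_sq_norm (V := EuclideanSpace ℝ (Fin n)) hb
  have h3 : ∀ z : EuclideanSpace ℝ (Fin n), -‖z‖ ^ 2 / (4 * t) = -(1 / (4 * t)) * ‖z‖ ^ 2 := by
    intro z; ring
  simp_rw [h3]
  have hi : Integrable (fun z : EuclideanSpace ℝ (Fin n) => rexp (-(1 / (4 * t)) * ‖z‖ ^ 2)) := by
    by_contra hc
    rw [integral_undef hc] at h2
    have : 0 < (π / (1 / (4 * t))) ^ ((Module.finrank ℝ (EuclideanSpace ℝ (Fin n)) : ℝ) / 2) := by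
      positivity
    linarith
  rw [← ofReal_integral_eq_lintegral_ofReal (hi.const_mul _)
    (Filter.Eventually.of_forall fun z => by positivity), integral_const_mul, h2]
  have h4 : π / (1 / (4 * t)) = 4 * π * t := by field_simp
  rw [h4, finrank_euclideanSpace_fin, ← Real.rpow_add (by positivity)]
  rw [show -(n : ℝ) / 2 + (n : ℝ) / 2 = 0 by ring]
  simp

lemma besov_abs_sub_rpow_le (p : ℝ) (hp : 1 ≤ p) (a b : ℝ) :
    |a - b| ^ p ≤ 2 ^ p * |b| ^ p + 2 ^ p * |a| ^ p := by
  have hm : |a - b| ≤ 2 * max |a| |b| := by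
    have := abs_sub a b
    have := le_max_left |a| |b|
    have := le_max_right |a| |b|
    linarith
  have h1 : |a - b| ^ p ≤ (2 * max |a| |b|) ^ p :=
    Real.rpow_le_rpow (abs_nonneg _) hm (by linarith)
  rw [Real.mul_rpow (by norm_num) (by positivity)] at h1
  have ha : 0 ≤ 2 ^ p * |a| ^ p := by positivity
  have hb : 0 ≤ 2 ^ p * |b| ^ p := by positivity
  rcases max_choice |a| |b| with h | h <;> rw [h] at h1 <;> linarith

lemma besov_tonelli {E : Type*} [MeasurableSpace E] (μ : Measure E) [SFinite μ]
    (K : E → E → ENNReal) (g : E → ENNReal) (hgm : AEMeasurable g μ)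
    (hKm : Measurable (Function.uncurry K))
    (hK1 : ∀ x, ∫⁻ y, K x y ∂μ = 1) (hK2 : ∀ y, ∫⁻ x, K x y ∂μ = 1) :
    ∫⁻ x, ∫⁻ y, (K x y * g x + K x y * g y) ∂μ ∂μ = (∫⁻ x, g x ∂μ) + ∫⁻ x, g x ∂μ := by
  have hKl : ∀ x, Measurable (K x) := fun x => hKm.comp measurable_prodMk_left
  have hKr : ∀ y, Measurable (fun x => K x y) := fun y => hKm.comp measurable_prodMk_right
  have e1 : ∀ x, ∫⁻ y, (K x y * g x + K x y * g y) ∂μ = g x + ∫⁻ y, K x y * g y ∂μ := by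
    intro x
    rw [lintegral_add_left ((hKl x).mul_const _), lintegral_mul_const _ (hKl x), hK1, one_mul]
  have e2 : ∀ y, ∫⁻ x, K x y * g y ∂μ = g y := by
    intro y
    rw [lintegral_mul_const _ (hKr y), hK2, one_mul]
  have hm : AEMeasurable (Function.uncurry fun x y => K x y * g y) (μ.prod μ) :=
    hKm.aemeasurable.mul hgm.comp_snd
  simp_rw [e1]
  rw [lintegral_add_left' hgm, lintegral_lintegral_swap hm]
  simp_rw [e2]

lemma besov_bound (n : ℕ) (p : ℝ) (hp : 1 ≤ p)
    (f : EuclideanSpace ℝ (Fin n) → ℝ) (hf : AEMeasurable f volume) (t : ℝ) (ht : 0 < t) :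
    (∫⁻ x, ∫⁻ y, ENNReal.ofReal
            ((4 * π * t) ^ (-(n : ℝ) / 2) * Real.exp (-‖x - y‖ ^ 2 / (4 * t)) *
              |f y - f x| ^ p)) ≤
      (∫⁻ x, ENNReal.ofReal (2 ^ p * |f x| ^ p)) + ∫⁻ x, ENNReal.ofReal (2 ^ p * |f x| ^ p) := by
  have hgm : AEMeasurable (fun x => ENNReal.ofReal (2 ^ p * |f x| ^ p)) volume := by
    have h0 : Measurable (fun u : ℝ => ENNReal.ofReal (2 ^ p * |u| ^ p)) := by fun_prop
    exact h0.comp_aemeasurable hf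
  have hKm : Measurable (Function.uncurry fun x y : EuclideanSpace ℝ (Fin n) =>
      ENNReal.ofReal ((4 * π * t) ^ (-(n : ℝ) / 2) * Real.exp (-‖x - y‖ ^ 2 / (4 * t)))) := by
    simp only [Function.uncurry_def]; fun_prop
  have hK2 : ∀ y : EuclideanSpace ℝ (Fin n), ∫⁻ x : EuclideanSpace ℝ (Fin n), ENNReal.ofReal
      ((4 * π * t) ^ (-(n : ℝ) / 2) * Real.exp (-‖x - y‖ ^ 2 / (4 * t))) = 1 := by
    intro y
    rw [← besov_kernel_mass n t ht y]
    refine lintegral_congr fun x => ?_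
    rw [norm_sub_rev]
  rw [← besov_tonelli volume _ _ hgm hKm (besov_kernel_mass n t ht) hK2]
  refine lintegral_mono fun x => lintegral_mono fun y => ?_
  have hc : 0 ≤ (4 * π * t) ^ (-(n : ℝ) / 2) * Real.exp (-‖x - y‖ ^ 2 / (4 * t)) := by
    positivity
  have hle := besov_abs_sub_rpow_le p hp (f y) (f x)
  have h1 : 0 ≤ 2 ^ p * |f x| ^ p := by positivity
  have h2 : 0 ≤ 2 ^ p * |f y| ^ p := by positivity
  generalize (4 * π * t) ^ (-(n : ℝ) / 2) * Real.exp (-‖x - y‖ ^ 2 / (4 * t)) = c at hc ⊢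
  rw [ENNReal.ofReal_mul hc, ← mul_add, ← ENNReal.ofReal_add h1 h2]
  exact mul_le_mul_right (ENNReal.ofReal_le_ofReal hle) _

theorem limsup_finite_implies_besov (n : ℕ) (hn : 1 ≤ n) (p : ℝ) (hp : 1 ≤ p)
    (f : EuclideanSpace ℝ (Fin n) → ℝ) (hf : MemLp f (ENNReal.ofReal p) volume)
    (hlimsup : Filter.limsup (fun t : ℝ =>
        ENNReal.ofReal (t ^ (-(p / 2))) *
          ∫⁻ x, ∫⁻ y, ENNReal.ofReal
            ((4 * π * t) ^ (-(n : ℝ) / 2) * Real.exp (-‖x - y‖ ^ 2 / (4 * t)) *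
              |f y - f x| ^ p)) (𝓝[>] (0 : ℝ)) < ⊤)
    (s : ℝ) (hs0 : 0 < s) (hs1 : s < 1) :
    (∫⁻ t in Set.Ioi (0 : ℝ),
        ENNReal.ofReal (t ^ (-(s * p / 2 + 1))) *
          ∫⁻ x, ∫⁻ y, ENNReal.ofReal
            ((4 * π * t) ^ (-(n : ℝ) / 2) * Real.exp (-‖x - y‖ ^ 2 / (4 * t)) *
              |f y - f x| ^ p)) < ⊤ := by
  have hB := besov_bound n p hp f hf.1.aemeasurable
  have hA : (∫⁻ x, ENNReal.ofReal (2 ^ p * |f x| ^ p)) < ⊤ := by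
    have h := hf.integrable_norm_rpow (by simp; linarith) ENNReal.ofReal_ne_top
    rw [ENNReal.toReal_ofReal (by linarith)] at h
    exact (h.const_mul (2 ^ p)).lintegral_lt_top
  set A := ∫⁻ x, ENNReal.ofReal (2 ^ p * |f x| ^ p)
  set I : ℝ → ENNReal := fun t => ∫⁻ x, ∫⁻ y, ENNReal.ofReal
            ((4 * π * t) ^ (-(n : ℝ) / 2) * Real.exp (-‖x - y‖ ^ 2 / (4 * t)) *
              |f y - f x| ^ p) with hI
  change Filter.limsup (fun t : ℝ => ENNReal.ofReal (t ^ (-(p / 2))) * I t) (𝓝[>] (0 : ℝ)) < ⊤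
    at hlimsup
  change (∫⁻ t in Set.Ioi (0 : ℝ), ENNReal.ofReal (t ^ (-(s * p / 2 + 1))) * I t) < ⊤
  have hB' : ∀ t, 0 < t → I t ≤ A + A := hB
  clear_value I A
  clear hB
  obtain ⟨C, hC1, hC2⟩ := exists_between hlimsup
  have hev := Filter.eventually_lt_of_limsup_lt hC1
  obtain ⟨δ, hδ, hδ'⟩ := (mem_nhdsGT_iff_exists_Ioc_subset).1 hev
  have hδ0 : 0 < δ := hδ
  rw [← Set.Ioc_union_Ioi_eq_Ioi hδ0.le]
  refine (lintegral_union_le _ _ _).trans_lt (ENNReal.add_lt_top.2 ⟨?_, ?_⟩)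
  · have hint : IntegrableOn (fun t : ℝ => t ^ (p / 2 - (s * p / 2 + 1))) (Set.Ioc 0 δ) := by
      rw [← intervalIntegrable_iff_integrableOn_Ioc_of_le hδ0.le]
      apply intervalIntegral.intervalIntegrable_rpow'
      nlinarith
    calc _ ≤ ∫⁻ t in Set.Ioc 0 δ, ENNReal.ofReal (t ^ (p / 2 - (s * p / 2 + 1))) * C := by
          refine setLIntegral_mono' measurableSet_Ioc fun t ht => ?_
          have h1 : ENNReal.ofReal (t ^ (-(p / 2))) * I t < C := hδ' ht
          have h2 : t ^ (-(s * p / 2 + 1)) =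
              t ^ (p / 2 - (s * p / 2 + 1)) * t ^ (-(p / 2)) := by
            rw [← Real.rpow_add ht.1]; congr 1; ring
          rw [h2, ENNReal.ofReal_mul (Real.rpow_nonneg ht.1.le _), mul_assoc]
          gcongr
      _ = (∫⁻ t in Set.Ioc 0 δ, ENNReal.ofReal (t ^ (p / 2 - (s * p / 2 + 1)))) * C :=
          lintegral_mul_const _ (by fun_prop)
      _ < ⊤ := ENNReal.mul_lt_top hint.lintegral_lt_top hC2
  · have hint : IntegrableOn (fun t : ℝ => t ^ (-(s * p / 2 + 1))) (Set.Ioi δ) := by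
      apply integrableOn_Ioi_rpow_of_lt _ hδ0
      nlinarith
    calc _ ≤ ∫⁻ t in Set.Ioi δ, ENNReal.ofReal (t ^ (-(s * p / 2 + 1))) * (A + A) := by
          refine setLIntegral_mono' measurableSet_Ioi fun t ht => ?_
          gcongr
          exact hB' t (hδ0.trans ht)
      _ = (∫⁻ t in Set.Ioi δ, ENNReal.ofReal (t ^ (-(s * p / 2 + 1)))) * (A + A) :=
          lintegral_mul_const _ (by fun_prop)
      _ < ⊤ := ENNReal.mul_lt_top hint.lintegral_lt_top (ENNReal.add_lt_top.2 ⟨hA, hA⟩)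
end

section
/- Let n ≥ 1, 1 ≤ p < ∞, and 0 < s < 1. Then for every f ∈ L^p(ℝⁿ) one has the identity (in [0,∞]) 𝒩_{s,p}(f)^p = (2^{sp} Γ((n+sp)/2) / π^{n/2}) · ∫_{ℝⁿ} ∫_{ℝⁿ} |f(x) − f(y)|^p / ‖x−y‖^{n+sp} dy dx. -/
open Real MeasureTheory Filter Topology

/-- The Gamma integral after inversion of the variable. -/
lemma besov_gamma_inv (a b : ℝ) (ha : 0 < a) (hb : 0 < b) :
    ∫⁻ t in Set.Ioi (0 : ℝ), ENNReal.ofReal (t ^ (-a - 1) * Real.exp (-(b / t)))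
      = ENNReal.ofReal ((1 / b) ^ a * Real.Gamma a) := by
  have hint : IntegrableOn (fun u : ℝ => u ^ (a - 1) * Real.exp (-(b * u))) (Set.Ioi 0) := by
    have := integrableOn_rpow_mul_exp_neg_mul_rpow (p := 1) (s := a - 1) (b := b)
      (by linarith) one_pos hb
    simpa using this
  have key : ∀ t ∈ Set.Ioi (0 : ℝ),
      (|(-1 : ℝ)| * t ^ ((-1 : ℝ) - 1)) • ((t ^ (-1 : ℝ)) ^ (a - 1) *
        Real.exp (-(b * t ^ (-1 : ℝ)))) = t ^ (-a - 1) * Real.exp (-(b / t)) := by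
    intro t ht
    have ht : 0 < t := ht
    rw [← Real.rpow_mul ht.le, smul_eq_mul, ← mul_assoc, abs_neg, abs_one, one_mul,
      ← Real.rpow_add ht, Real.rpow_neg_one, div_eq_mul_inv]
    congr 2
    ring
  have h1 := (integrableOn_Ioi_comp_rpow_iff
    (fun u : ℝ => u ^ (a - 1) * Real.exp (-(b * u))) (p := -1) (by norm_num)).mpr hint
  have h2 := integral_comp_rpow_Ioi
    (fun u : ℝ => u ^ (a - 1) * Real.exp (-(b * u))) (p := -1) (by norm_num)
  rw [setIntegral_congr_fun measurableSet_Ioi key,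
    Real.integral_rpow_mul_exp_neg_mul_Ioi ha hb] at h2
  have h1' := h1.congr_fun key measurableSet_Ioi
  rw [← h2, ofReal_integral_eq_lintegral_ofReal h1']
  refine (ae_restrict_iff' measurableSet_Ioi).mpr (Eventually.of_forall fun t ht => ?_)
  have ht : 0 < t := ht
  show 0 ≤ t ^ (-a - 1) * Real.exp (-(b / t))
  positivity

/-- The time integral of the heat kernel. -/
lemma besov_time (n : ℕ) (p s r : ℝ) (hp : 1 ≤ p) (hs0 : 0 < s) (hr : 0 < r) :
    ∫⁻ t in Set.Ioi (0 : ℝ), ENNReal.ofReal (t ^ (-(s * p / 2 + 1))) * ENNReal.ofReal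
        ((4 * π * t) ^ (-(n : ℝ) / 2) * Real.exp (-r ^ 2 / (4 * t)))
      = ENNReal.ofReal (2 ^ (s * p) * Real.Gamma (((n : ℝ) + s * p) / 2) / π ^ ((n : ℝ) / 2)) *
        ENNReal.ofReal (1 / r ^ ((n : ℝ) + s * p)) := by
  have hsp : 0 < s * p := by positivity
  have ha : 0 < ((n : ℝ) + s * p) / 2 := by positivity
  have hG := Real.Gamma_pos_of_pos ha
  have hb : 0 < r ^ 2 / 4 := by positivity
  have key : ∀ t ∈ Set.Ioi (0 : ℝ),
      ENNReal.ofReal (t ^ (-(s * p / 2 + 1))) * ENNReal.ofReal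
        ((4 * π * t) ^ (-(n : ℝ) / 2) * Real.exp (-r ^ 2 / (4 * t))) =
      ENNReal.ofReal ((4 * π) ^ (-(n : ℝ) / 2)) * ENNReal.ofReal
        (t ^ (-(((n : ℝ) + s * p) / 2) - 1) * Real.exp (-(r ^ 2 / 4 / t))) := by
    intro t ht
    have ht : 0 < t := ht
    rw [← ENNReal.ofReal_mul (by positivity), ← ENNReal.ofReal_mul (by positivity),
      Real.mul_rpow (by positivity) ht.le]
    have e1 : t ^ (-(((n : ℝ) + s * p) / 2) - 1) = t ^ (-(s * p / 2 + 1)) * t ^ (-(n : ℝ) / 2) := by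
      rw [← Real.rpow_add ht]; congr 1; ring
    have e2 : -r ^ 2 / (4 * t) = -(r ^ 2 / 4 / t) := by field_simp
    rw [e1, e2]; congr 1; ring
  rw [setLIntegral_congr_fun measurableSet_Ioi key,
    lintegral_const_mul' _ _ ENNReal.ofReal_ne_top, besov_gamma_inv _ _ ha hb,
    ← ENNReal.ofReal_mul (by positivity), ← ENNReal.ofReal_mul (by positivity)]
  congr 1
  have e1 : (1 / (r ^ 2 / 4)) ^ (((n : ℝ) + s * p) / 2)
      = 2 ^ (n : ℝ) * 2 ^ (s * p) / r ^ ((n : ℝ) + s * p) := by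
    have : (1 / (r ^ 2 / 4)) = (2 / r) ^ (2 : ℝ) := by
      rw [Real.rpow_two]; field_simp; norm_num
    rw [this, ← Real.rpow_mul (by positivity), ← Real.rpow_add two_pos,
      ← Real.div_rpow two_pos.le hr.le]
    congr 1; ring
  have e2 : (4 * π) ^ (-(n : ℝ) / 2) = 1 / (2 ^ (n : ℝ) * π ^ ((n : ℝ) / 2)) := by
    have h4 : (4 : ℝ) = 2 ^ (2 : ℝ) := by norm_num
    rw [neg_div, Real.rpow_neg (by positivity), Real.mul_rpow (by norm_num) pi_pos.le, h4,
      ← Real.rpow_mul two_pos.le, one_div]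
    congr 4; ring
  rw [e1, e2]
  have : (0 : ℝ) < 2 ^ (n : ℝ) := by positivity
  field_simp

/-- The identity for measurable functions. -/
lemma besov_measurable (n : ℕ) (p : ℝ) (hp : 1 ≤ p)
    (s : ℝ) (hs0 : 0 < s)
    (f : EuclideanSpace ℝ (Fin n) → ℝ) (hf : Measurable f) :
    (∫⁻ t in Set.Ioi (0 : ℝ),
        ENNReal.ofReal (t ^ (-(s * p / 2 + 1))) *
          ∫⁻ x, ∫⁻ y, ENNReal.ofReal
            ((4 * π * t) ^ (-(n : ℝ) / 2) * Real.exp (-‖x - y‖ ^ 2 / (4 * t)) *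
              |f y - f x| ^ p))
      = ENNReal.ofReal (2 ^ (s * p) * Real.Gamma (((n : ℝ) + s * p) / 2) / π ^ ((n : ℝ) / 2)) *
          ∫⁻ x, ∫⁻ y, ENNReal.ofReal (|f x - f y| ^ p / ‖x - y‖ ^ ((n : ℝ) + s * p)) := by
  have hp0 : p ≠ 0 := by linarith
  have hm : Measurable (fun q : (ℝ × EuclideanSpace ℝ (Fin n)) × EuclideanSpace ℝ (Fin n) =>
      ENNReal.ofReal (q.1.1 ^ (-(s * p / 2 + 1))) * ENNReal.ofReal
            ((4 * π * q.1.1) ^ (-(n : ℝ) / 2) * Real.exp (-‖q.1.2 - q.2‖ ^ 2 / (4 * q.1.1)) *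
              |f q.2 - f q.1.2| ^ p)) := by
    have h1 : Measurable (fun q : (ℝ × EuclideanSpace ℝ (Fin n)) × EuclideanSpace ℝ (Fin n) =>
      |f q.2 - f q.1.2|) := by
      have := (hf.comp measurable_snd : Measurable
        (fun q : (ℝ × EuclideanSpace ℝ (Fin n)) × EuclideanSpace ℝ (Fin n) => f q.2)).sub
        (hf.comp (measurable_snd.comp measurable_fst))
      exact this.norm
    fun_prop
  have step1 : ∀ t : ℝ, ENNReal.ofReal (t ^ (-(s * p / 2 + 1))) *
          ∫⁻ x, ∫⁻ y, ENNReal.ofReal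
            ((4 * π * t) ^ (-(n : ℝ) / 2) * Real.exp (-‖x - y‖ ^ 2 / (4 * t)) *
              |f y - f x| ^ p) = ∫⁻ x, ∫⁻ y, ENNReal.ofReal (t ^ (-(s * p / 2 + 1))) *
              ENNReal.ofReal
            ((4 * π * t) ^ (-(n : ℝ) / 2) * Real.exp (-‖x - y‖ ^ 2 / (4 * t)) *
              |f y - f x| ^ p) := by
    intro t
    rw [← lintegral_const_mul' _ _ ENNReal.ofReal_ne_top]
    refine lintegral_congr fun x => ?_
    rw [← lintegral_const_mul' _ _ ENNReal.ofReal_ne_top]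
  simp_rw [step1]
  rw [lintegral_lintegral_swap (Measurable.lintegral_prod_right' hm).aemeasurable,
    ← lintegral_const_mul' _ _ ENNReal.ofReal_ne_top]
  refine lintegral_congr fun x => ?_
  rw [lintegral_lintegral_swap, ← lintegral_const_mul' _ _ ENNReal.ofReal_ne_top]
  swap
  · exact (hm.comp (f := fun q : ℝ × EuclideanSpace ℝ (Fin n) => ((q.1, x), q.2))
      (by fun_prop)).aemeasurable
  refine lintegral_congr fun y => ?_
  by_cases hxy : x = y
  · subst hxy
    simp [Real.zero_rpow hp0]
  have hr : 0 < ‖x - y‖ := norm_pos_iff.mpr (sub_ne_zero.mpr hxy)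
  have hA : 0 ≤ |f x - f y| ^ p := by positivity
  rw [abs_sub_comm (f y) (f x), div_eq_mul_one_div (|f x - f y| ^ p),
    mul_comm (|f x - f y| ^ p) (1 / _),
    ENNReal.ofReal_mul (by positivity), ← mul_assoc, ← besov_time n p s _ hp hs0 hr,
    ← lintegral_mul_const' _ _ ENNReal.ofReal_ne_top]
  refine lintegral_congr fun t => ?_
  rw [ENNReal.ofReal_mul' hA]
  exact (mul_assoc _ _ _).symm

theorem besov_equals_gagliardo (n : ℕ) (hn : 1 ≤ n) (p : ℝ) (hp : 1 ≤ p)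
    (s : ℝ) (hs0 : 0 < s) (hs1 : s < 1)
    (f : EuclideanSpace ℝ (Fin n) → ℝ) (hf : MemLp f (ENNReal.ofReal p) volume) :
    (∫⁻ t in Set.Ioi (0 : ℝ),
        ENNReal.ofReal (t ^ (-(s * p / 2 + 1))) *
          ∫⁻ x, ∫⁻ y, ENNReal.ofReal
            ((4 * π * t) ^ (-(n : ℝ) / 2) * Real.exp (-‖x - y‖ ^ 2 / (4 * t)) *
              |f y - f x| ^ p))
      = ENNReal.ofReal (2 ^ (s * p) * Real.Gamma (((n : ℝ) + s * p) / 2) / π ^ ((n : ℝ) / 2)) *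
          ∫⁻ x, ∫⁻ y, ENNReal.ofReal (|f x - f y| ^ p / ‖x - y‖ ^ ((n : ℝ) + s * p)) := by
  obtain ⟨g, hg, hfg⟩ := hf.aestronglyMeasurable.aemeasurable
  have key := besov_measurable n p hp s hs0 g hg
  have hswap : ∀ F : EuclideanSpace ℝ (Fin n) → EuclideanSpace ℝ (Fin n) → ℝ → ℝ → ENNReal,
      ∫⁻ x, ∫⁻ y, F x y (f x) (f y) = ∫⁻ x, ∫⁻ y, F x y (g x) (g y) := by
    intro F
    refine lintegral_congr_ae ?_
    filter_upwards [hfg] with x hx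
    refine lintegral_congr_ae ?_
    filter_upwards [hfg] with y hy
    rw [hx, hy]
  rw [hswap fun x y a b => ENNReal.ofReal (|a - b| ^ p / ‖x - y‖ ^ ((n : ℝ) + s * p)), ← key]
  refine lintegral_congr fun t => ?_
  rw [hswap fun x y a b => ENNReal.ofReal
            ((4 * π * t) ^ (-(n : ℝ) / 2) * Real.exp (-‖x - y‖ ^ 2 / (4 * t)) *
              |b - a| ^ p)]
end

section
/- Let n ≥ 1, 1 ≤ p < ∞, and let f ∈ L^p(ℝⁿ). Writing Φ(t) = t^{-p/2} ∫_{ℝⁿ} ∫_{ℝⁿ} p_t(x,y) |f(y) − f(x)|^p dy dx, one has the chain of inequalities in [0,∞]: (2/p) · liminf_{t → 0⁺} Φ(t) ≤ liminf_{s → 1⁻} (1−s) 𝒩_{s,p}(f)^p ≤ limsup_{s → 1⁻} (1−s) 𝒩_{s,p}(f)^p ≤ (2/p) · limsup_{t → 0⁺} Φ(t). -/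
open Real MeasureTheory Filter Topology
open scoped ENNReal

lemma besov_aux_I1 {a δ : ℝ} (ha : 0 < a) (hδ : 0 < δ) :
    ∫⁻ t in Set.Ioc (0 : ℝ) δ, ENNReal.ofReal (t ^ (a - 1)) = ENNReal.ofReal (δ ^ a / a) := by
  have hint : IntervalIntegrable (fun t : ℝ => t ^ (a - 1)) volume 0 δ :=
    intervalIntegral.intervalIntegrable_rpow' (by linarith)
  rw [← ofReal_integral_eq_lintegral_ofReal]
  · rw [← intervalIntegral.integral_of_le hδ.le, integral_rpow (Or.inl (by linarith))]
    simp [Real.zero_rpow ha.ne']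
  · exact (intervalIntegrable_iff_integrableOn_Ioc_of_le hδ.le).1 hint
  · refine (ae_restrict_iff' measurableSet_Ioc).2 (Eventually.of_forall fun t ht => ?_)
    exact Real.rpow_nonneg ht.1.le _

lemma besov_aux_I2 {b δ : ℝ} (hb : 0 < b) (hδ : 0 < δ) :
    ∫⁻ t in Set.Ioi δ, ENNReal.ofReal (t ^ (-(b + 1))) = ENNReal.ofReal (δ ^ (-b) / b) := by
  rw [← ofReal_integral_eq_lintegral_ofReal]
  · rw [integral_Ioi_rpow_of_lt (by linarith) hδ]
    congr 1
    have : -(b + 1) + 1 = -b := by ring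
    rw [this, neg_div_neg_eq]
  · exact integrableOn_Ioi_rpow_of_lt (by linarith) hδ
  · refine (ae_restrict_iff' measurableSet_Ioi).2 (Eventually.of_forall fun t ht => ?_)
    exact Real.rpow_nonneg (hδ.trans ht).le _

lemma besov_aux_kernel (n : ℕ) {t : ℝ} (ht : 0 < t) :
    ∫⁻ v : EuclideanSpace ℝ (Fin n), ENNReal.ofReal
      ((4 * π * t) ^ (-(n : ℝ) / 2) * Real.exp (-‖v‖ ^ 2 / (4 * t))) = 1 := by
  have hb : 0 < 1 / (4 * t) := by positivity
  have h := GaussianFourier.integral_rexp_neg_mul_sq_norm (V := EuclideanSpace ℝ (Fin n)) hb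
  have hpos : 0 < 4 * π * t := by positivity
  have h1 : ∫ v : EuclideanSpace ℝ (Fin n),
      ((4 * π * t) ^ (-(n : ℝ) / 2) * Real.exp (-‖v‖ ^ 2 / (4 * t))) = 1 := by
    rw [integral_const_mul]
    have e : (fun v : EuclideanSpace ℝ (Fin n) => Real.exp (-‖v‖ ^ 2 / (4 * t))) =
        fun v => Real.exp (-(1 / (4 * t)) * ‖v‖ ^ 2) := by
      funext v; congr 1; ring
    rw [e, h]
    have e2 : π / (1 / (4 * t)) = 4 * π * t := by field_simp
    rw [e2, ← Real.rpow_add hpos]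
    simp [neg_div]
  rw [← ofReal_integral_eq_lintegral_ofReal, h1, ENNReal.ofReal_one]
  · exact Integrable.of_integral_ne_zero (by rw [h1]; exact one_ne_zero)
  · exact Eventually.of_forall fun v => by positivity

lemma besov_aux_bound (n : ℕ) (p : ℝ) (hp : 1 ≤ p)
    (f : EuclideanSpace ℝ (Fin n) → ℝ) (hf : MemLp f (ENNReal.ofReal p) volume) :
    ∃ C : ℝ≥0∞, C ≠ ⊤ ∧ ∀ t : ℝ, 0 < t → ∫⁻ x, ∫⁻ y, ENNReal.ofReal
          ((4 * π * t) ^ (-(n : ℝ) / 2) * Real.exp (-‖x - y‖ ^ 2 / (4 * t)) *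
            |f y - f x| ^ p) ≤ C := by
  have hp0 : 0 < p := by linarith
  set A : ℝ≥0∞ := ∫⁻ x, ENNReal.ofReal (|f x| ^ p) with hA
  have hAtop : A ≠ ⊤ := by
    have h := hf.integrable_norm_rpow (by simpa using hp0) ENNReal.ofReal_ne_top
    rw [ENNReal.toReal_ofReal hp0.le] at h
    exact h.lintegral_lt_top.ne
  refine ⟨ENNReal.ofReal (2 ^ (p - 1)) * (A + A), by finiteness, fun t ht => ?_⟩
  set K : EuclideanSpace ℝ (Fin n) → ℝ := fun v =>
    (4 * π * t) ^ (-(n : ℝ) / 2) * Real.exp (-‖v‖ ^ 2 / (4 * t)) with hK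
  have hK0 : ∀ v, 0 ≤ K v := fun v => by simp only [hK]; positivity
  have hKm : Measurable K := by fun_prop
  have hKint : ∫⁻ v, ENNReal.ofReal (K v) = 1 := besov_aux_kernel n ht
  have hfm : AEMeasurable (fun x => ENNReal.ofReal (|f x| ^ p)) volume := by
    have := hf.1.aemeasurable
    have h2 : AEMeasurable (fun x => |f x| ^ p) volume := (this.norm).pow_const p
    exact h2.ennreal_ofReal
  have hpt : ∀ x y, ENNReal.ofReal (K (x - y) * |f y - f x| ^ p) ≤
      ENNReal.ofReal (2 ^ (p - 1)) * (ENNReal.ofReal (K (x - y)) * ENNReal.ofReal (|f x| ^ p) +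
        ENNReal.ofReal (K (x - y)) * ENNReal.ofReal (|f y| ^ p)) := by
    intro x y
    have h1 : |f y - f x| ^ p ≤ 2 ^ (p - 1) * (|f x| ^ p + |f y| ^ p) := by
      have h3 : |f y - f x| ^ p ≤ (|f x| + |f y|) ^ p := by
        apply Real.rpow_le_rpow (abs_nonneg _) _ hp0.le
        rw [add_comm]; exact abs_sub _ _
      exact h3.trans (by exact_mod_cast
        NNReal.rpow_add_le_mul_rpow_add_rpow ⟨|f x|, abs_nonneg _⟩ ⟨|f y|, abs_nonneg _⟩ hp)
    have a1 : 0 ≤ |f x| ^ p := by positivity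
    have a2 : 0 ≤ |f y| ^ p := by positivity
    rw [← ENNReal.ofReal_mul (hK0 _), ← ENNReal.ofReal_mul (hK0 _),
      ← ENNReal.ofReal_add (mul_nonneg (hK0 _) a1) (mul_nonneg (hK0 _) a2),
      ← ENNReal.ofReal_mul (by positivity)]
    apply ENNReal.ofReal_le_ofReal
    calc _ ≤ K (x - y) * (2 ^ (p - 1) * (|f x| ^ p + |f y| ^ p)) :=
          mul_le_mul_of_nonneg_left h1 (hK0 _)
      _ = _ := by ring
  have hKl : ∀ x, ∫⁻ y, ENNReal.ofReal (K (x - y)) = 1 := fun x => by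
    rw [← hKint]; exact lintegral_sub_left_eq_self (fun v => ENNReal.ofReal (K v)) x
  have hKr : ∀ y, ∫⁻ x, ENNReal.ofReal (K (x - y)) = 1 := fun y => by
    rw [← hKint]; exact lintegral_sub_right_eq_self (fun v => ENNReal.ofReal (K v)) y
  have hT1 : ∫⁻ x, ∫⁻ y, ENNReal.ofReal (K (x - y)) * ENNReal.ofReal (|f x| ^ p) = A := by
    refine lintegral_congr fun x => ?_
    rw [lintegral_mul_const _ (by fun_prop), hKl, one_mul]
  have hT2 : ∫⁻ x, ∫⁻ y, ENNReal.ofReal (K (x - y)) * ENNReal.ofReal (|f y| ^ p) = A := by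
    rw [lintegral_lintegral_swap]
    · refine lintegral_congr fun y => ?_
      rw [lintegral_mul_const _ (by fun_prop), hKr, one_mul]
    · change AEMeasurable (fun z : EuclideanSpace ℝ (Fin n) × EuclideanSpace ℝ (Fin n) =>
        ENNReal.ofReal (K (z.1 - z.2)) * ENNReal.ofReal (|f z.2| ^ p)) _
      refine AEMeasurable.fun_mul ?_ ?_
      · exact Measurable.aemeasurable (by fun_prop)
      · exact hfm.comp_snd
  calc ∫⁻ x, ∫⁻ y, ENNReal.ofReal (K (x - y) * |f y - f x| ^ p)
      ≤ ∫⁻ x, ∫⁻ y, ENNReal.ofReal (2 ^ (p - 1)) *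
        (ENNReal.ofReal (K (x - y)) * ENNReal.ofReal (|f x| ^ p) +
        ENNReal.ofReal (K (x - y)) * ENNReal.ofReal (|f y| ^ p)) :=
        lintegral_mono fun x => lintegral_mono fun y => hpt x y
    _ = ENNReal.ofReal (2 ^ (p - 1)) * (A + A) := by
        have e : ∀ x, ∫⁻ y, ENNReal.ofReal (2 ^ (p - 1)) *
            (ENNReal.ofReal (K (x - y)) * ENNReal.ofReal (|f x| ^ p) +
            ENNReal.ofReal (K (x - y)) * ENNReal.ofReal (|f y| ^ p)) =
            ENNReal.ofReal (2 ^ (p - 1)) * (ENNReal.ofReal (|f x| ^ p) +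
            ∫⁻ y, ENNReal.ofReal (K (x - y)) * ENNReal.ofReal (|f y| ^ p)) := fun x => by
          rw [lintegral_const_mul' _ _ ENNReal.ofReal_ne_top,
            lintegral_add_left (by fun_prop), lintegral_mul_const _ (by fun_prop), hKl, one_mul]
        simp_rw [e]
        rw [lintegral_const_mul' _ _ ENNReal.ofReal_ne_top, lintegral_add_left' hfm, hT2]

lemma besov_aux_tendsto {p δ : ℝ} (hδ : 0 < δ) :
    Tendsto (fun s : ℝ => ENNReal.ofReal (2 / p * δ ^ ((1 - s) * p / 2))) (𝓝[<] (1 : ℝ))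
      (𝓝 (ENNReal.ofReal (2 / p))) := by
  have h : Continuous fun s : ℝ => 2 / p * δ ^ ((1 - s) * p / 2) := by
    refine continuous_const.mul (Continuous.rpow continuous_const (by fun_prop) ?_)
    exact fun _ => Or.inl hδ.ne'
  have h2 := (h.tendsto 1).mono_left (nhdsWithin_le_nhds (s := Set.Iio 1))
  simpa using ENNReal.tendsto_ofReal h2

lemma besov_aux_tendsto2 {p δ : ℝ} (hp : 0 < p) (hδ : 0 < δ) :
    Tendsto (fun s : ℝ => ENNReal.ofReal ((1 - s) * (δ ^ (-(s * p / 2)) / (s * p / 2))))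
      (𝓝[<] (1 : ℝ)) (𝓝 0) := by
  have h : ContinuousAt (fun s : ℝ => (1 - s) * (δ ^ (-(s * p / 2)) / (s * p / 2))) 1 := by
    refine ContinuousAt.mul (by fun_prop) (ContinuousAt.div ?_ (by fun_prop) (by positivity))
    exact ContinuousAt.rpow continuousAt_const (by fun_prop) (Or.inl hδ.ne')
  have h2 := (h.tendsto).mono_left (nhdsWithin_le_nhds (s := Set.Iio 1))
  simpa using ENNReal.tendsto_ofReal h2

lemma besov_aux_near {p δ s : ℝ} (hp : 0 < p) (hδ : 0 < δ) (hs : s < 1) (M : ℝ≥0∞)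
    (hM : M ≠ ⊤) :
    ENNReal.ofReal (1 - s) * ∫⁻ t in Set.Ioc (0 : ℝ) δ,
      M * ENNReal.ofReal (t ^ ((1 - s) * p / 2 - 1)) =
      M * ENNReal.ofReal (2 / p * δ ^ ((1 - s) * p / 2)) := by
  have h1 : 0 < 1 - s := by linarith
  rw [lintegral_const_mul' _ _ hM, besov_aux_I1 (by positivity) hδ, mul_left_comm,
    ← ENNReal.ofReal_mul h1.le]
  congr 2
  field_simp

lemma besov_aux_split {p s t : ℝ} (ht : 0 < t) (G : ℝ≥0∞) :
    ENNReal.ofReal (t ^ (-(s * p / 2 + 1))) * G =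
      (ENNReal.ofReal (t ^ (-(p / 2))) * G) * ENNReal.ofReal (t ^ ((1 - s) * p / 2 - 1)) := by
  rw [mul_right_comm, ← ENNReal.ofReal_mul (by positivity), ← Real.rpow_add ht]
  congr 3
  ring

theorem besov_heat_liminf_limsup_chain (n : ℕ) (hn : 1 ≤ n) (p : ℝ) (hp : 1 ≤ p)
    (f : EuclideanSpace ℝ (Fin n) → ℝ) (hf : MemLp f (ENNReal.ofReal p) volume)
    (Φ : ℝ → ℝ≥0∞)
    (hΦ : ∀ t : ℝ, Φ t = ENNReal.ofReal (t ^ (-(p / 2))) *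
        ∫⁻ x, ∫⁻ y, ENNReal.ofReal
          ((4 * π * t) ^ (-(n : ℝ) / 2) * Real.exp (-‖x - y‖ ^ 2 / (4 * t)) *
            |f y - f x| ^ p))
    (N : ℝ → ℝ≥0∞)
    (hN : ∀ s : ℝ, N s = ∫⁻ t in Set.Ioi (0 : ℝ),
        ENNReal.ofReal (t ^ (-(s * p / 2 + 1))) *
          ∫⁻ x, ∫⁻ y, ENNReal.ofReal
            ((4 * π * t) ^ (-(n : ℝ) / 2) * Real.exp (-‖x - y‖ ^ 2 / (4 * t)) *
              |f y - f x| ^ p)) :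
    ENNReal.ofReal (2 / p) * Filter.liminf Φ (𝓝[>] (0 : ℝ))
        ≤ Filter.liminf (fun s : ℝ => ENNReal.ofReal (1 - s) * N s) (𝓝[<] (1 : ℝ))
    ∧ Filter.liminf (fun s : ℝ => ENNReal.ofReal (1 - s) * N s) (𝓝[<] (1 : ℝ))
        ≤ Filter.limsup (fun s : ℝ => ENNReal.ofReal (1 - s) * N s) (𝓝[<] (1 : ℝ))
    ∧ Filter.limsup (fun s : ℝ => ENNReal.ofReal (1 - s) * N s) (𝓝[<] (1 : ℝ))
        ≤ ENNReal.ofReal (2 / p) * Filter.limsup Φ (𝓝[>] (0 : ℝ)) := by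
  have hp0 : 0 < p := by linarith
  have hc : 0 < ENNReal.ofReal (2 / p) := by
    rw [ENNReal.ofReal_pos]; positivity
  obtain ⟨C, hC, hG⟩ := besov_aux_bound n p hp f hf
  set G : ℝ → ℝ≥0∞ := fun t => ∫⁻ x, ∫⁻ y, ENNReal.ofReal
          ((4 * π * t) ^ (-(n : ℝ) / 2) * Real.exp (-‖x - y‖ ^ 2 / (4 * t)) *
            |f y - f x| ^ p) with hGdef
  have hΦ' : ∀ t, Φ t = ENNReal.ofReal (t ^ (-(p / 2))) * G t := hΦ
  have hN' : ∀ s, N s = ∫⁻ t in Set.Ioi (0 : ℝ),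
      ENNReal.ofReal (t ^ (-(s * p / 2 + 1))) * G t := hN
  have hG' : ∀ t, 0 < t → G t ≤ C := hG
  clear_value G
  refine ⟨?_, liminf_le_limsup, ?_⟩
  · refine ENNReal.mul_le_of_forall_lt fun a' ha' L hL => ?_
    refine (mul_le_mul_left ha'.le L).trans ?_
    have hev : ∀ᶠ t in 𝓝[>] (0 : ℝ), L < Φ t := eventually_lt_of_lt_liminf hL
    obtain ⟨δ, hδ, hsub⟩ := mem_nhdsGT_iff_exists_Ioc_subset.1 hev
    have hδ0 : 0 < δ := hδ
    have hLtop : L ≠ ⊤ := hL.ne_top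
    have hlim := ENNReal.Tendsto.const_mul (besov_aux_tendsto (p := p) hδ0) (a := L)
      (Or.inr hLtop)
    rw [mul_comm, ← hlim.liminf_eq]
    refine liminf_le_liminf ?_
    filter_upwards [self_mem_nhdsWithin] with s hs
    rw [← besov_aux_near hp0 hδ0 hs L hLtop, hN' s]
    refine mul_le_mul_right ?_ _
    calc _ ≤ ∫⁻ t in Set.Ioc (0 : ℝ) δ, ENNReal.ofReal (t ^ (-(s * p / 2 + 1))) * G t := by
          refine setLIntegral_mono' measurableSet_Ioc fun t ht => ?_
          rw [besov_aux_split ht.1, ← hΦ']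
          exact mul_le_mul_left (hsub ht).le _
      _ ≤ _ := lintegral_mono_set fun t ht => ht.1
  · refine ENNReal.le_mul_of_forall_lt (Or.inl hc.ne') (Or.inl ENNReal.ofReal_ne_top)
      fun a' ha' M hM => ?_
    refine le_trans ?_ (mul_le_mul_left (le_of_lt ha') M)
    by_cases hMtop : M = ⊤
    · rw [hMtop, ENNReal.mul_top hc.ne']; exact le_top
    have hev : ∀ᶠ t in 𝓝[>] (0 : ℝ), Φ t < M := eventually_lt_of_limsup_lt hM
    obtain ⟨δ, hδ, hsub⟩ := mem_nhdsGT_iff_exists_Ioc_subset.1 hev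
    have hδ0 : 0 < δ := hδ
    have hlim := (ENNReal.Tendsto.const_mul (besov_aux_tendsto (p := p) hδ0) (a := M)
      (Or.inr hMtop)).add (ENNReal.Tendsto.const_mul (besov_aux_tendsto2 hp0 hδ0) (a := C)
      (Or.inr hC))
    rw [mul_zero, add_zero] at hlim
    rw [mul_comm, ← hlim.limsup_eq]
    refine limsup_le_limsup ?_
    have hpos : ∀ᶠ s in 𝓝[<] (1 : ℝ), (0 : ℝ) < s :=
      nhdsWithin_le_nhds (lt_mem_nhds one_pos)
    filter_upwards [self_mem_nhdsWithin, hpos] with s hs hs0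
    have h1s : 0 ≤ 1 - s := by
      have : s < 1 := hs
      linarith
    rw [← besov_aux_near hp0 hδ0 hs M hMtop, hN' s, ENNReal.ofReal_mul h1s,
      ← besov_aux_I2 (by positivity) hδ0, mul_left_comm C, ← mul_add]
    refine mul_le_mul_right ?_ _
    rw [← Set.Ioc_union_Ioi_eq_Ioi hδ0.le,
      lintegral_union measurableSet_Ioi (Set.Ioc_disjoint_Ioi le_rfl)]
    refine add_le_add ?_ ?_
    · refine setLIntegral_mono' measurableSet_Ioc fun t ht => ?_
      rw [besov_aux_split ht.1, ← hΦ']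
      exact mul_le_mul_left (hsub ht).le _
    · rw [← lintegral_const_mul' _ _ hC]
      refine setLIntegral_mono' measurableSet_Ioi fun t ht => ?_
      rw [mul_comm]
      exact mul_le_mul_left (hG' t (hδ0.trans ht)) _
end

section
/- Let n ≥ 1, 1 ≤ p < ∞, and let f ∈ L^p(ℝⁿ) be such that 𝒩_{s₀,p}(f) < ∞ for some s₀ ∈ (0,1). Then lim_{s → 0⁺} s 𝒩_{s,p}(f)^p = (4/p) ‖f‖_{L^p}^p. -/
open Real MeasureTheory Filter Topology
open scoped ENNReal

/-- elementary inequality, ordered case -/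
lemma ms_aux_ineq (p : ℝ) (hp : 1 ≤ p) (ε : ℝ) (hε : 0 < ε) :
    ∃ C : ℝ, 0 ≤ C ∧ ∀ a b : ℝ, |b| ≤ |a| →
      |a - b| ^ p ≤ |a| ^ p + ε * |a| ^ p + C * |b| ^ p ∧
      |a| ^ p + |b| ^ p ≤ |a - b| ^ p + ε * |a| ^ p + C * |b| ^ p := by
  have hp0 : 0 < p := by linarith
  have h1 : ∀ᶠ δ : ℝ in 𝓝 0, (1 + δ) ^ p < 1 + ε := by
    have : ContinuousAt (fun δ : ℝ => (1 + δ) ^ p) 0 :=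
      ContinuousAt.rpow_const (by fun_prop) (Or.inr hp0.le)
    exact this.eventually_lt continuousAt_const (by simpa using hε)
  have h2 : ∀ᶠ δ : ℝ in 𝓝 0, 1 - ε < (1 - δ) ^ p := by
    have : ContinuousAt (fun δ : ℝ => (1 - δ) ^ p) 0 :=
      ContinuousAt.rpow_const (by fun_prop) (Or.inr hp0.le)
    exact continuousAt_const.eventually_lt this (by simpa using hε)
  have h3 : ∀ᶠ δ : ℝ in 𝓝 0, δ < 1 := eventually_lt_nhds one_pos
  have h4 : ∀ᶠ δ : ℝ in 𝓝[>] 0, 0 < δ := eventually_mem_nhdsWithin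
  obtain ⟨δ, ⟨⟨h1, h2⟩, h3⟩, h4⟩ :=
    ((((h1.and h2).and h3).filter_mono nhdsWithin_le_nhds).and h4).exists
  refine ⟨(2 / δ) ^ p + 1, by positivity, fun a b hab => ?_⟩
  have ha0 := abs_nonneg a
  have hb0 := abs_nonneg b
  have hau : |a - b| ≤ |a| + |b| := abs_sub a b
  have hal : |a| - |b| ≤ |a - b| := abs_sub_abs_le_abs_sub a b
  have hap : 0 ≤ |a| ^ p := by positivity
  have hbp : 0 ≤ |b| ^ p := by positivity
  have hCp : 0 ≤ (2 / δ) ^ p * |b| ^ p := by positivity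
  have habp : 0 ≤ |a - b| ^ p := by positivity
  have hεa : 0 ≤ ε * |a| ^ p := by positivity
  rcases le_or_gt |b| (δ * |a|) with h | h
  · constructor
    · have : |a - b| ^ p ≤ (1 + δ) ^ p * |a| ^ p := by
        rw [← mul_rpow (by linarith) ha0]
        exact rpow_le_rpow (abs_nonneg _) (by linarith) hp0.le
      have := mul_le_mul_of_nonneg_right h1.le hap
      nlinarith
    · have : (1 - δ) ^ p * |a| ^ p ≤ |a - b| ^ p := by
        rw [← mul_rpow (by linarith) ha0]
        exact rpow_le_rpow (mul_nonneg (by linarith) ha0) (by linarith) hp0.le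
      have := mul_le_mul_of_nonneg_right h2.le hap
      nlinarith
  · have key : (2 * |a|) ^ p ≤ (2 / δ) ^ p * |b| ^ p := by
      rw [← mul_rpow (by positivity) hb0]
      refine rpow_le_rpow (by positivity) ?_ hp0.le
      rw [div_mul_eq_mul_div, le_div_iff₀ h4]
      nlinarith
    constructor
    · have : |a - b| ^ p ≤ (2 * |a|) ^ p :=
        rpow_le_rpow (abs_nonneg _) (by linarith) hp0.le
      nlinarith
    · have : |a| ^ p ≤ (2 * |a|) ^ p := rpow_le_rpow ha0 (by linarith) hp0.le
      nlinarith

lemma ms_ineq (p : ℝ) (hp : 1 ≤ p) (ε : ℝ) (hε : 0 < ε) :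
    ∃ C : ℝ, 0 ≤ C ∧ ∀ a b : ℝ,
      |a - b| ^ p ≤ (|a| ^ p + |b| ^ p) + ε * (|a| ^ p + |b| ^ p) + C * min (|a| ^ p) (|b| ^ p) ∧
      |a| ^ p + |b| ^ p ≤
        |a - b| ^ p + ε * (|a| ^ p + |b| ^ p) + C * min (|a| ^ p) (|b| ^ p) := by
  obtain ⟨C, hC, h⟩ := ms_aux_ineq p hp ε hε
  have hp0 : 0 ≤ p := by linarith
  refine ⟨C, hC, fun a b => ?_⟩
  have hap : 0 ≤ |a| ^ p := by positivity
  have hbp : 0 ≤ |b| ^ p := by positivity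
  rcases le_total |b| |a| with hab | hab
  · rw [min_eq_right (rpow_le_rpow (abs_nonneg _) hab hp0)]
    obtain ⟨h1, h2⟩ := h a b hab
    constructor <;> nlinarith
  · rw [min_eq_left (rpow_le_rpow (abs_nonneg _) hab hp0), abs_sub_comm a b]
    obtain ⟨h1, h2⟩ := h b a hab
    constructor <;> nlinarith

lemma ms_ineq_enn (p : ℝ) (hp : 1 ≤ p) (ε : ℝ) (hε : 0 < ε) :
    ∃ C : ℝ≥0∞, C ≠ ⊤ ∧ ∀ a b : ℝ,
      ENNReal.ofReal (|a - b| ^ p) ≤ (ENNReal.ofReal (|a| ^ p) + ENNReal.ofReal (|b| ^ p)) +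
        ENNReal.ofReal ε * (ENNReal.ofReal (|a| ^ p) + ENNReal.ofReal (|b| ^ p)) +
        C * min (ENNReal.ofReal (|a| ^ p)) (ENNReal.ofReal (|b| ^ p)) ∧
      ENNReal.ofReal (|a| ^ p) + ENNReal.ofReal (|b| ^ p) ≤ ENNReal.ofReal (|a - b| ^ p) +
        ENNReal.ofReal ε * (ENNReal.ofReal (|a| ^ p) + ENNReal.ofReal (|b| ^ p)) +
        C * min (ENNReal.ofReal (|a| ^ p)) (ENNReal.ofReal (|b| ^ p)) := by
  obtain ⟨C, hC, h⟩ := ms_ineq p hp ε hε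
  refine ⟨ENNReal.ofReal C, ENNReal.ofReal_ne_top, fun a b => ?_⟩
  have hap : 0 ≤ |a| ^ p := by positivity
  have hbp : 0 ≤ |b| ^ p := by positivity
  have habp : 0 ≤ |a - b| ^ p := by positivity
  have hm : 0 ≤ min (|a| ^ p) (|b| ^ p) := le_min hap hbp
  rw [← ENNReal.ofReal_min, ← ENNReal.ofReal_add hap hbp, ← ENNReal.ofReal_mul hε.le,
    ← ENNReal.ofReal_mul hC, ← ENNReal.ofReal_add (by positivity) (by positivity),
    ← ENNReal.ofReal_add (by positivity) (by positivity),
    ← ENNReal.ofReal_add (by positivity) (by positivity),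
    ← ENNReal.ofReal_add (by positivity) (by positivity)]
  exact ⟨ENNReal.ofReal_le_ofReal (h a b).1, ENNReal.ofReal_le_ofReal (h a b).2⟩

/-- The Gauss-Weierstrass kernel. -/
noncomputable def msK (n : ℕ) (t : ℝ) (x y : EuclideanSpace ℝ (Fin n)) : ℝ≥0∞ :=
  ENNReal.ofReal ((4 * π * t) ^ (-(n : ℝ) / 2) * Real.exp (-‖x - y‖ ^ 2 / (4 * t)))

lemma msK_meas (n : ℕ) (t : ℝ) :
    Measurable (fun z : EuclideanSpace ℝ (Fin n) × EuclideanSpace ℝ (Fin n) =>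
      msK n t z.1 z.2) := by
  unfold msK
  fun_prop

lemma msK_meas_right (n : ℕ) (t : ℝ) (x : EuclideanSpace ℝ (Fin n)) :
    Measurable (fun y => msK n t x y) := by
  unfold msK
  fun_prop

lemma msK_symm (n : ℕ) (t : ℝ) (x y : EuclideanSpace ℝ (Fin n)) : msK n t x y = msK n t y x := by
  unfold msK
  rw [norm_sub_rev]

lemma msK_int (n : ℕ) (t : ℝ) (ht : 0 < t) (x : EuclideanSpace ℝ (Fin n)) :
    ∫⁻ y, msK n t x y = 1 := by
  unfold msK
  rw [lintegral_sub_left_eq_self (fun z : EuclideanSpace ℝ (Fin n) =>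
    ENNReal.ofReal ((4 * π * t) ^ (-(n : ℝ) / 2) * Real.exp (-‖z‖ ^ 2 / (4 * t)))) x]
  have hb : 0 < 1 / (4 * t) := by positivity
  have hI : ∫ v : EuclideanSpace ℝ (Fin n), Real.exp (-‖v‖ ^ 2 / (4 * t)) =
      (4 * π * t) ^ ((n : ℝ) / 2) := by
    have := GaussianFourier.integral_rexp_neg_mul_sq_norm (V := EuclideanSpace ℝ (Fin n)) hb
    rw [finrank_euclideanSpace_fin] at this
    convert this using 2
    · ext v; congr 1; field_simp
    · field_simp
  have hpos : 0 < (4 * π * t) ^ ((n : ℝ) / 2) := by positivity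
  have hint : Integrable (fun v : EuclideanSpace ℝ (Fin n) => Real.exp (-‖v‖ ^ 2 / (4 * t))) := by
    by_contra h
    rw [integral_undef h] at hI
    linarith
  rw [← ofReal_integral_eq_lintegral_ofReal (hint.const_mul _)
    (Eventually.of_forall fun v => by positivity), integral_const_mul, hI, neg_div,
    ← rpow_add (by positivity)]
  simp

lemma msK_le (n : ℕ) (t : ℝ) (ht : 0 < t) (x y : EuclideanSpace ℝ (Fin n)) :
    msK n t x y ≤ ENNReal.ofReal ((4 * π * t) ^ (-(n : ℝ) / 2)) := by
  unfold msK
  apply ENNReal.ofReal_le_ofReal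
  apply mul_le_of_le_one_right (by positivity)
  rw [Real.exp_le_one_iff]
  apply div_nonpos_of_nonpos_of_nonneg
  · simp
  · positivity

lemma ms_D_tendsto (n : ℕ) (hn : 1 ≤ n) (u : EuclideanSpace ℝ (Fin n) → ℝ≥0∞) (hu : Measurable u)
    (hfin : ∫⁻ x, u x ≠ ⊤) :
    Tendsto (fun t : ℝ => ∫⁻ x, ∫⁻ y, msK n t x y * min (u x) (u y)) atTop (𝓝 0) := by
  have h0 : ∫⁻ x : EuclideanSpace ℝ (Fin n), (0 : ℝ≥0∞) = 0 := by simp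
  rw [← h0]
  refine tendsto_lintegral_filter_of_dominated_convergence u ?_ ?_ hfin ?_
  · refine Eventually.of_forall fun t => ?_
    apply Measurable.lintegral_prod_right'
      (f := fun z : EuclideanSpace ℝ (Fin n) × EuclideanSpace ℝ (Fin n) =>
        msK n t z.1 z.2 * min (u z.1) (u z.2))
    exact (msK_meas n t).mul ((hu.comp measurable_fst).min (hu.comp measurable_snd))
  · filter_upwards [eventually_gt_atTop 0] with t ht
    refine Eventually.of_forall fun x => ?_
    calc ∫⁻ y, msK n t x y * min (u x) (u y) ≤ ∫⁻ y, msK n t x y * u x := by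
          gcongr; exact min_le_left _ _
      _ = u x := by
          rw [lintegral_mul_const _ (msK_meas_right n t x),
            msK_int n t ht, one_mul]
  · refine Eventually.of_forall fun x => ?_
    have hlim : Tendsto (fun t : ℝ => ENNReal.ofReal ((4 * π * t) ^ (-(n : ℝ) / 2)) * ∫⁻ y, u y)
        atTop (𝓝 0) := by
      have h1 : Tendsto (fun t : ℝ => (4 * π * t) ^ (-(n : ℝ) / 2)) atTop (𝓝 0) := by
        have hn' : (0 : ℝ) < (n : ℝ) / 2 := by
          have : (1 : ℝ) ≤ n := by exact_mod_cast hn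
          linarith
        have := (tendsto_rpow_neg_atTop hn').comp
          (tendsto_id.const_mul_atTop (show 0 < 4 * π by positivity))
        simpa [Function.comp_def, neg_div] using this
      have h2 := ENNReal.tendsto_ofReal h1
      rw [ENNReal.ofReal_zero] at h2
      have h3 := ENNReal.Tendsto.mul_const h2 (Or.inr hfin) (b := ∫⁻ y, u y)
      simpa using h3
    refine tendsto_of_tendsto_of_tendsto_of_le_of_le' tendsto_const_nhds hlim
      (Eventually.of_forall fun t => zero_le) ?_
    filter_upwards [eventually_gt_atTop 0] with t ht
    rw [← lintegral_const_mul _ hu]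
    gcongr with y
    · exact msK_le n t ht x y
    · exact min_le_right _ _

lemma ms_sum_int (n : ℕ) (u : EuclideanSpace ℝ (Fin n) → ℝ≥0∞) (hu : Measurable u)
    (t : ℝ) (ht : 0 < t) :
    ∫⁻ x, ∫⁻ y, msK n t x y * (u x + u y) = 2 * ∫⁻ x, u x := by
  have hm (x) : Measurable (fun y => msK n t x y) := msK_meas_right n t x
  have h1 : ∀ x, ∫⁻ y, msK n t x y * (u x + u y) = u x + ∫⁻ y, msK n t x y * u y := by
    intro x
    simp_rw [mul_add]
    rw [lintegral_add_left ((hm x).mul_const _), lintegral_mul_const _ (hm x),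
      msK_int n t ht, one_mul]
  simp_rw [h1]
  rw [lintegral_add_left hu, two_mul]
  congr 1
  rw [lintegral_lintegral_swap]
  · congr 1
    ext y
    have : ∀ x, msK n t x y * u y = msK n t y x * u y := fun x => by rw [msK_symm]
    simp_rw [this]
    rw [lintegral_mul_const _ (hm y), msK_int n t ht, one_mul]
  · exact ((msK_meas n t).mul (hu.comp measurable_snd)).aemeasurable

lemma ms_A_tendsto (n : ℕ) (hn : 1 ≤ n) (p : ℝ) (hp : 1 ≤ p)
    (f : EuclideanSpace ℝ (Fin n) → ℝ) (hf : Measurable f)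
    (hfin : ∫⁻ x, ENNReal.ofReal (|f x| ^ p) ≠ ⊤) :
    Tendsto (fun t : ℝ => ∫⁻ x, ∫⁻ y, msK n t x y * ENNReal.ofReal (|f y - f x| ^ p)) atTop
      (𝓝 (2 * ∫⁻ x, ENNReal.ofReal (|f x| ^ p))) := by
  set u : EuclideanSpace ℝ (Fin n) → ℝ≥0∞ := fun x => ENNReal.ofReal (|f x| ^ p) with hudef
  have hu : Measurable u := by
    have : Measurable fun x => |f x| := hf.norm
    exact (this.pow_const p).ennreal_ofReal
  have hU : 2 * ∫⁻ x, u x ≠ ⊤ := ENNReal.mul_ne_top (by simp) hfin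
  have hD := ms_D_tendsto n hn u hu hfin
  have hv (t) : Measurable (fun z : EuclideanSpace ℝ (Fin n) × EuclideanSpace ℝ (Fin n) =>
      msK n t z.1 z.2 * ENNReal.ofReal (|f z.2 - f z.1| ^ p)) := by
    have : Measurable (fun z : EuclideanSpace ℝ (Fin n) × EuclideanSpace ℝ (Fin n) =>
      |f z.2 - f z.1|) := ((hf.comp measurable_snd).sub (hf.comp measurable_fst)).norm
    exact (msK_meas n t).mul (this.pow_const p).ennreal_ofReal
  have hs (t) : Measurable (fun z : EuclideanSpace ℝ (Fin n) × EuclideanSpace ℝ (Fin n) =>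
      msK n t z.1 z.2 * (u z.1 + u z.2)) :=
    (msK_meas n t).mul ((hu.comp measurable_fst).add (hu.comp measurable_snd))
  have hmin (t) : Measurable (fun z : EuclideanSpace ℝ (Fin n) × EuclideanSpace ℝ (Fin n) =>
      msK n t z.1 z.2 * min (u z.1) (u z.2)) :=
    (msK_meas n t).mul ((hu.comp measurable_fst).min (hu.comp measurable_snd))
  -- double integral as a product integral
  have hP (g : EuclideanSpace ℝ (Fin n) × EuclideanSpace ℝ (Fin n) → ℝ≥0∞) (hg : Measurable g) :
      ∫⁻ x, ∫⁻ y, g (x, y) = ∫⁻ z, g z ∂((volume : Measure (EuclideanSpace ℝ (Fin n))).prod volume) :=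
    (lintegral_prod g hg.aemeasurable).symm
  have key : ∀ ε : ℝ, 0 < ε → ∃ C : ℝ≥0∞, C ≠ ⊤ ∧ ∀ t : ℝ, 0 < t →
      (∫⁻ x, ∫⁻ y, msK n t x y * ENNReal.ofReal (|f y - f x| ^ p)) ≤
        2 * (∫⁻ x, u x) + (ENNReal.ofReal ε * (2 * ∫⁻ x, u x) +
          C * ∫⁻ x, ∫⁻ y, msK n t x y * min (u x) (u y)) ∧
      2 * (∫⁻ x, u x) ≤ (∫⁻ x, ∫⁻ y, msK n t x y * ENNReal.ofReal (|f y - f x| ^ p)) +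
         (ENNReal.ofReal ε * (2 * ∫⁻ x, u x) +
          C * ∫⁻ x, ∫⁻ y, msK n t x y * min (u x) (u y)) := by
    intro ε hε
    obtain ⟨C, hC, h⟩ := ms_ineq_enn p hp ε hε
    refine ⟨C, hC, fun t ht => ?_⟩
    have hP1 := hP _ (hv t)
    have hP2 := hP _ (hs t)
    have hP3 := hP _ (hmin t)
    simp only at hP1 hP2 hP3
    rw [← ms_sum_int n u hu t ht, hP1, hP2, hP3,
      ← lintegral_const_mul _ (hs t), ← lintegral_const_mul _ (hmin t),
      ← lintegral_add_left ((hs t).const_mul _), ← lintegral_add_left (hs t),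
      ← lintegral_add_left (hv t)]
    constructor
    · refine lintegral_mono fun z => ?_
      have := mul_le_mul_right (h (f z.1) (f z.2)).1 (msK n t z.1 z.2)
      rw [abs_sub_comm] at this
      refine this.trans (le_of_eq ?_)
      simp only [hudef]
      ring
    · refine lintegral_mono fun z => ?_
      have := mul_le_mul_right (h (f z.1) (f z.2)).2 (msK n t z.1 z.2)
      rw [abs_sub_comm] at this
      refine this.trans (le_of_eq ?_)
      simp only [hudef]
      ring
  rw [ENNReal.tendsto_nhds hU]
  intro ε hε
  obtain ⟨η, hη, hηε⟩ := ENNReal.exists_nnreal_pos_mul_lt hU hε.ne'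
  obtain ⟨C, hC, h⟩ := key η (by exact_mod_cast hη)
  rw [ENNReal.ofReal_coe_nnreal] at h
  have hlim : Tendsto (fun t : ℝ => (η : ℝ≥0∞) * (2 * ∫⁻ x, u x) +
          C * ∫⁻ x, ∫⁻ y, msK n t x y * min (u x) (u y)) atTop
          (𝓝 ((η : ℝ≥0∞) * (2 * ∫⁻ x, u x))) := by
    have := (ENNReal.Tendsto.const_mul hD (Or.inr hC)).const_add ((η : ℝ≥0∞) * (2 * ∫⁻ x, u x))
    simpa using this
  filter_upwards [eventually_gt_atTop 0, hlim.eventually_lt_const hηε] with t ht hlt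
  obtain ⟨h1, h2⟩ := h t ht
  exact ⟨tsub_le_iff_right.2 (h2.trans (by gcongr)), h1.trans (by gcongr)⟩

lemma ms_tail (p : ℝ) (hp : 1 ≤ p) (s T : ℝ) (hs : 0 < s) (hT : 0 < T) :
    ENNReal.ofReal s * ∫⁻ t in Set.Ioi T, ENNReal.ofReal (t ^ (-(s * p / 2 + 1))) =
      ENNReal.ofReal (2 / p * T ^ (-(s * p / 2))) := by
  have hsp : 0 < s * p / 2 := by positivity
  have hlt : -(s * p / 2 + 1) < -1 := by linarith
  rw [← ofReal_integral_eq_lintegral_ofReal (integrableOn_Ioi_rpow_of_lt hlt hT),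
    integral_Ioi_rpow_of_lt hlt hT, ← ENNReal.ofReal_mul hs.le]
  · congr 1
    have : -(s * p / 2 + 1) + 1 = -(s * p / 2) := by ring
    rw [this]
    field_simp
  · filter_upwards [ae_restrict_mem measurableSet_Ioi] with t ht
    have : 0 < t := hT.trans ht
    simp only [Pi.zero_apply]
    positivity

lemma ms_tail_tendsto (p : ℝ) (T : ℝ) (hT : 0 < T) :
    Tendsto (fun s : ℝ => ENNReal.ofReal (2 / p * T ^ (-(s * p / 2)))) (𝓝[>] 0)
      (𝓝 (ENNReal.ofReal (2 / p))) := by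
  have : ContinuousAt (fun s : ℝ => 2 / p * T ^ (-(s * p / 2))) 0 :=
    continuousAt_const.mul (ContinuousAt.rpow continuousAt_const (by fun_prop) (Or.inl hT.ne'))
  have h := this.tendsto
  simp only [zero_mul, zero_div, neg_zero, rpow_zero, mul_one] at h
  exact ENNReal.tendsto_ofReal (h.mono_left nhdsWithin_le_nhds)

lemma ms_abel (p : ℝ) (hp : 1 ≤ p) (A : ℝ → ℝ≥0∞) (B : ℝ≥0∞) (hB : B ≠ ⊤)
    (hA : Tendsto A atTop (𝓝 B)) (s₀ : ℝ) (hs₀ : 0 < s₀)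
    (hfin : ∫⁻ t in Set.Ioi (0 : ℝ), ENNReal.ofReal (t ^ (-(s₀ * p / 2 + 1))) * A t < ⊤) :
    Tendsto (fun s : ℝ => ENNReal.ofReal s *
      ∫⁻ t in Set.Ioi (0 : ℝ), ENNReal.ofReal (t ^ (-(s * p / 2 + 1))) * A t) (𝓝[>] 0)
      (𝓝 (ENNReal.ofReal (2 / p) * B)) := by
  have hp0 : 0 < p := by linarith
  have hq0 : ENNReal.ofReal (2 / p) ≠ 0 := by
    rw [Ne, ENNReal.ofReal_eq_zero, not_le]; positivity
  have hqt : ENNReal.ofReal (2 / p) ≠ ⊤ := ENNReal.ofReal_ne_top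
  have hmeas (s : ℝ) : Measurable fun t : ℝ => ENNReal.ofReal (t ^ (-(s * p / 2 + 1))) := by
    fun_prop
  set N := ∫⁻ t in Set.Ioi (0 : ℝ), ENNReal.ofReal (t ^ (-(s₀ * p / 2 + 1))) * A t with hN
  rw [tendsto_order]
  constructor
  · intro a ha
    obtain ⟨c, hc1, hc2⟩ : ∃ c, a / ENNReal.ofReal (2 / p) < c ∧ c < B :=
      exists_between (ENNReal.div_lt_of_lt_mul' ha)
    have hac : a < ENNReal.ofReal (2 / p) * c := by
      rwa [ENNReal.div_lt_iff (Or.inl hq0) (Or.inl hqt), mul_comm] at hc1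
    obtain ⟨T, hT⟩ := eventually_atTop.1 ((hA.eventually_const_lt hc2).and (eventually_ge_atTop 1))
    have hT0 : 0 < T := by linarith [(hT T le_rfl).2]
    have hlim : Tendsto (fun s : ℝ => ENNReal.ofReal (2 / p * T ^ (-(s * p / 2))) * c) (𝓝[>] 0)
        (𝓝 (ENNReal.ofReal (2 / p) * c)) :=
      ENNReal.Tendsto.mul_const (ms_tail_tendsto p T hT0) (Or.inr hc2.ne_top)
    filter_upwards [hlim.eventually_const_lt hac, eventually_mem_nhdsWithin] with s h1 hs
    refine h1.trans_le ?_
    rw [← ms_tail p hp s T hs hT0, mul_assoc, ← lintegral_mul_const _ (hmeas s)]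
    gcongr ENNReal.ofReal s * ?_
    refine (setLIntegral_mono' measurableSet_Ioi fun t ht => ?_).trans
      (lintegral_mono_set (Set.Ioi_subset_Ioi hT0.le))
    gcongr
    exact (hT t (le_of_lt ht)).1.le
  · intro b hb
    obtain ⟨c, hc1, hc2⟩ : ∃ c, B < c ∧ c < b / ENNReal.ofReal (2 / p) := by
      apply exists_between
      rw [ENNReal.lt_div_iff_mul_lt (Or.inl hq0) (Or.inl hqt), mul_comm]
      exact hb
    have hcb : ENNReal.ofReal (2 / p) * c < b := by
      rwa [ENNReal.lt_div_iff_mul_lt (Or.inl hq0) (Or.inl hqt), mul_comm] at hc2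
    obtain ⟨T, hT⟩ := eventually_atTop.1 ((hA.eventually_lt_const hc1).and (eventually_ge_atTop 1))
    have hT1 : 1 ≤ T := (hT T le_rfl).2
    have hT0 : 0 < T := by linarith
    have hlim1 : Tendsto (fun s : ℝ => ENNReal.ofReal (2 / p * T ^ (-(s * p / 2))) * c) (𝓝[>] 0)
        (𝓝 (ENNReal.ofReal (2 / p) * c)) :=
      ENNReal.Tendsto.mul_const (ms_tail_tendsto p T hT0) (Or.inr hc2.ne_top)
    have hlim2 : Tendsto (fun s : ℝ => ENNReal.ofReal s * (ENNReal.ofReal (T ^ (s₀ * p / 2)) * N))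
        (𝓝[>] 0) (𝓝 0) := by
      have h1 : Tendsto (fun s : ℝ => ENNReal.ofReal s) (𝓝[>] 0) (𝓝 0) := by
        have := ENNReal.tendsto_ofReal (tendsto_id.mono_left
          (nhdsWithin_le_nhds (a := (0 : ℝ)) (s := Set.Ioi 0)))
        simpa using this
      have := ENNReal.Tendsto.mul_const h1 (b := ENNReal.ofReal (T ^ (s₀ * p / 2)) * N)
        (Or.inr (ENNReal.mul_ne_top ENNReal.ofReal_ne_top hfin.ne))
      simpa using this
    have hlim := hlim2.add hlim1
    rw [zero_add] at hlim
    have hs1 : ∀ᶠ s : ℝ in 𝓝[>] 0, s < s₀ := (eventually_lt_nhds hs₀).filter_mono nhdsWithin_le_nhds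
    filter_upwards [hlim.eventually_lt_const hcb, eventually_mem_nhdsWithin, hs1] with s h1 hs hss
    refine lt_of_le_of_lt ?_ h1
    have hs' : 0 < s := hs
    rw [← ms_tail p hp s T hs hT0, mul_assoc, ← lintegral_mul_const _ (hmeas s), ← mul_add]
    gcongr
    rw [← Set.Ioc_union_Ioi_eq_Ioi hT0.le]
    refine (lintegral_union_le _ _ _).trans ?_
    gcongr ?_ + ?_
    · rw [hN, ← lintegral_const_mul' _ _ ENNReal.ofReal_ne_top]
      refine (setLIntegral_mono' measurableSet_Ioc fun t ht => ?_).trans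
        (lintegral_mono_set Set.Ioc_subset_Ioi_self)
      rw [← mul_assoc]
      gcongr
      rw [← ENNReal.ofReal_mul (by positivity)]
      apply ENNReal.ofReal_le_ofReal
      have ht0 : 0 < t := ht.1
      have e : t ^ (-(s * p / 2 + 1)) = t ^ ((s₀ - s) * p / 2) * t ^ (-(s₀ * p / 2 + 1)) := by
        rw [← rpow_add ht0]; congr 1; ring
      rw [e]
      gcongr
      have hd : 0 ≤ (s₀ - s) * p / 2 := by
        have : 0 < s₀ - s := by linarith
        positivity
      calc t ^ ((s₀ - s) * p / 2) ≤ T ^ ((s₀ - s) * p / 2) := rpow_le_rpow ht0.le ht.2 hd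
        _ ≤ T ^ (s₀ * p / 2) := by
          apply rpow_le_rpow_of_exponent_le hT1
          nlinarith
    · refine setLIntegral_mono' measurableSet_Ioi fun t ht => ?_
      gcongr
      exact (hT t (le_of_lt ht)).1.le

theorem mazya_shaposhnikova_limit (n : ℕ) (hn : 1 ≤ n) (p : ℝ) (hp : 1 ≤ p)
    (f : EuclideanSpace ℝ (Fin n) → ℝ) (hf : MemLp f (ENNReal.ofReal p) volume)
    (s₀ : ℝ) (hs₀0 : 0 < s₀) (hs₀1 : s₀ < 1)
    (hfin : (∫⁻ t in Set.Ioi (0 : ℝ),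
        ENNReal.ofReal (t ^ (-(s₀ * p / 2 + 1))) *
          ∫⁻ x, ∫⁻ y, ENNReal.ofReal
            ((4 * π * t) ^ (-(n : ℝ) / 2) * Real.exp (-‖x - y‖ ^ 2 / (4 * t)) *
              |f y - f x| ^ p)) < ⊤) :
    Tendsto (fun s : ℝ => ENNReal.ofReal s *
        ∫⁻ t in Set.Ioi (0 : ℝ),
          ENNReal.ofReal (t ^ (-(s * p / 2 + 1))) *
            ∫⁻ x, ∫⁻ y, ENNReal.ofReal
              ((4 * π * t) ^ (-(n : ℝ) / 2) * Real.exp (-‖x - y‖ ^ 2 / (4 * t)) *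
                |f y - f x| ^ p))
      (𝓝[>] (0 : ℝ))
      (𝓝 (ENNReal.ofReal ((4 / p) * ∫ x, |f x| ^ p))) := by
  have hp0 : 0 < p := by linarith
  set g := hf.1.mk f with hg
  have hgm : Measurable g := hf.1.stronglyMeasurable_mk.measurable
  have hfg : f =ᵐ[volume] g := hf.1.ae_eq_mk
  have hA : ∀ t : ℝ, 0 < t → (∫⁻ x, ∫⁻ y, ENNReal.ofReal
            ((4 * π * t) ^ (-(n : ℝ) / 2) * Real.exp (-‖x - y‖ ^ 2 / (4 * t)) *
              |f y - f x| ^ p)) =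
      ∫⁻ x, ∫⁻ y, msK n t x y * ENNReal.ofReal (|g y - g x| ^ p) := by
    intro t ht
    refine lintegral_congr_ae ?_
    filter_upwards [hfg] with x hx
    refine lintegral_congr_ae ?_
    filter_upwards [hfg] with y hy
    rw [hx, hy, msK, ENNReal.ofReal_mul (by positivity)]
  have hI : ∀ s : ℝ, (∫⁻ t in Set.Ioi (0 : ℝ),
        ENNReal.ofReal (t ^ (-(s * p / 2 + 1))) *
          ∫⁻ x, ∫⁻ y, ENNReal.ofReal
            ((4 * π * t) ^ (-(n : ℝ) / 2) * Real.exp (-‖x - y‖ ^ 2 / (4 * t)) *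
              |f y - f x| ^ p)) = ∫⁻ t in Set.Ioi (0 : ℝ),
        ENNReal.ofReal (t ^ (-(s * p / 2 + 1))) *
          ∫⁻ x, ∫⁻ y, msK n t x y * ENNReal.ofReal (|g y - g x| ^ p) := by
    intro s
    refine setLIntegral_congr_fun measurableSet_Ioi fun t ht => ?_
    simp only [hA t ht]
  simp_rw [hI] at hfin ⊢
  have hint : Integrable (fun x => |g x| ^ p) := by
    have h1 : MemLp g (ENNReal.ofReal p) volume := (memLp_congr_ae hfg).1 hf
    have := h1.integrable_norm_rpow (by simpa using hp0) ENNReal.ofReal_ne_top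
    simpa [ENNReal.toReal_ofReal hp0.le] using this
  have hU : ENNReal.ofReal (∫ x, |f x| ^ p) = ∫⁻ x, ENNReal.ofReal (|g x| ^ p) := by
    rw [← ofReal_integral_eq_lintegral_ofReal hint (Eventually.of_forall fun x => by positivity)]
    congr 1
    refine integral_congr_ae ?_
    filter_upwards [hfg] with x hx
    rw [hx]
  have hUfin : ∫⁻ x, ENNReal.ofReal (|g x| ^ p) ≠ ⊤ := by
    rw [← hU]; exact ENNReal.ofReal_ne_top
  have := ms_abel p hp _ _ (ENNReal.mul_ne_top (by simp) hUfin)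
    (ms_A_tendsto n hn p hp g hgm hUfin) s₀ hs₀0 hfin
  convert this using 2
  rw [ENNReal.ofReal_mul (by positivity), hU, ← mul_assoc]
  congr 1
  rw [show (4 : ℝ) / p = 2 / p * 2 by ring, ENNReal.ofReal_mul (by positivity)]
  simp
end
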